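/- Let q be a power of 2 and let n be an odd prime. Let L(x) = a_1 x^q + a_2 x^{q^2} + ... + a_{n−1} x^{q^{n−1}} + x^{q^n} ∈ F_q[x] be a monic q-linearized polynomial of q-degree n, and suppose a_1 + a_2 + ... + a_{n−1} + 1 ≠ 0. Then the Galois group of L(x) + t·x over the rational function field F_q(t) is isomorphic to GL(n, q), unless L(x) = x^{q^n}, in which case it is isomorphic to ΓL(1, q^n). -/

import Mathlib

/-- The natural action of the relative automorphism group `Gal(E/F_q)` on the
unit group `Eˣ`, used to form the semidirect product `ΓL(1, qⁿ) = Eˣ ⋊ Gal(E/F_q)`. -/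
def galOnUnits (Fq E : Type*) [Field Fq] [Field E] [Algebra Fq E] :
    (E ≃ₐ[Fq] E) →* MulAut Eˣ where
  toFun σ := Units.mapEquiv σ.toRingEquiv.toMulEquiv
  map_one' := by ext u; rfl
  map_mul' σ τ := by ext u; rfl

/-!
Let `V` be the `F_q`-space of roots, on which the Galois group acts faithfully and linearly.

At `t = ∞`, put `s^(qⁿ - 1) = -t`. The roots are `s` times power series in `s⁻¹` whose constant
terms run through the field `E` with `qⁿ` elements, the solutions of the reduced equation
`z^(qⁿ) = z`. The automorphisms `s ↦ c s` with `c ∈ Eˣ` therefore embed a Singer cycle `Eˣ` in the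
Galois group.

At `t = 0`, let `d < n` be the least index with `a_d ≠ 0`. The roots which reduce to `0` form a
subspace `W` of dimension `d`. The inertia group acts trivially on `V / W` and transitively on the
nonzero vectors of `W`, while its elements fixing `W` move each vector outside `W` by every element
of `W`. In the dual space this makes the pointwise stabilizer of the annihilator of `W` transitive
on the complement. As `n` is prime, intersecting translates of that annihilator under the Singer
cycle passes this property down to lines, and the Galois group is transitive on `d`-dimensional
subspaces. Commutators of unipotent elements attached to two such subspaces that meet in a common
hyperplane yield a transvection, its conjugates are all transvections, and the norm of `E` supplies
all determinants.

If `L = X^(qⁿ)` there is no such `d`: the ratio of two roots is a constant in `E`, the splitting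
field is the Kummer extension `E(t)(y)` with `y^(qⁿ - 1) = -t`, and its group is `Eˣ ⋊ Gal(E/F_q)`.
-/

namespace GaloisLinearized

open Module Polynomial
open scoped PowerSeries

section Subspaces

variable {F X : Type*} [Field F] [AddCommGroup X] [Module F X]

lemma mem_sup_span_singleton {B : Submodule F X} {x y : X} :
    y ∈ B ⊔ F ∙ x ↔ ∃ b ∈ B, ∃ c : F, b + c • x = y := by
  simp [Submodule.mem_sup, Submodule.mem_span_singleton]

lemma exists_notMem_of_ne_top {B : Submodule F X} (hB : B ≠ ⊤) : ∃ x, x ∉ B := by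
  by_contra! h
  exact hB (eq_top_iff.2 fun x _ => h x)

lemma exists_notMem_notMem {B C : Submodule F X} (hB : B ≠ ⊤) (hC : C ≠ ⊤) :
    ∃ z, z ∉ B ∧ z ∉ C := by
  obtain ⟨b, hb⟩ := exists_notMem_of_ne_top hB
  obtain ⟨c, hc⟩ := exists_notMem_of_ne_top hC
  by_cases hbC : b ∈ C
  · by_cases hcB : c ∈ B
    · exact ⟨b + c, fun h => hb ((B.add_mem_iff_left hcB).1 h),
        fun h => hc ((C.add_mem_iff_right hbC).1 h)⟩
    · exact ⟨c, hcB, hc⟩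
  · exact ⟨b, hb, hbC⟩

lemma map_sup_span_singleton (U : Submodule F X) (g : X ≃ₗ[F] X) (v : X) :
    (U ⊔ F ∙ v).map (g : X →ₗ[F] X) = U.map (g : X →ₗ[F] X) ⊔ F ∙ g v := by
  simp [Submodule.map_span]

variable [FiniteDimensional F X]

lemma exists_finrank_eq_between {A C : Submodule F X} (hAC : A ≤ C) {j : ℕ}
    (hA : finrank F A ≤ j) (hC : j ≤ finrank F C) :
    ∃ U, A ≤ U ∧ U ≤ C ∧ finrank F U = j := by
  induction j with
  | zero => exact ⟨A, le_rfl, hAC, by omega⟩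
  | succ j ih =>
    by_cases h : finrank F A = j + 1
    · exact ⟨A, le_rfl, hAC, h⟩
    obtain ⟨U, hAU, hUC, hU⟩ := ih (by omega) (by omega)
    have hne : U ≠ C := fun h => by subst h; omega
    obtain ⟨v, hvC, hvU⟩ := SetLike.exists_of_lt (lt_of_le_of_ne hUC hne)
    refine ⟨U ⊔ F ∙ v, hAU.trans le_sup_left, sup_le hUC (by simpa using hvC), ?_⟩
    rw [Submodule.finrank_sup_span_singleton hvU, hU]

lemma exists_finrank_eq_between_notMem {A C : Submodule F X} (hAC : A ≤ C) {j : ℕ}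
    {v : X} (hv : v ∉ A) (hA : finrank F A ≤ j) (hC : j + 1 ≤ finrank F C) :
    ∃ U, A ≤ U ∧ U ≤ C ∧ v ∉ U ∧ finrank F U = j := by
  obtain ⟨f, hfv, hfA⟩ := Submodule.exists_le_ker_of_notMem hv
  have hker : finrank F X ≤ finrank F (LinearMap.ker f) + 1 := by
    have hrange : finrank F (LinearMap.range f) ≤ 1 := by
      simpa using Submodule.finrank_le (LinearMap.range f)
    have := LinearMap.finrank_range_add_finrank_ker f
    omega
  have hsup := Submodule.finrank_sup_add_finrank_inf_eq C (LinearMap.ker f)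
  have hle := Submodule.finrank_le (C ⊔ LinearMap.ker f)
  obtain ⟨U, hAU, hU, hd⟩ := exists_finrank_eq_between (le_inf hAC hfA) hA
    (C := C ⊓ LinearMap.ker f) (by omega)
  exact ⟨U, hAU, hU.trans inf_le_left, fun h => hfv (hU h).2, hd⟩

lemma exists_eq_sup_span_singleton {Y : Submodule F X} {d : ℕ} (hY : finrank F Y = d + 1) :
    ∃ (U : Submodule F X) (v : X), v ∉ U ∧ finrank F U = d ∧ Y = U ⊔ F ∙ v := by
  obtain ⟨U, -, hU, hUd⟩ := exists_finrank_eq_between (bot_le : ⊥ ≤ Y) (j := d) (by simp) (by omega)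
  have hne : U ≠ Y := fun h => by subst h; omega
  obtain ⟨v, hvY, hvU⟩ := SetLike.exists_of_lt (lt_of_le_of_ne hU hne)
  refine ⟨U, v, hvU, hUd, (Submodule.eq_of_le_of_finrank_eq ?_ ?_).symm⟩
  · exact sup_le hU (by simpa using hvY)
  · rw [Submodule.finrank_sup_span_singleton hvU, hUd, hY]

lemma map_eq_self_of_forall_apply_eq {U : Submodule F X} {g : X ≃ₗ[F] X}
    (hg : ∀ u ∈ U, g u = u) : U.map (g : X →ₗ[F] X) = U := by
  refine Submodule.eq_of_le_of_finrank_eq ?_ (LinearEquiv.finrank_map_eq g U)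
  rintro _ ⟨u, hu, rfl⟩
  rwa [LinearEquiv.coe_coe, hg u hu]

end Subspaces

/-! ### Jordan subspaces -/

section Jordan

variable {F X : Type*} [Field F] [AddCommGroup X] [Module F X]

/-- `B` is a Jordan subspace for `H ≤ GL(X)`: the pointwise stabilizer of `B` in `H` is transitive
on the complement of `B`. -/
def IsJordan (H : Subgroup (X ≃ₗ[F] X)) (B : Submodule F X) : Prop :=
  ∀ x y, x ∉ B → y ∉ B → ∃ h ∈ H, (∀ b ∈ B, h b = b) ∧ h x = y

variable {H : Subgroup (X ≃ₗ[F] X)} {B C Y Y' : Submodule F X}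

lemma isJordan_top : IsJordan H (⊤ : Submodule F X) := fun _ _ hx => (hx trivial).elim

lemma IsJordan.inf (hB : IsJordan H B) (hC : IsJordan H C) : IsJordan H (B ⊓ C) := by
  rcases eq_or_ne B ⊤ with rfl | hBtop
  · simpa using hC
  rcases eq_or_ne C ⊤ with rfl | hCtop
  · simpa using hB
  obtain ⟨z, hzB, hzC⟩ := exists_notMem_notMem hBtop hCtop
  have move_to_z : ∀ x, x ∉ B ⊓ C → ∃ h ∈ H, (∀ b ∈ B ⊓ C, h b = b) ∧ h x = z := by
    intro x hx
    by_cases hxB : x ∈ B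
    · obtain ⟨h, hH, hfix, hxz⟩ := hC x z (fun hxC => hx ⟨hxB, hxC⟩) hzC
      exact ⟨h, hH, fun b hb => hfix b hb.2, hxz⟩
    · obtain ⟨h, hH, hfix, hxz⟩ := hB x z hxB hzB
      exact ⟨h, hH, fun b hb => hfix b hb.1, hxz⟩
  intro x y hx hy
  obtain ⟨h, hH, hfix, hxz⟩ := move_to_z x hx
  obtain ⟨g, gH, gfix, hyz⟩ := move_to_z y hy
  refine ⟨g⁻¹ * h, H.mul_mem (H.inv_mem gH) hH, fun b hb => ?_, ?_⟩
  · exact g.symm_apply_eq.2 ((hfix b hb).trans (gfix b hb).symm)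
  · exact g.symm_apply_eq.2 (hxz.trans hyz.symm)

lemma isJordan_bot (hX : 1 < finrank F X) (hline : ∀ x : X, x ≠ 0 → IsJordan H (F ∙ x)) :
    IsJordan H (⊥ : Submodule F X) := by
  have : Nontrivial X := nontrivial_of_finrank_pos (R := F) (by omega)
  obtain ⟨x, hx⟩ := exists_ne (0 : X)
  obtain ⟨y, hy⟩ := exists_notMem_of_ne_top (B := F ∙ x) fun h => by
    have := finrank_span_singleton (K := F) hx
    rw [h, finrank_top] at this
    omega
  have hy0 : y ≠ 0 := by
    rintro rfl
    exact hy (Submodule.zero_mem _)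
  rw [← ((Submodule.disjoint_span_singleton' hy0).2 hy).eq_bot]
  exact (hline x hx).inf (hline y hy0)

lemma IsJordan.map (hB : IsJordan H B) {g : X ≃ₗ[F] X} (hg : g ∈ H) :
    IsJordan H (B.map (g : X →ₗ[F] X)) := by
  intro x y hx hy
  obtain ⟨h, hH, hfix, hxy⟩ := hB (g.symm x) (g.symm y)
    (fun h => hx ⟨_, h, g.apply_symm_apply x⟩) (fun h => hy ⟨_, h, g.apply_symm_apply y⟩)
  refine ⟨g * h * g⁻¹, H.mul_mem (H.mul_mem hg hH) (H.inv_mem hg), ?_, ?_⟩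
  · rintro _ ⟨b, hb, rfl⟩
    change g (h (g.symm (g b))) = g b
    rw [g.symm_apply_apply, hfix b hb]
  · change g (h (g.symm x)) = y
    rw [hxy, g.apply_symm_apply]

lemma isJordan_sInf [Finite X] {S : Set (Submodule F X)} (hS : ∀ B ∈ S, IsJordan H B) :
    IsJordan H (sInf S) := by
  refine Set.Finite.induction_on_subset (motive := fun T _ => IsJordan H (sInf T)) S
    (Set.toFinite S) ?_ fun {B T} hB _ _ hT => ?_
  · simpa using isJordan_top
  · rw [sInf_insert]
    exact (hS B hB).inf hT

lemma IsJordan.exists_map_eq [FiniteDimensional F X] {d : ℕ}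
    (hJ : ∀ B : Submodule F X, finrank F B < d → IsJordan H B)
    (hY : finrank F Y = d) (hY' : finrank F Y' = d) :
    ∃ h ∈ H, Y.map (h : X →ₗ[F] X) = Y' := by
  induction d generalizing Y Y' with
  | zero =>
    rw [Submodule.finrank_eq_zero] at hY hY'
    exact ⟨1, H.one_mem, by simp [hY, hY']⟩
  | succ d ih =>
    obtain ⟨U, v, hv, hU, rfl⟩ := exists_eq_sup_span_singleton hY
    obtain ⟨U', v', hv', hU', rfl⟩ := exists_eq_sup_span_singleton hY'
    obtain ⟨h, hh, rfl⟩ := ih (fun B hB => hJ B (by omega)) hU hU'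
    have hhv : h v ∉ U.map (h : X →ₗ[F] X) := by
      rintro ⟨u, hu, huv⟩
      exact hv (h.injective huv ▸ hu)
    obtain ⟨g, hg, gfix, hgv⟩ := hJ _ (by omega) _ _ hhv hv'
    refine ⟨g * h, H.mul_mem hg hh, ?_⟩
    have hcomp : ((g * h : X ≃ₗ[F] X) : X →ₗ[F] X) = (g : X →ₗ[F] X) ∘ₗ (h : X →ₗ[F] X) := rfl
    rw [hcomp, Submodule.map_comp, map_sup_span_singleton, map_sup_span_singleton,
      map_eq_self_of_forall_apply_eq gfix, hgv]

/-- The smallest Jordan subspace containing `Y`; it is itself Jordan when `X` is finite. -/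
def jordanClosure (H : Subgroup (X ≃ₗ[F] X)) (Y : Submodule F X) : Submodule F X :=
  sInf {B | IsJordan H B ∧ Y ≤ B}

lemma le_jordanClosure : Y ≤ jordanClosure H Y := le_sInf fun _ h => h.2

lemma jordanClosure_le (hB : IsJordan H B) (h : Y ≤ B) : jordanClosure H Y ≤ B := sInf_le ⟨hB, h⟩

variable [Finite X]

lemma isJordan_jordanClosure : IsJordan H (jordanClosure H Y) := isJordan_sInf fun _ h => h.1

lemma jordanClosure_map {g : X ≃ₗ[F] X} (hg : g ∈ H) :
    jordanClosure H (Y.map (g : X →ₗ[F] X)) = (jordanClosure H Y).map (g : X →ₗ[F] X) := by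
  refine le_antisymm
    (jordanClosure_le (isJordan_jordanClosure.map hg) (Submodule.map_mono le_jordanClosure)) ?_
  rw [Submodule.map_le_iff_le_comap]
  refine jordanClosure_le ?_ (Submodule.map_le_iff_le_comap.1 le_jordanClosure)
  rw [Submodule.comap_equiv_eq_map_symm]
  exact isJordan_jordanClosure.map (H.inv_mem hg)

end Jordan

section Semiregular

variable {F X : Type*} [Field F] [AddCommGroup X] [Module F X]
  {I : Type*} [Group I] {k : Type*} [Field k]

/-- `I` acts on `X`, trivially on `B₀` and transitively off `B₀`, and an element whose action on
`X ⧸ B₀` fixes some nonzero vector acts trivially there; this happens exactly on the kernel of the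
character `θ`. -/
structure IsSemiregularOff (B₀ : Submodule F X) (ι : I →* (X ≃ₗ[F] X)) (θ : I →* kˣ) : Prop where
  apply_eq_self (g : I) {b : X} (hb : b ∈ B₀) : ι g b = b
  apply_sub_mem {g : I} (hg : θ g = 1) (x : X) : ι g x - x ∈ B₀
  eq_one_of_sub_mem {g : I} {x : X} (hx : x ∉ B₀) (hgx : ι g x - x ∈ B₀) : θ g = 1
  exists_apply_eq {x y : X} (hx : x ∉ B₀) (hy : y ∉ B₀) : ∃ g, ι g x = y

lemma subgroup_units_eq_of_card_eq {S T : Subgroup kˣ} [Finite S] [Finite T]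
    (h : Nat.card S = Nat.card T) : S = T := by
  have eq_rootsOfUnity : ∀ (S : Subgroup kˣ) [Finite S], S = rootsOfUnity (Nat.card S) k := by
    intro S _
    refine Subgroup.eq_of_le_of_card_ge (fun x hx => ?_) (card_rootsOfUnity k (Nat.card S))
    rw [mem_rootsOfUnity]
    exact congrArg Subtype.val (pow_card_eq_one' (x := (⟨x, hx⟩ : S)))
  rw [eq_rootsOfUnity S, eq_rootsOfUnity T, h]

namespace IsSemiregularOff

variable {B₀ : Submodule F X} {ι : I →* (X ≃ₗ[F] X)} {θ : I →* kˣ}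
  (hI : IsSemiregularOff B₀ ι θ) {φ : X}

include hI

lemma isJordan {H : Subgroup (X ≃ₗ[F] X)} (hι : ∀ g, ι g ∈ H) : IsJordan H B₀ := by
  intro x y hx hy
  obtain ⟨g, hg⟩ := hI.exists_apply_eq hx hy
  exact ⟨ι g, hι g, fun b hb => hI.apply_eq_self g hb, hg⟩

lemma apply_notMem {x : X} (hx : x ∉ B₀) (g : I) : ι g x ∉ B₀ := fun h =>
  hx ((ι g).injective (hI.apply_eq_self g h) ▸ h)

lemma apply_sub_apply_mem {g g' : I} (h : θ g = θ g') (x : X) : ι g x - ι g' x ∈ B₀ := by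
  have := hI.apply_sub_mem (g := g * g'⁻¹) (by rw [map_mul, map_inv, h, mul_inv_cancel]) (ι g' x)
  rwa [← LinearEquiv.mul_apply, ← map_mul, inv_mul_cancel_right] at this

lemma eq_of_apply_sub_apply_mem {g g' : I} {x : X} (hx : x ∉ B₀)
    (h : ι g x - ι g' x ∈ B₀) : θ g = θ g' := by
  have hfix : ι (g * g'⁻¹) (ι g' x) - ι g' x ∈ B₀ := by
    rwa [← LinearEquiv.mul_apply, ← map_mul, inv_mul_cancel_right]
  simpa [mul_inv_eq_one] using hI.eq_one_of_sub_mem (hI.apply_notMem hx g') hfix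

section Block

variable {M M' : Submodule F X}

omit hI in
lemma exists_subgroup_mem_iff [Finite X] (hφM : φ ∈ M)
    (hM : ∀ g, ι g φ ∈ M → ∀ x ∈ M, ι g x ∈ M) :
    ∃ S : Subgroup I, ∀ g, g ∈ S ↔ ι g φ ∈ M := by
  have : Module.Finite F X := Module.Finite.of_finite
  have hmap {g : I} (hg : ι g φ ∈ M) : M.map (ι g : X →ₗ[F] X) = M := by
    refine Submodule.eq_of_le_of_finrank_eq ?_ (LinearEquiv.finrank_map_eq (ι g) M)
    rintro _ ⟨x, hx, rfl⟩
    exact hM g hg x hx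
  refine ⟨⟨⟨⟨{g | ι g φ ∈ M}, fun {g h} hg hh => ?_⟩, ?_⟩, fun {g} hg => ?_⟩, fun g => Iff.rfl⟩
  · simpa using hM g hg _ hh
  · simpa using hφM
  · obtain ⟨x, hx, hgx⟩ : φ ∈ M.map (ι g : X →ₗ[F] X) := by rwa [hmap hg]
    have : ι g⁻¹ φ = x := by rw [map_inv, ← hgx]; exact (ι g).symm_apply_apply x
    change ι g⁻¹ φ ∈ M
    rwa [this]

variable [Finite X]

lemma exists_subgroup_units_card (hφ : φ ∉ B₀) (hBM : B₀ ≤ M) (hφM : φ ∈ M)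
    (hM : ∀ g, ι g φ ∈ M → ∀ x ∈ M, ι g x ∈ M) :
    ∃ T : Subgroup kˣ, Finite T ∧ (∀ g, θ g ∈ T ↔ ι g φ ∈ M) ∧
      Nat.card T * Nat.card B₀ = Nat.card M - Nat.card B₀ := by
  obtain ⟨S, hS⟩ := exists_subgroup_mem_iff hφM hM
  have hmem : ∀ g, θ g ∈ S.map θ ↔ ι g φ ∈ M := by
    refine fun g => ⟨?_, fun h => ⟨g, (hS g).2 h, rfl⟩⟩
    rintro ⟨g', hg', hθ⟩
    exact (M.sub_mem_iff_left ((hS g').1 hg')).1 (hBM (hI.apply_sub_apply_mem hθ.symm φ))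
  have hsurj : ∀ t ∈ S.map θ, ∃ g, θ g = t := fun t ⟨g, _, hg⟩ => ⟨g, hg⟩
  choose! γ hγ using hsurj
  have hγM (t : S.map θ) : ι (γ t) φ ∈ M := (hmem _).1 (by rw [hγ t t.2]; exact t.2)
  let Φ (p : S.map θ × B₀) : ((M : Set X) \ B₀ : Set X) := ⟨ι (γ p.1) φ + p.2,
    M.add_mem (hγM p.1) (hBM p.2.2),
    fun h => hI.apply_notMem hφ _ ((B₀.add_mem_iff_left p.2.2).1 h)⟩
  have hΦ : Function.Bijective Φ := by
    constructor
    · rintro ⟨⟨t, ht⟩, c⟩ ⟨⟨t', ht'⟩, c'⟩ h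
      have h : ι (γ t) φ + c = ι (γ t') φ + c' := congrArg Subtype.val h
      have hsub : ι (γ t) φ - ι (γ t') φ ∈ B₀ := by
        rw [show ι (γ t) φ - ι (γ t') φ = (c' - c : B₀) by
          rw [B₀.coe_sub, sub_eq_sub_iff_add_eq_add, h, add_comm]]
        exact (c' - c).2
      obtain rfl : t = t' := by
        rw [← hγ t ht, ← hγ t' ht', hI.eq_of_apply_sub_apply_mem hφ hsub]
      simpa using h
    · rintro ⟨x, hxM, hxB⟩
      obtain ⟨g, rfl⟩ := hI.exists_apply_eq hφ hxB
      have ht : θ g ∈ S.map θ := (hmem g).2 hxM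
      exact ⟨(⟨θ g, ht⟩, ⟨ι g φ - ι (γ (θ g)) φ, hI.apply_sub_apply_mem (hγ _ ht).symm φ⟩),
        Subtype.ext (add_sub_cancel _ _)⟩
  have := Finite.of_injective Φ hΦ.1
  refine ⟨S.map θ, .of_surjective (Prod.fst : S.map θ × B₀ → _) Prod.fst_surjective, hmem, ?_⟩
  have hcard := Nat.card_congr (Equiv.ofBijective Φ hΦ)
  rwa [Nat.card_prod, Nat.card_coe_set_eq, Set.ncard_sdiff hBM] at hcard

lemma le_of_card_eq (hφ : φ ∉ B₀)
    (hBM : B₀ ≤ M) (hφM : φ ∈ M) (hM : ∀ g, ι g φ ∈ M → ∀ x ∈ M, ι g x ∈ M)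
    (hBM' : B₀ ≤ M') (hφM' : φ ∈ M') (hM' : ∀ g, ι g φ ∈ M' → ∀ x ∈ M', ι g x ∈ M')
    (hcard : Nat.card M = Nat.card M') : M ≤ M' := by
  obtain ⟨T, _, hT, hTcard⟩ := hI.exists_subgroup_units_card hφ hBM hφM hM
  obtain ⟨T', _, hT', hTcard'⟩ := hI.exists_subgroup_units_card hφ hBM' hφM' hM'
  obtain rfl : T = T' := subgroup_units_eq_of_card_eq <| Nat.eq_of_mul_eq_mul_right
    (Nat.card_pos (α := B₀)) (by rw [hTcard, hTcard', hcard])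
  intro x hx
  by_cases hxB : x ∈ B₀
  · exact hBM' hxB
  obtain ⟨g, rfl⟩ := hI.exists_apply_eq hφ hxB
  exact (hT' g).1 ((hT g).2 hx)

end Block

section Closure

variable {H : Subgroup (X ≃ₗ[F] X)} (hι : ∀ g, ι g ∈ H) {j b : ℕ}
  (hb : ∀ Y : Submodule F X, finrank F Y = j + 1 → finrank F (jordanClosure H Y) = b)
  {U : Submodule F X} (hU : U ≤ B₀) (hUj : finrank F U = j)

section

omit hI

lemma mem_jordanClosure_sup_span : φ ∈ jordanClosure H (U ⊔ F ∙ φ) :=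
  le_jordanClosure (Submodule.mem_sup_right (Submodule.mem_span_singleton_self φ))

lemma le_jordanClosure_sup : U ≤ jordanClosure H (U ⊔ F ∙ φ) := le_sup_left.trans le_jordanClosure

variable [Finite X]

include hb in
lemma jordanClosure_eq_of_le {Y Y' : Submodule F X} (hY : finrank F Y = j + 1)
    (hY' : finrank F Y' = j + 1) (hle : Y' ≤ jordanClosure H Y) :
    jordanClosure H Y' = jordanClosure H Y :=
  have : Module.Finite F X := .of_finite
  Submodule.eq_of_le_of_finrank_eq (jordanClosure_le isJordan_jordanClosure hle)
    (by rw [hb Y hY, hb Y' hY'])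

include hU hUj in
lemma finrank_sup_span_of_notMem (hφ : φ ∉ B₀) : finrank F ↥(U ⊔ F ∙ φ) = j + 1 := by
  have : Module.Finite F X := .of_finite
  rw [Submodule.finrank_sup_span_singleton fun h => hφ (hU h), hUj]

end

variable [Finite X]

include hι hb hU hUj

lemma jordanClosure_inf (hφ : φ ∉ B₀) : jordanClosure H (U ⊔ F ∙ φ) ⊓ B₀ = U := by
  have : Module.Finite F X := .of_finite
  by_contra hne
  have hlt : U < jordanClosure H (U ⊔ F ∙ φ) ⊓ B₀ :=
    lt_of_le_of_ne (le_inf le_jordanClosure_sup hU) (Ne.symm hne)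
  obtain ⟨Y, -, hY, hYj⟩ := exists_finrank_eq_between (bot_le (a := _ ⊓ B₀)) (j := j + 1)
    (by simp) (hUj ▸ Submodule.finrank_lt_finrank_of_lt hlt)
  have hle : jordanClosure H Y ≤ B₀ :=
    jordanClosure_le (hI.isJordan hι) (hY.trans inf_le_right)
  rw [jordanClosure_eq_of_le hb (finrank_sup_span_of_notMem hU hUj hφ) hYj
    (hY.trans inf_le_left)] at hle
  exact hφ (hle mem_jordanClosure_sup_span)

lemma apply_mem_jordanClosure (hφ : φ ∉ B₀) {g : I} {y : X}
    (hy : y ∈ jordanClosure H (U ⊔ F ∙ φ)) (hyB : y ∉ B₀)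
    (hgy : ι g y ∈ jordanClosure H (U ⊔ F ∙ φ)) {x : X}
    (hx : x ∈ jordanClosure H (U ⊔ F ∙ φ)) : ι g x ∈ jordanClosure H (U ⊔ F ∙ φ) := by
  have : Module.Finite F X := .of_finite
  have closure_eq {z : X} (hz : z ∈ jordanClosure H (U ⊔ F ∙ φ)) (hzB : z ∉ B₀) :
      jordanClosure H (U ⊔ F ∙ z) = jordanClosure H (U ⊔ F ∙ φ) :=
    jordanClosure_eq_of_le hb (finrank_sup_span_of_notMem hU hUj hφ)
      (finrank_sup_span_of_notMem hU hUj hzB) (sup_le le_jordanClosure_sup (by simpa using hz))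
  have hmap := jordanClosure_map (Y := U ⊔ F ∙ y) (hι g)
  rw [map_sup_span_singleton, map_eq_self_of_forall_apply_eq
    (fun u hu => hI.apply_eq_self g (hU hu)), closure_eq hgy (hI.apply_notMem hyB g),
    closure_eq hy hyB] at hmap
  rw [hmap]
  exact ⟨x, hx, rfl⟩

lemma apply_mem_jordanClosure_sup (hφ : φ ∉ B₀) {g : I}
    (hg : ι g φ ∈ jordanClosure H (U ⊔ F ∙ φ) ⊔ B₀) {x : X}
    (hx : x ∈ jordanClosure H (U ⊔ F ∙ φ) ⊔ B₀) :
    ι g x ∈ jordanClosure H (U ⊔ F ∙ φ) ⊔ B₀ := by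
  obtain ⟨y, hy, c, hc, hyc⟩ := Submodule.mem_sup.1 hg
  have hyB : y ∉ B₀ := fun h => hI.apply_notMem hφ g (hyc ▸ B₀.add_mem h hc)
  obtain ⟨p, hp⟩ := hI.exists_apply_eq (hI.apply_notMem hφ g) hyB
  have hθp : θ p = 1 := hI.eq_one_of_sub_mem (hI.apply_notMem hφ g) (by
    rw [hp, ← hyc, sub_add_cancel_left]; exact B₀.neg_mem hc)
  have hpg : ι (p * g) x ∈ jordanClosure H (U ⊔ F ∙ φ) ⊔ B₀ := by
    obtain ⟨z, hz, e, he, rfl⟩ := Submodule.mem_sup.1 hx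
    rw [map_add, hI.apply_eq_self _ he]
    refine Submodule.add_mem_sup (hI.apply_mem_jordanClosure hι hb hU hUj hφ
      mem_jordanClosure_sup_span hφ ?_ hz) he
    rwa [map_mul, LinearEquiv.mul_apply, hp]
  rw [map_mul, LinearEquiv.mul_apply] at hpg
  exact (Submodule.sub_mem_iff_right _ hpg).1
    (Submodule.mem_sup_right (hI.apply_sub_mem hθp (ι g x)))

lemma finrank_jordanClosure_sup (hφ : φ ∉ B₀) :
    finrank F ↥(jordanClosure H (U ⊔ F ∙ φ) ⊔ B₀) + j = b + finrank F B₀ := by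
  have : Module.Finite F X := .of_finite
  have := Submodule.finrank_sup_add_finrank_inf_eq (jordanClosure H (U ⊔ F ∙ φ)) B₀
  rwa [hI.jordanClosure_inf hι hb hU hUj hφ, hUj,
    hb _ (finrank_sup_span_of_notMem hU hUj hφ)] at this

lemma jordanClosure_sup_le [Finite F] (hφ : φ ∉ B₀) {U' : Submodule F X} (hU' : U' ≤ B₀)
    (hUj' : finrank F U' = j) :
    jordanClosure H (U ⊔ F ∙ φ) ⊔ B₀ ≤ jordanClosure H (U' ⊔ F ∙ φ) ⊔ B₀ := by
  have : Module.Finite F X := .of_finite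
  refine hI.le_of_card_eq hφ
    le_sup_right (Submodule.mem_sup_left mem_jordanClosure_sup_span)
    (fun g hg x hx => hI.apply_mem_jordanClosure_sup hι hb hU hUj hφ hg hx)
    le_sup_right (Submodule.mem_sup_left mem_jordanClosure_sup_span)
    (fun g hg x hx => hI.apply_mem_jordanClosure_sup hι hb hU' hUj' hφ hg hx) ?_
  rw [Module.natCard_eq_pow_finrank (K := F) (V := ↥(jordanClosure H (U ⊔ F ∙ φ) ⊔ B₀)),
    Module.natCard_eq_pow_finrank (K := F) (V := ↥(jordanClosure H (U' ⊔ F ∙ φ) ⊔ B₀))]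
  have := hI.finrank_jordanClosure_sup hι hb hU hUj hφ
  have := hI.finrank_jordanClosure_sup hι hb hU' hUj' hφ
  congr 1
  omega

/- `ι π x - x` lies in every `j`-dimensional `U'` with `u ∈ U' ≤ B₀`, as
`jordanClosure H (U' ⊔ F ∙ φ)` is stable under `ι π`; these `U'` intersect in the line of `u`. -/
lemma apply_sub_mem_span_singleton [Finite F] (hφ : φ ∉ B₀) (hj : 1 ≤ j)
    (hjB : j + 2 ≤ finrank F B₀) {u : X} (huB : u ∈ B₀) {π : I} (hπ : ι π φ = φ + u) {x : X}
    (hx : x ∈ jordanClosure H (U ⊔ F ∙ φ) ⊔ B₀) : ι π x - x ∈ F ∙ u := by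
  have : Module.Finite F X := .of_finite
  have hθπ : θ π = 1 := hI.eq_one_of_sub_mem hφ (by rwa [hπ, add_sub_cancel_left])
  by_contra hv
  obtain ⟨U', huU', hU', hvU', hUj'⟩ := exists_finrank_eq_between_notMem
    (A := F ∙ u) (C := B₀) (by simpa using huB) hv (j := j)
    ((finrank_span_le_card {u}).trans (by simpa using hj))
    (by omega)
  have hφ' : φ ∈ jordanClosure H (U' ⊔ F ∙ φ) := mem_jordanClosure_sup_span
  obtain ⟨y, hy, c, hc, rfl⟩ :=
    Submodule.mem_sup.1 (hI.jordanClosure_sup_le hι hb hU hUj hφ hU' hUj' hx)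
  have hπy := hI.apply_mem_jordanClosure hι hb hU' hUj' hφ (g := π) hφ' hφ
    (by rw [hπ]; exact Submodule.add_mem _ hφ' (le_jordanClosure_sup (by simpa using huU'))) hy
  rw [map_add, hI.apply_eq_self π hc, add_sub_add_right_eq_sub,
    ← hI.jordanClosure_inf hι hb hU' hUj' hφ] at hvU'
  exact hvU' ⟨Submodule.sub_mem _ hπy hy, hI.apply_sub_mem hθπ y⟩

lemma exists_apply_eq_self_of_lt [Finite F] (hφ : φ ∉ B₀) (hj : 1 ≤ j)
    (hjB : j + 2 ≤ finrank F B₀) (hjb : j + 2 ≤ b) {u : X} (huB : u ∈ B₀) {π : I}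
    (hπ : ι π φ = φ + u) : ∃ z ∈ jordanClosure H (U ⊔ F ∙ φ), z ∉ B₀ ∧ ι π z = z := by
  have : Module.Finite F X := .of_finite
  let M := jordanClosure H (U ⊔ F ∙ φ) ⊔ B₀
  have hlt : finrank F ↥(B₀ ⊔ F ∙ φ) < finrank F M := by
    have : finrank F M + j = _ := hI.finrank_jordanClosure_sup hι hb hU hUj hφ
    rw [Submodule.finrank_sup_span_singleton hφ]
    omega
  obtain ⟨y, hyM, hy⟩ : ∃ y ∈ M, y ∉ B₀ ⊔ F ∙ φ :=
    SetLike.not_le_iff_exists.1 fun h => hlt.not_ge (Submodule.finrank_mono h)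
  obtain ⟨c, hc⟩ := Submodule.mem_span_singleton.1
    (hI.apply_sub_mem_span_singleton hι hb hU hUj hφ hj hjB huB hπ hyM)
  have hfix : ι π (y - c • φ) = y - c • φ := by
    rw [map_sub, map_smul, hπ, smul_add, hc]
    abel
  have hφM : φ ∈ M := Submodule.mem_sup_left mem_jordanClosure_sup_span
  obtain ⟨z, hz, e, he, hze⟩ := Submodule.mem_sup.1 (M.sub_mem hyM (M.smul_mem c hφM))
  refine ⟨z, hz, fun hzB => hy ?_, ?_⟩
  · rw [← sub_add_cancel y (c • φ), ← hze]
    exact Submodule.add_mem_sup (B₀.add_mem hzB he) (Submodule.mem_span_singleton.2 ⟨c, rfl⟩)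
  · rw [← hze, map_add, hI.apply_eq_self π he] at hfix
    exact add_right_cancel hfix

end Closure

section Induction

variable {H : Subgroup (X ≃ₗ[F] X)} [Finite F] [Finite X] (hι : ∀ g, ι g ∈ H) (hB₀ : B₀ ≠ ⊤)

include hι hB₀

lemma not_finrank_jordanClosure_eq {j b : ℕ} (hj : 1 ≤ j) (hjB : j + 2 ≤ finrank F B₀)
    (hjb : j + 2 ≤ b) :
    ¬ ∀ Y : Submodule F X, finrank F Y = j + 1 → finrank F (jordanClosure H Y) = b := by
  have : Module.Finite F X := .of_finite
  intro hb
  obtain ⟨φ, hφ⟩ := exists_notMem_of_ne_top hB₀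
  obtain ⟨u, huB, hu0⟩ := B₀.ne_bot_iff.1 (by rintro rfl; simp at hjB)
  obtain ⟨π, hπ⟩ := hI.exists_apply_eq hφ fun h => hφ ((B₀.add_mem_iff_left huB).1 h)
  obtain ⟨U, -, hU, huU, hUj⟩ := exists_finrank_eq_between_notMem (bot_le : ⊥ ≤ B₀) (j := j)
    (v := u) (by simpa using hu0) (by simp) (by omega)
  obtain ⟨z, hz, hzB, hπz⟩ :=
    hI.exists_apply_eq_self_of_lt hι hb hU hUj hφ hj hjB hjb huB hπ
  have hφ' : φ ∈ jordanClosure H (U ⊔ F ∙ φ) := mem_jordanClosure_sup_span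
  have hπφ := hI.apply_mem_jordanClosure hι hb hU hUj hφ hz hzB (by rwa [hπz]) hφ'
  rw [hπ, Submodule.add_mem_iff_right _ hφ'] at hπφ
  exact huU (hI.jordanClosure_inf hι hb hU hUj hφ ▸ ⟨hπφ, huB⟩)

lemma isJordan_of_finrank_eq_succ {j : ℕ} (hj : 1 ≤ j) (hjB : j + 2 ≤ finrank F B₀)
    (hJ : ∀ B : Submodule F X, finrank F B ≤ j → IsJordan H B) {Y : Submodule F X}
    (hY : finrank F Y = j + 1) : IsJordan H Y := by
  have : Module.Finite F X := .of_finite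
  by_contra hYJ
  refine hI.not_finrank_jordanClosure_eq hι hB₀ (b := finrank F (jordanClosure H Y)) hj hjB ?_
    fun Y' hY' => ?_
  · have hlt : Y < jordanClosure H Y :=
      lt_of_le_of_ne le_jordanClosure fun h => hYJ (h ▸ isJordan_jordanClosure)
    have := Submodule.finrank_lt_finrank_of_lt hlt
    omega
  · obtain ⟨h, hh, rfl⟩ := IsJordan.exists_map_eq (fun B hB => hJ B (by omega)) hY' hY
    rw [jordanClosure_map hh, LinearEquiv.finrank_map_eq]

lemma isJordan_of_finrank_lt (hbot : IsJordan H (⊥ : Submodule F X))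
    (hline : ∀ x : X, x ≠ 0 → IsJordan H (F ∙ x)) {B : Submodule F X}
    (hB : finrank F B < finrank F B₀) : IsJordan H B := by
  have : Module.Finite F X := .of_finite
  obtain ⟨j, hj⟩ : ∃ j, finrank F B = j := ⟨_, rfl⟩
  induction j using Nat.strong_induction_on generalizing B with
  | _ j ih =>
    match j with
    | 0 => rwa [Submodule.finrank_eq_zero.1 hj]
    | 1 =>
      obtain ⟨U, x, hx, hU, rfl⟩ := exists_eq_sup_span_singleton hj
      obtain rfl := Submodule.finrank_eq_zero.1 hU
      rw [bot_sup_eq]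
      exact hline x (by simpa using hx)
    | j + 2 =>
      exact hI.isJordan_of_finrank_eq_succ hι hB₀ (j := j + 1) (by omega) (by omega)
        (fun C hC => ih _ (by omega) (by omega) rfl) hj

theorem exists_map_eq_of_finrank_eq (hbot : IsJordan H (⊥ : Submodule F X))
    (hline : ∀ x : X, x ≠ 0 → IsJordan H (F ∙ x)) {Y Y' : Submodule F X}
    (hY : finrank F Y = finrank F B₀) (hY' : finrank F Y' = finrank F B₀) :
    ∃ h ∈ H, Y.map (h : X →ₗ[F] X) = Y' :=
  have : Module.Finite F X := .of_finite
  IsJordan.exists_map_eq (fun _ hB => hI.isJordan_of_finrank_lt hι hB₀ hbot hline hB) hY hY'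

end Induction

end IsSemiregularOff
end Semiregular

/-! ### Transvections from commutators -/

section Transvections

variable {F V : Type*} [Field F] [AddCommGroup V] [Module F V]

/-- The linear maps `o = h - 1` for `h` in the unipotent radical of the stabilizer of `K` in `H`,
that is, for those `h ∈ H` acting trivially on both `K` and `V ⧸ K`. -/
def unipotentLog (H : Subgroup (V ≃ₗ[F] V)) (K : Submodule F V) : AddSubgroup (V →ₗ[F] V) where
  carrier := {o | (∃ h ∈ H, ∀ v, h v = v + o v) ∧ (∀ v ∈ K, o v = 0) ∧ ∀ v, o v ∈ K}
  zero_mem' := ⟨⟨1, H.one_mem, by simp⟩, by simp, by simp⟩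
  neg_mem' := by
    rintro o ⟨⟨g, hg, hgo⟩, hker, hrange⟩
    refine ⟨⟨g⁻¹, H.inv_mem hg, fun v => ?_⟩, fun v hv => by simp [hker v hv],
      fun v => K.neg_mem (hrange v)⟩
    refine g.symm_apply_eq.2 ?_
    simp [hgo, hker _ (hrange v)]
  add_mem' := by
    rintro o o' ⟨⟨g, hg, hgo⟩, hker, hrange⟩ ⟨⟨g', hg', hgo'⟩, hker', hrange'⟩
    refine ⟨⟨g * g', H.mul_mem hg hg', fun v => ?_⟩, fun v hv => by simp [hker v hv, hker' v hv],
      fun v => K.add_mem (hrange v) (hrange' v)⟩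
    simp [hgo, hgo', hker _ (hrange' v), add_assoc, add_comm (o' v)]

variable {H : Subgroup (V ≃ₗ[F] V)} {K K' : Submodule F V} {o o' : V →ₗ[F] V}

lemma apply_eq_zero_of_mem_unipotentLog (ho : o ∈ unipotentLog H K) {v : V} (hv : v ∈ K) :
    o v = 0 := ho.2.1 v hv

lemma apply_mem_of_mem_unipotentLog (ho : o ∈ unipotentLog H K) (v : V) : o v ∈ K := ho.2.2 v

lemma conj_mem_unipotentLog (ho : o ∈ unipotentLog H K) {g : V ≃ₗ[F] V} (hg : g ∈ H) :
    (g : V →ₗ[F] V) ∘ₗ o ∘ₗ (g.symm : V →ₗ[F] V) ∈ unipotentLog H (K.map (g : V →ₗ[F] V)) := by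
  obtain ⟨⟨h, hh, hho⟩, hker, hrange⟩ := ho
  refine ⟨⟨g * h * g⁻¹, H.mul_mem (H.mul_mem hg hh) (H.inv_mem hg), fun v => ?_⟩, ?_, ?_⟩
  · change g (h (g.symm v)) = _
    simp [hho]
  · rintro _ ⟨v, hv, rfl⟩
    simp [hker v hv]
  · exact fun v => ⟨_, hrange (g.symm v), rfl⟩

lemma exists_mem_eq_commutator (ho : o ∈ unipotentLog H K) (ho' : o' ∈ unipotentLog H K')
    (hoo' : ∀ v, o (o' (o v)) = 0) (ho'o : ∀ v, o' (o (o' v)) = 0) :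
    ∃ h ∈ H, ∀ v, h v = v + o (o' v) - o' (o v) := by
  have hneg := (unipotentLog H K).neg_mem ho
  have hneg' := (unipotentLog H K').neg_mem ho'
  obtain ⟨⟨g, hg, hgo⟩, hker, hrange⟩ := ho
  obtain ⟨⟨g', hg', hgo'⟩, hker', hrange'⟩ := ho'
  obtain ⟨⟨i, hi, hio⟩, -⟩ := hneg
  obtain ⟨⟨i', hi', hio'⟩, -⟩ := hneg'
  refine ⟨g * g' * i * i', H.mul_mem (H.mul_mem (H.mul_mem hg hg') hi) hi', fun v => ?_⟩
  have sq v : o (o v) = 0 := hker _ (hrange v)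
  have sq' v : o' (o' v) = 0 := hker' _ (hrange' v)
  simp only [LinearEquiv.mul_apply, hgo, hgo', hio, hio', LinearMap.neg_apply, map_add, map_neg,
    sq, sq', hoo', ho'o]
  abel

lemma exists_dual_eq_one {x : V} (hx : x ∉ K) :
    ∃ f : Dual F V, f x = 1 ∧ f ∈ K.dualAnnihilator := by
  obtain ⟨f, hfx, hfK⟩ := Submodule.exists_le_ker_of_notMem hx
  refine ⟨(f x)⁻¹ • f, by simp [hfx], Submodule.smul_mem _ _ ?_⟩
  exact (Submodule.mem_dualAnnihilator f).2 fun v hv => hfK hv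

lemma sub_smul_mem_of_mem_sup_span {D : Submodule F V} {b : Dual F V} (hb : b ∈ D.dualAnnihilator)
    {x : V} (hx : b x = 1) {v : V} (hv : v ∈ D ⊔ F ∙ x) : v - b v • x ∈ D := by
  obtain ⟨y, hy, c, rfl⟩ := mem_sup_span_singleton.1 hv
  simpa [(Submodule.mem_dualAnnihilator b).1 hb y hy, hx] using hy

variable (H K) in
/-- The unipotent radical attached to `K` moves every vector outside `K` by every vector of `K`,
and the dual property holds for functionals. -/
structure IsUnipotentRich : Prop where
  exists_apply_eq {x w : V} (hx : x ∉ K) (hw : w ∈ K) : ∃ o ∈ unipotentLog H K, o x = w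
  exists_comp_eq {f b : Dual F V} (hf : f ∉ K.dualAnnihilator) (hb : b ∈ K.dualAnnihilator) :
    ∃ o ∈ unipotentLog H K, f ∘ₗ o = b

lemma IsUnipotentRich.map (hK : IsUnipotentRich H K) {g : V ≃ₗ[F] V} (hg : g ∈ H) :
    IsUnipotentRich H (K.map (g : V →ₗ[F] V)) where
  exists_apply_eq := by
    rintro x _ hx ⟨w, hw, rfl⟩
    obtain ⟨o, ho, rfl⟩ := hK.exists_apply_eq (x := g.symm x) (fun h => hx ⟨_, h, by simp⟩) hw
    exact ⟨_, conj_mem_unipotentLog ho hg, rfl⟩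
  exists_comp_eq := by
    intro f b hf hb
    simp only [Submodule.mem_dualAnnihilator, Submodule.mem_map, forall_exists_index, and_imp,
      forall_apply_eq_imp_iff₂] at hf hb
    obtain ⟨o, ho, hfo⟩ := hK.exists_comp_eq (f := f ∘ₗ (g : V →ₗ[F] V))
      (b := b ∘ₗ (g : V →ₗ[F] V)) (by simpa [Submodule.mem_dualAnnihilator] using hf)
      (by simpa [Submodule.mem_dualAnnihilator] using hb)
    refine ⟨_, conj_mem_unipotentLog ho hg, LinearMap.ext fun v => ?_⟩
    simpa using LinearMap.congr_fun hfo (g.symm v)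

variable (H) in
/-- `H` contains a nontrivial transvection `v ↦ v + f v • m`. -/
def HasTransvection : Prop :=
  ∃ (f : Dual F V) (m : V), f ≠ 0 ∧ m ≠ 0 ∧ f m = 0 ∧ ∃ h ∈ H, ∀ v, h v = v + f v • m

lemma hasTransvection_of_finrank_eq_one (hK : IsUnipotentRich H K) (hK1 : finrank F K = 1)
    (hKtop : K ≠ ⊤) : HasTransvection H := by
  obtain ⟨x, hx⟩ := exists_notMem_of_ne_top hKtop
  obtain ⟨⟨w, hwK⟩, hw, hspan⟩ := finrank_eq_one_iff'.1 hK1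
  have hw0 : w ≠ 0 := by simpa using hw
  obtain ⟨o, ho, hox⟩ := hK.exists_apply_eq hx hwK
  obtain ⟨f, hfw, -⟩ := exists_dual_eq_one (K := (⊥ : Submodule F V)) (x := w) (by simpa using hw0)
  obtain ⟨⟨h, hh, hho⟩, hker, hrange⟩ := ho
  refine ⟨f ∘ₗ o, w, fun h => ?_, hw0, by simp [hker w hwK], h, hh, fun v => ?_⟩
  · simpa [hox, hfw] using LinearMap.congr_fun h x
  · obtain ⟨c, hc⟩ := hspan ⟨o v, hrange v⟩
    have hc : c • w = o v := congrArg Subtype.val hc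
    simp [hho, ← hc, hfw]

lemma hasTransvection_of_finrank_add_one_eq [FiniteDimensional F V] (hK : IsUnipotentRich H K)
    (hKbot : K ≠ ⊥) (hKV : finrank F K + 1 = finrank F V) : HasTransvection H := by
  obtain ⟨x, hx⟩ := exists_notMem_of_ne_top (B := K) (by rintro rfl; simp at hKV)
  obtain ⟨w, hwK, hw0⟩ := K.ne_bot_iff.1 hKbot
  obtain ⟨a, hax, haK⟩ := exists_dual_eq_one hx
  obtain ⟨o, ⟨⟨h, hh, hho⟩, hker, -⟩, hox⟩ := hK.exists_apply_eq hx hwK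
  have htop : K ⊔ F ∙ x = ⊤ := Submodule.eq_top_of_finrank_eq
    (by rw [Submodule.finrank_sup_span_singleton hx, hKV])
  rw [Submodule.mem_dualAnnihilator] at haK
  refine ⟨a, w, fun h => by simp [h] at hax, hw0, haK w hwK, h, hh, fun v => ?_⟩
  have hv := hker _ (sub_smul_mem_of_mem_sup_span ((Submodule.mem_dualAnnihilator a).2 haK) hax
    (htop ▸ Submodule.mem_top : v ∈ K ⊔ F ∙ x))
  rw [map_sub, map_smul, hox, sub_eq_zero] at hv
  rw [hho, hv]

lemma natCard_eq_of_ker_eq {A B C : Type*} [AddGroup A] [AddGroup B] [AddGroup C]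
    {f : A →+ B} {g : A →+ C} (hf : Function.Surjective f) (hg : Function.Surjective g)
    (h : f.ker = g.ker) : Nat.card B = Nat.card C := by
  rw [← Nat.card_congr (QuotientAddGroup.quotientKerEquivOfSurjective f hf).toEquiv,
    ← Nat.card_congr (QuotientAddGroup.quotientKerEquivOfSurjective g hg).toEquiv, h]

section Config

/- `K = D ⊔ F ∙ x` and `K' = D ⊔ F ∙ y` share the hyperplane `D`, so the commutator of `1 + o` and
`1 + o'` differs from the identity by a map of rank at most two. Counting `o'` in two ways finds one
for which a suitable `o` brings this rank down to one. -/
variable {D : Submodule F V} {a b : Dual F V} {x y : V}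
  (ha : a ∈ (D ⊔ F ∙ x).dualAnnihilator) (hay : a y = 1)
  (hb : b ∈ (D ⊔ F ∙ y).dualAnnihilator) (hbx : b x = 1)

include ha hay hb hbx

lemma exists_mem_eq_add_sub_of_mem_unipotentLog (ho : o ∈ unipotentLog H (D ⊔ F ∙ x))
    (ho' : o' ∈ unipotentLog H (D ⊔ F ∙ y)) (hoy : o y ∈ D) (ho'x : o' x ∈ D) :
    ∃ h ∈ H, ∀ v, h v = v + a (o' v) • o y - b (o v) • o' x := by
  have hD {v : V} (hv : v ∈ D) : o v = 0 :=
    apply_eq_zero_of_mem_unipotentLog ho (Submodule.mem_sup_left hv)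
  have hD' {v : V} (hv : v ∈ D) : o' v = 0 :=
    apply_eq_zero_of_mem_unipotentLog ho' (Submodule.mem_sup_left hv)
  have hoo' (v : V) : o (o' v) = a (o' v) • o y := by
    have := hD (sub_smul_mem_of_mem_sup_span (Submodule.dualAnnihilator_anti le_sup_left ha) hay
      (apply_mem_of_mem_unipotentLog ho' v))
    rwa [map_sub, map_smul, sub_eq_zero] at this
  have ho'o (v : V) : o' (o v) = b (o v) • o' x := by
    have := hD' (sub_smul_mem_of_mem_sup_span (Submodule.dualAnnihilator_anti le_sup_left hb) hbx
      (apply_mem_of_mem_unipotentLog ho v))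
    rwa [map_sub, map_smul, sub_eq_zero] at this
  obtain ⟨h, hh, hcomm⟩ := exists_mem_eq_commutator ho ho'
    (fun v => by rw [ho'o, map_smul, hD ho'x, smul_zero])
    (fun v => by rw [hoo', map_smul, hD' hoy, smul_zero])
  exact ⟨h, hh, fun v => by rw [hcomm, hoo', ho'o]⟩

lemma hasTransvection_of_apply_eq_zero (hK : IsUnipotentRich H (D ⊔ F ∙ x)) (hD : D ≠ ⊥)
    (ho' : o' ∈ unipotentLog H (D ⊔ F ∙ y)) (ho'x : o' x = 0) (hao' : a ∘ₗ o' ≠ 0) :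
    HasTransvection H := by
  obtain ⟨m, hm, hm0⟩ := D.ne_bot_iff.1 hD
  have hy : y ∉ D ⊔ F ∙ x := fun h =>
    one_ne_zero (hay.symm.trans ((Submodule.mem_dualAnnihilator a).1 ha y h))
  obtain ⟨o, ho, rfl⟩ := hK.exists_apply_eq hy (Submodule.mem_sup_left hm)
  obtain ⟨h, hh, hcomm⟩ := exists_mem_eq_add_sub_of_mem_unipotentLog ha hay hb hbx ho ho' hm
    (ho'x ▸ D.zero_mem)
  refine ⟨a ∘ₗ o', o y, hao', hm0, ?_, h, hh, fun v => ?_⟩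
  · rw [LinearMap.comp_apply,
      apply_eq_zero_of_mem_unipotentLog ho' (Submodule.mem_sup_left hm), map_zero]
  · rw [hcomm, ho'x, smul_zero, sub_zero, LinearMap.comp_apply]

lemma hasTransvection_of_comp_eq_zero (hK : IsUnipotentRich H (D ⊔ F ∙ x))
    (hD : (D ⊔ F ∙ x ⊔ F ∙ y).dualAnnihilator ≠ ⊥) (ho' : o' ∈ unipotentLog H (D ⊔ F ∙ y))
    (ho'D : o' x ∈ D) (ho'x : o' x ≠ 0) (hao' : a ∘ₗ o' = 0) : HasTransvection H := by
  obtain ⟨γ, hγ, hγ0⟩ := Submodule.ne_bot_iff _ |>.1 hD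
  have hxK : x ∈ D ⊔ F ∙ x := Submodule.mem_sup_right (Submodule.mem_span_singleton_self x)
  have hbK : b ∉ (D ⊔ F ∙ x).dualAnnihilator := fun h =>
    one_ne_zero (hbx.symm.trans ((Submodule.mem_dualAnnihilator b).1 h x hxK))
  obtain ⟨o, ho, hbo⟩ := hK.exists_comp_eq hbK
    (neg_mem (Submodule.dualAnnihilator_anti le_sup_left hγ))
  rw [Submodule.mem_dualAnnihilator] at hγ
  have hbo (v : V) : b (o v) = -γ v := LinearMap.congr_fun hbo v
  have hoy : o y ∈ D := by
    have := sub_smul_mem_of_mem_sup_span (Submodule.dualAnnihilator_anti le_sup_left hb) hbx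
      (apply_mem_of_mem_unipotentLog ho y)
    rwa [hbo, hγ y (Submodule.mem_sup_right (Submodule.mem_span_singleton_self y)), neg_zero,
      zero_smul, sub_zero] at this
  obtain ⟨h, hh, hcomm⟩ :=
    exists_mem_eq_add_sub_of_mem_unipotentLog ha hay hb hbx ho ho' hoy ho'D
  refine ⟨γ, o' x, hγ0, ho'x, hγ _ (Submodule.mem_sup_left (Submodule.mem_sup_left ho'D)), h, hh,
    fun v => ?_⟩
  have hao'v : a (o' v) = 0 := LinearMap.congr_fun hao' v
  rw [hcomm, hbo, hao'v, zero_smul, add_zero, neg_smul, sub_neg_eq_add]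

lemma exists_mem_unipotentLog_of_natCard_ne (hK' : IsUnipotentRich H (D ⊔ F ∙ y))
    (hcard : Nat.card D ≠ Nat.card (D ⊔ F ∙ x ⊔ F ∙ y).dualAnnihilator) :
    ∃ o' ∈ unipotentLog H (D ⊔ F ∙ y), o' x ∈ D ∧
      (o' x = 0 ∧ a ∘ₗ o' ≠ 0 ∨ o' x ≠ 0 ∧ a ∘ₗ o' = 0) := by
  by_contra! hcon
  let A : AddSubgroup (V →ₗ[F] V) :=
    unipotentLog H (D ⊔ F ∙ y) ⊓ (D.comap (LinearMap.applyₗ x)).toAddSubgroup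
  have haD {v : V} (hv : v ∈ D) : a v = 0 :=
    (Submodule.mem_dualAnnihilator a).1 ha v (Submodule.mem_sup_left hv)
  have hyK' : y ∈ D ⊔ F ∙ y := Submodule.mem_sup_right (Submodule.mem_span_singleton_self y)
  have hxK' : x ∉ D ⊔ F ∙ y := fun h =>
    one_ne_zero (hbx.symm.trans ((Submodule.mem_dualAnnihilator b).1 hb x h))
  have haK' : a ∉ (D ⊔ F ∙ y).dualAnnihilator := fun h =>
    one_ne_zero (hay.symm.trans ((Submodule.mem_dualAnnihilator a).1 h y hyK'))
  have hann (o : A) : a ∘ₗ o.1 ∈ (D ⊔ F ∙ x ⊔ F ∙ y).dualAnnihilator := by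
    rw [sup_right_comm, Submodule.dualAnnihilator_sup_eq]
    exact ⟨(Submodule.mem_dualAnnihilator _).2 fun v hv => by
      rw [LinearMap.comp_apply, apply_eq_zero_of_mem_unipotentLog o.2.1 hv, map_zero],
      (Submodule.mem_dualAnnihilator _).2 fun v hv => by
      obtain ⟨c, rfl⟩ := Submodule.mem_span_singleton.1 hv
      rw [map_smul, LinearMap.comp_apply, haD (v := o.1 x) o.2.2, smul_zero]⟩
  let ev : A →+ D := AddMonoidHom.mk' (fun o => ⟨o.1 x, o.2.2⟩) fun _ _ => rfl
  let coev : A →+ (D ⊔ F ∙ x ⊔ F ∙ y).dualAnnihilator :=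
    AddMonoidHom.mk' (fun o => ⟨a ∘ₗ o.1, hann o⟩) fun o o' =>
      Subtype.ext (LinearMap.comp_add o.1 o'.1 a)
  refine hcard (natCard_eq_of_ker_eq (f := ev) (g := coev) ?_ ?_ ?_)
  · rintro ⟨m, hm⟩
    obtain ⟨o, ho, rfl⟩ := hK'.exists_apply_eq hxK' (Submodule.mem_sup_left hm)
    exact ⟨⟨o, ho, hm⟩, rfl⟩
  · rintro ⟨γ, hγ⟩
    obtain ⟨o, ho, rfl⟩ := hK'.exists_comp_eq haK'
      (Submodule.dualAnnihilator_anti (sup_le_sup_right le_sup_left _) hγ)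
    have haox : a (o x) = 0 := (Submodule.mem_dualAnnihilator _).1 hγ x
      (Submodule.mem_sup_left (Submodule.mem_sup_right (Submodule.mem_span_singleton_self x)))
    have hox := sub_smul_mem_of_mem_sup_span (Submodule.dualAnnihilator_anti le_sup_left ha) hay
      (apply_mem_of_mem_unipotentLog ho x)
    rw [haox, zero_smul, sub_zero] at hox
    exact ⟨⟨o, ho, hox⟩, rfl⟩
  · ext o
    have := hcon o.1 o.2.1 o.2.2
    have hev : o ∈ ev.ker ↔ o.1 x = 0 := Submodule.mk_eq_zero D _
    have hcoev : o ∈ coev.ker ↔ a ∘ₗ o.1 = 0 := Submodule.mk_eq_zero _ (hann o)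
    tauto

end Config

lemma natCard_ne_natCard_dualAnnihilator [Finite F] [FiniteDimensional F V] {D M : Submodule F V}
    (h : finrank F D + finrank F M ≠ finrank F V) : Nat.card D ≠ Nat.card M.dualAnnihilator := by
  rw [Module.natCard_eq_pow_finrank (K := F) (V := D),
    Module.natCard_eq_pow_finrank (K := F) (V := M.dualAnnihilator)]
  intro hpow
  have := Nat.pow_right_injective (Finite.one_lt_card (α := F)) hpow
  have := Subspace.finrank_add_finrank_dualAnnihilator_eq M
  omega

theorem hasTransvection_of_isUnipotentRich [Finite F] [FiniteDimensional F V]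
    (hK : IsUnipotentRich H K) (hKbot : K ≠ ⊥) (hKtop : K ≠ ⊤)
    (hdim : finrank F K ≠ 1 → 2 * finrank F K ≠ finrank F V)
    (htrans : ∀ K' : Submodule F V, finrank F K' = finrank F K →
      ∃ h ∈ H, K.map (h : V →ₗ[F] V) = K') : HasTransvection H := by
  by_cases hK1 : finrank F K = 1
  · exact hasTransvection_of_finrank_eq_one hK hK1 hKtop
  by_cases hKV : finrank F K + 1 = finrank F V
  · exact hasTransvection_of_finrank_add_one_eq hK hKbot hKV
  have hlt : finrank F K < finrank F V := Submodule.finrank_lt hKtop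
  obtain ⟨d, hd⟩ := Nat.exists_eq_succ_of_ne_zero (Submodule.finrank_eq_zero.not.2 hKbot)
  obtain ⟨D, x, hxD, hDd, rfl⟩ := exists_eq_sup_span_singleton hd
  obtain ⟨y, hy⟩ := exists_notMem_of_ne_top hKtop
  obtain ⟨a, hay, ha⟩ := exists_dual_eq_one hy
  have hxK' : x ∉ D ⊔ F ∙ y := fun hx => hxD <| by
    have := sub_smul_mem_of_mem_sup_span (Submodule.dualAnnihilator_anti le_sup_left ha) hay hx
    rwa [(Submodule.mem_dualAnnihilator a).1 ha x
      (Submodule.mem_sup_right (Submodule.mem_span_singleton_self x)), zero_smul, sub_zero] at this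
  obtain ⟨b, hbx, hb⟩ := exists_dual_eq_one hxK'
  have hyD : y ∉ D := fun h => hy (Submodule.mem_sup_left h)
  obtain ⟨g, hg, hgK⟩ := htrans (D ⊔ F ∙ y) (by
    rw [Submodule.finrank_sup_span_singleton hyD, hd, hDd])
  have hann := Subspace.finrank_add_finrank_dualAnnihilator_eq (D ⊔ F ∙ x ⊔ F ∙ y)
  rw [Submodule.finrank_sup_span_singleton hy] at hann
  have hcard : Nat.card D ≠ Nat.card (D ⊔ F ∙ x ⊔ F ∙ y).dualAnnihilator := by
    refine natCard_ne_natCard_dualAnnihilator fun h => hdim hK1 ?_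
    rw [Submodule.finrank_sup_span_singleton hy] at h
    omega
  obtain ⟨o', ho', ho'D, ⟨ho'x, hao'⟩ | ⟨ho'x, hao'⟩⟩ :=
    exists_mem_unipotentLog_of_natCard_ne ha hay hb hbx (hgK ▸ hK.map hg) hcard
  · refine hasTransvection_of_apply_eq_zero ha hay hb hbx hK ?_ ho' ho'x hao'
    rintro rfl
    simp only [finrank_bot] at hDd
    omega
  · refine hasTransvection_of_comp_eq_zero ha hay hb hbx hK (fun h => ?_) ho' ho'D ho'x hao'
    rw [h, finrank_bot] at hann
    omega

end Transvections

/-! ### Generation of the general linear group -/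

section Generation

variable {F V : Type*} [Field F] [AddCommGroup V] [Module F V] {H : Subgroup (V ≃ₗ[F] V)}
  {U : Submodule F V} {x y : V}

lemma notMem_sup_span_sub (hx : x ∉ U) (hxy : y ∉ U ⊔ F ∙ x) : y ∉ U ⊔ F ∙ (y - x) := by
  intro h
  obtain ⟨u, hu, c, hc⟩ := mem_sup_span_singleton.1 h
  have key : (1 - c) • y = u - c • x := by
    rw [sub_smul, one_smul, sub_eq_sub_iff_add_eq_add, ← eq_sub_iff_add_eq, add_sub_assoc,
      ← smul_sub, hc]
  rcases eq_or_ne c 1 with rfl | hc1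
  · rw [sub_self, zero_smul, one_smul, eq_comm, sub_eq_zero] at key
    exact hx (key ▸ hu)
  · refine hxy (mem_sup_span_singleton.2 ⟨(1 - c)⁻¹ • u, U.smul_mem _ hu, -((1 - c)⁻¹ * c), ?_⟩)
    rw [neg_smul, ← sub_eq_add_neg, mul_smul, ← smul_sub, ← key,
      inv_smul_smul₀ (sub_ne_zero.2 hc1.symm)]

lemma exists_mem_fix_apply_eq_of_notMem (hH : LinearEquiv.transvections F V ⊆ H)
    (hxy : y ∉ U ⊔ F ∙ (y - x)) : ∃ h ∈ H, (∀ u ∈ U, h u = u) ∧ h x = y := by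
  obtain ⟨f, hfy, hfU⟩ := exists_dual_eq_one hxy
  rw [Submodule.mem_dualAnnihilator] at hfU
  have hyx : f (y - x) = 0 :=
    hfU _ (Submodule.mem_sup_right (Submodule.mem_span_singleton_self _))
  have hfx : f x = 1 := by rw [← hfy, ← sub_eq_zero, ← neg_sub, ← map_sub, hyx, neg_zero]
  refine ⟨.transvection hyx, hH (LinearEquiv.mem_transvections hyx), fun u hu => ?_, ?_⟩
  · rw [LinearEquiv.transvection.apply, hfU u (Submodule.mem_sup_left hu), zero_smul, add_zero]
  · rw [LinearEquiv.transvection.apply, hfx, one_smul, add_sub_cancel]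

variable [FiniteDimensional F V]

lemma exists_mem_fix_apply_eq (hH : LinearEquiv.transvections F V ⊆ H)
    (hU : finrank F U + 2 ≤ finrank F V) (hx : x ∉ U) (hy : y ∉ U) :
    ∃ h ∈ H, (∀ u ∈ U, h u = u) ∧ h x = y := by
  have sup_ne_top {x : V} (hx : x ∉ U) : U ⊔ F ∙ x ≠ ⊤ := fun h => by
    have := Submodule.finrank_sup_span_singleton (K := F) hx
    rw [h, finrank_top] at this
    omega
  obtain ⟨z, hzx, hzy⟩ := exists_notMem_notMem (sup_ne_top hx) (sup_ne_top hy)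
  obtain ⟨h, hh, hhU, hhx⟩ := exists_mem_fix_apply_eq_of_notMem hH (notMem_sup_span_sub hx hzx)
  obtain ⟨g, hg, hgU, hgy⟩ := exists_mem_fix_apply_eq_of_notMem hH (notMem_sup_span_sub hy hzy)
  refine ⟨g⁻¹ * h, H.mul_mem (H.inv_mem hg) hh, fun u hu => ?_, ?_⟩
  · exact (g.symm_apply_eq).2 ((hhU u hu).trans (hgU u hu).symm)
  · exact (g.symm_apply_eq).2 (hhx.trans hgy.symm)

lemma exists_mem_mul_fix (hH : LinearEquiv.transvections F V ⊆ H) (g : V ≃ₗ[F] V) {d : ℕ}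
    (hd : d < finrank F V) :
    ∃ h ∈ H, ∃ U : Submodule F V, finrank F U = d ∧ ∀ u ∈ U, h (g u) = u := by
  induction d with
  | zero => exact ⟨1, H.one_mem, ⊥, finrank_bot F V, by simp⟩
  | succ d ih =>
    obtain ⟨h, hh, U, hU, hhU⟩ := ih (by omega)
    obtain ⟨v, hv⟩ := exists_notMem_of_ne_top (B := U) fun h => by
      rw [h, finrank_top] at hU
      omega
    have hgv : h (g v) ∉ U := fun hm => hv (g.injective (h.injective (hhU _ hm)) ▸ hm)
    obtain ⟨t, ht, htU, htv⟩ := exists_mem_fix_apply_eq hH (by omega) hgv hv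
    refine ⟨t * h, H.mul_mem ht hh, U ⊔ F ∙ v, by
      rw [Submodule.finrank_sup_span_singleton hv, hU], fun u hu => ?_⟩
    obtain ⟨w, hw, c, rfl⟩ := mem_sup_span_singleton.1 hu
    simp only [LinearEquiv.mul_apply, map_add, map_smul, hhU w hw, htU w hw, htv]

lemma mem_of_det_eq_one (hH : LinearEquiv.transvections F V ⊆ H) {g : V ≃ₗ[F] V}
    (hg : LinearEquiv.det g = 1) : g ∈ H := by
  cases subsingleton_or_nontrivial V with
  | inl _ => exact Subsingleton.elim 1 g ▸ H.one_mem
  | inr _ =>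
  have hpos : 0 < finrank F V := finrank_pos
  obtain ⟨h, ⟨hh, hdet⟩, U, hU, hhU⟩ := exists_mem_mul_fix
    (H := H ⊓ LinearEquiv.det.ker) (fun e he => ⟨hH he, by
      obtain ⟨f, v, hfv, rfl⟩ := he
      exact LinearEquiv.transvection.det_eq_one hfv⟩) g (Nat.sub_one_lt hpos.ne')
  obtain ⟨v, hv⟩ := exists_notMem_of_ne_top (B := U) fun h => by
    rw [h, finrank_top] at hU
    omega
  obtain ⟨f, hfv, hfU⟩ := exists_dual_eq_one hv
  have htop : U ⊔ F ∙ v = ⊤ := Submodule.eq_top_of_finrank_eq (by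
    rw [Submodule.finrank_sup_span_singleton hv, hU, Nat.sub_add_cancel hpos])
  have hhg : ((h * g : V ≃ₗ[F] V) : V →ₗ[F] V) = LinearMap.transvection f (h (g v) - v) := by
    ext u
    obtain ⟨w, hw, c, rfl⟩ := mem_sup_span_singleton.1 (htop ▸ Submodule.mem_top (x := u))
    simp [LinearMap.transvection.apply, hhU w hw, hfv, smul_sub,
      (Submodule.mem_dualAnnihilator f).1 hfU w hw]
  have hfm : f (h (g v) - v) = 0 := by
    have := congrArg Units.val (show LinearEquiv.det (h * g) = 1 by
      rw [map_mul, hg, mul_one]; exact hdet)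
    rwa [LinearEquiv.coe_det, hhg, LinearMap.transvection.det, Units.val_one, add_eq_left] at this
  refine (H.mul_mem_cancel_left hh).1 (hH ⟨f, _, hfm, LinearEquiv.toLinearMap_injective hhg⟩)

theorem eq_top_of_transvections_subset (hH : LinearEquiv.transvections F V ⊆ H)
    (hdet : ∀ c : Fˣ, ∃ h ∈ H, LinearEquiv.det h = c) : H = ⊤ := by
  refine eq_top_iff.2 fun g _ => ?_
  obtain ⟨h, hh, hhg⟩ := hdet (LinearEquiv.det g)
  exact (H.mul_mem_cancel_left (H.inv_mem hh)).1
    (mem_of_det_eq_one hH (by rw [map_mul, map_inv, hhg, inv_mul_cancel]))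

end Generation

/-! ### Passing to the dual -/

section Contragredient

variable {F V : Type*} [Field F] [AddCommGroup V] [Module F V]

variable (F V) in
/-- The contragredient action `h ↦ (f ↦ f ∘ h⁻¹)` of the general linear group on the dual. -/
def contragredient : (V ≃ₗ[F] V) →* (Dual F V ≃ₗ[F] Dual F V) where
  toFun h := h.symm.dualMap
  map_one' := rfl
  map_mul' _ _ := rfl

lemma contragredient_apply (h : V ≃ₗ[F] V) (f : Dual F V) (v : V) :
    contragredient F V h f v = f (h⁻¹ v) := rfl

lemma map_contragredient_dualAnnihilator (h : V ≃ₗ[F] V) (W : Submodule F V) :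
    W.dualAnnihilator.map (contragredient F V h : Dual F V →ₗ[F] Dual F V) =
      (W.map (h : V →ₗ[F] V)).dualAnnihilator := by
  ext f
  rw [Submodule.map_equiv_eq_comap_symm, Submodule.mem_comap, Submodule.mem_dualAnnihilator,
    Submodule.mem_dualAnnihilator]
  exact (Set.forall_mem_image (f := h) (s := W) (p := fun v => f v = 0)).symm

end Contragredient

/-! ### Inertia actions -/

/-- Conjugation of automorphisms by a linear equivalence. -/
def conjAut {F V V' : Type*} [Field F] [AddCommGroup V] [Module F V] [AddCommGroup V'] [Module F V']
    (e : V ≃ₗ[F] V') : (V ≃ₗ[F] V) ≃* (V' ≃ₗ[F] V') where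
  toFun h := e.symm ≪≫ₗ h ≪≫ₗ e
  invFun h := e ≪≫ₗ h ≪≫ₗ e.symm
  left_inv h := by ext; simp
  right_inv h := by ext; simp
  map_mul' g h := by ext; simp

lemma conjAut_apply {F V V' : Type*} [Field F] [AddCommGroup V] [Module F V] [AddCommGroup V']
    [Module F V'] (e : V ≃ₗ[F] V') (h : V ≃ₗ[F] V) (v : V') : conjAut e h v = e (h (e.symm v)) :=
  rfl

section Inertia

variable {F V I k : Type*} [Field F] [AddCommGroup V] [Module F V] [Group I] [Field k]

/-- The action of a ramification group `I` with tame character `θ` on a space `V` of roots whose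
small roots form `W`: the action is trivial on `V ⧸ W`, on `W` it is through `θ` and simply
transitive on nonzero vectors, and the wild part `ker θ` realizes all translations by `W` at each
single vector outside `W`. -/
structure IsInertial (W : Submodule F V) (ι : I →* (V ≃ₗ[F] V)) (θ : I →* kˣ) : Prop where
  apply_sub_mem (g : I) (v : V) : ι g v - v ∈ W
  apply_eq_self {g : I} (hg : θ g = 1) {w : V} (hw : w ∈ W) : ι g w = w
  eq_one_of_apply_eq {g : I} {w : V} (hw : w ∈ W) (hw0 : w ≠ 0) (h : ι g w = w) : θ g = 1
  exists_apply_eq {w w' : V} (hw : w ∈ W) (hw0 : w ≠ 0) (hw' : w' ∈ W) (hw'0 : w' ≠ 0) :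
    ∃ g, ι g w = w'
  exists_apply_eq_add {x w : V} (hx : x ∉ W) (hw : w ∈ W) : ∃ g, θ g = 1 ∧ ι g x = x + w

variable {W : Submodule F V} {ι : I →* (V ≃ₗ[F] V)} {θ : I →* kˣ} {f f' b : Dual F V}

lemma IsInertial.map {V' : Type*} [AddCommGroup V'] [Module F V'] (hI : IsInertial W ι θ)
    (e : V ≃ₗ[F] V') :
    IsInertial (W.map (e : V →ₗ[F] V')) ((conjAut e).toMonoidHom.comp ι) θ where
  apply_sub_mem g v := ⟨_, hI.apply_sub_mem g (e.symm v), by simp [conjAut_apply]⟩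
  apply_eq_self := by
    rintro g hg _ ⟨w, hw, rfl⟩
    simp [conjAut_apply, hI.apply_eq_self hg hw]
  eq_one_of_apply_eq := by
    rintro g _ ⟨w, hw, rfl⟩ hw0 h
    exact hI.eq_one_of_apply_eq hw (by simpa using hw0) (by simpa [conjAut_apply] using h)
  exists_apply_eq := by
    rintro _ _ ⟨w, hw, rfl⟩ hw0 ⟨w', hw', rfl⟩ hw'0
    obtain ⟨g, hg⟩ := hI.exists_apply_eq hw (by simpa using hw0) hw' (by simpa using hw'0)
    exact ⟨g, by simp [conjAut_apply, hg]⟩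
  exists_apply_eq_add := by
    rintro x _ hx ⟨w, hw, rfl⟩
    obtain ⟨g, hθ, hg⟩ := hI.exists_apply_eq_add (x := e.symm x)
      (fun h => hx ⟨_, h, by simp⟩) hw
    exact ⟨g, hθ, by simp [conjAut_apply, hg]⟩

namespace IsInertial

variable (hI : IsInertial W ι θ)
include hI

lemma contragredient_eq_self (g : I) (hb : b ∈ W.dualAnnihilator) :
    contragredient F V (ι g) b = b := by
  ext v
  rw [contragredient_apply, ← map_inv, ← sub_eq_zero, ← map_sub]
  exact (Submodule.mem_dualAnnihilator b).1 hb _ (hI.apply_sub_mem g⁻¹ v)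

lemma contragredient_notMem (g : I) (hf : f ∉ W.dualAnnihilator) :
    contragredient F V (ι g) f ∉ W.dualAnnihilator := fun h => hf <| by
  have := hI.contragredient_eq_self g⁻¹ h
  rw [← LinearEquiv.mul_apply, ← map_mul, ← map_mul, inv_mul_cancel, map_one, map_one,
    LinearEquiv.coe_one, id_eq] at this
  rwa [this]

lemma contragredient_sub_mem {g : I} (hg : θ g = 1) (f : Dual F V) :
    contragredient F V (ι g) f - f ∈ W.dualAnnihilator := by
  refine (Submodule.mem_dualAnnihilator _).2 fun w hw => ?_
  rw [LinearMap.sub_apply, contragredient_apply, ← map_inv,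
    hI.apply_eq_self (by rw [map_inv, hg, inv_one]) hw, sub_self]

lemma eq_one_of_contragredient_sub_mem [Finite V] {g : I} (hf : f ∉ W.dualAnnihilator)
    (hgf : contragredient F V (ι g) f - f ∈ W.dualAnnihilator) : θ g = 1 := by
  by_contra hθ
  let D : W →ₗ[F] W := ((ι g⁻¹ : V →ₗ[F] V) - LinearMap.id).restrict fun w _ =>
    hI.apply_sub_mem g⁻¹ w
  have hD : Function.Injective D := by
    refine (injective_iff_map_eq_zero D).2 fun w hw => ?_
    by_contra hw0
    have hfix : ι g⁻¹ w = w := sub_eq_zero.1 (congrArg Subtype.val hw)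
    have := hI.eq_one_of_apply_eq w.2 (by simpa using hw0) hfix
    exact hθ (by rwa [map_inv, inv_eq_one] at this)
  refine hf ((Submodule.mem_dualAnnihilator f).2 fun w hw => ?_)
  obtain ⟨u, hu⟩ := Finite.surjective_of_injective hD ⟨w, hw⟩
  have hu : ι g⁻¹ u - u = w := congrArg Subtype.val hu
  rw [← hu, map_sub, map_inv]
  exact (Submodule.mem_dualAnnihilator _).1 hgf u u.2

/-- The group acts freely through `θ` on the nonzero elements of both `W` and its dual, and it is
transitive on the former; since both have the same cardinality, it is transitive on the latter. -/
lemma exists_contragredient_sub_mem [Finite F] [Finite V]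
    (hf : f ∉ W.dualAnnihilator) (hf' : f' ∉ W.dualAnnihilator) :
    ∃ g, contragredient F V (ι g) f - f' ∈ W.dualAnnihilator := by
  obtain ⟨w₀, hw₀, hw₀0⟩ := W.ne_bot_iff.1 (by rintro rfl; simp at hf)
  choose γ hγ using fun w : {w : W // w ≠ 0} =>
    hI.exists_apply_eq hw₀ hw₀0 w.1.2 (Subtype.coe_ne_coe.2 w.2)
  have restrict_ne_zero {φ : Dual F V} (hφ : φ ∉ W.dualAnnihilator) : W.dualRestrict φ ≠ 0 :=
    fun h => hφ (W.dualRestrict_ker_eq_dualAnnihilator ▸ h)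
  let Ψ : {w : W // w ≠ 0} → {φ : Dual F W // φ ≠ 0} := fun w =>
    ⟨W.dualRestrict (contragredient F V (ι (γ w)) f),
      restrict_ne_zero (hI.contragredient_notMem _ hf)⟩
  have hΨ : Function.Injective Ψ := by
    intro w w' h
    have hsub : contragredient F V (ι (γ w)) f - contragredient F V (ι (γ w')) f ∈
        W.dualAnnihilator := by
      rw [← W.dualRestrict_ker_eq_dualAnnihilator]
      exact LinearMap.sub_mem_ker_iff.2 (congrArg Subtype.val h)
    have hθ : θ ((γ w')⁻¹ * γ w) = 1 := hI.eq_one_of_contragredient_sub_mem hf <| by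
      have := hI.contragredient_eq_self (γ w')⁻¹ hsub
      rw [map_sub, ← LinearEquiv.mul_apply, ← LinearEquiv.mul_apply, ← map_mul, ← map_mul,
        ← map_mul, ← map_mul, inv_mul_cancel, map_one, map_one] at this
      exact this ▸ hsub
    have hfix := congrArg (ι (γ w')) (hI.apply_eq_self hθ hw₀)
    rw [← LinearEquiv.mul_apply, ← map_mul, mul_inv_cancel_left, hγ, hγ] at hfix
    exact Subtype.ext (Subtype.ext hfix)
  have : Finite (Dual F W) := Module.finite_of_finite F
  have e : Dual F W ≃ₗ[F] W := .ofFinrankEq _ _ Subspace.dual_finrank_eq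
  have hcard : Nat.card {φ : Dual F W // φ ≠ 0} = Nat.card {w : W // w ≠ 0} :=
    Nat.card_congr (e.toEquiv.subtypeEquiv fun φ => by simp)
  obtain ⟨w, hw⟩ := (hΨ.bijective_of_nat_card_le hcard.le).2 ⟨_, restrict_ne_zero hf'⟩
  refine ⟨γ w, W.dualRestrict_ker_eq_dualAnnihilator ▸ ?_⟩
  exact LinearMap.sub_mem_ker_iff.2 (congrArg Subtype.val hw)

lemma exists_contragredient_eq_add_of_eq_add [Finite F] [Finite V]
    (hf : f ∉ W.dualAnnihilator) (hf' : f' ∉ W.dualAnnihilator)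
    (h : ∃ g, θ g = 1 ∧ contragredient F V (ι g) f = f + b) :
    ∃ g, θ g = 1 ∧ contragredient F V (ι g) f' = f' + b := by
  obtain ⟨g, hg, hgf⟩ := h
  have hb : b ∈ W.dualAnnihilator := by simpa [hgf] using hI.contragredient_sub_mem hg f
  obtain ⟨s, hs⟩ := hI.exists_contragredient_sub_mem hf hf'
  refine ⟨s * g * s⁻¹, by simp [hg], ?_⟩
  let ρ := (contragredient F V).comp ι
  have hdiff : ρ s⁻¹ f' - f ∈ W.dualAnnihilator := by
    have : f - ρ s⁻¹ f' ∈ W.dualAnnihilator := by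
      have := hI.contragredient_eq_self s⁻¹ hs
      rw [map_sub, ← LinearEquiv.mul_apply, ← map_mul, ← map_mul, inv_mul_cancel, map_one,
        map_one] at this
      exact this ▸ hs
    exact sub_mem_comm_iff.1 this
  have hshift : ρ g (ρ s⁻¹ f') = ρ s⁻¹ f' + b := by
    have := hI.contragredient_eq_self g hdiff
    rw [map_sub, hgf, sub_eq_iff_eq_add] at this
    exact this.trans (by abel)
  calc ρ (s * g * s⁻¹) f' = ρ s (ρ g (ρ s⁻¹ f')) := by simp only [map_mul, LinearEquiv.mul_apply]
    _ = f' + b := by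
      rw [hshift, map_add, ← LinearEquiv.mul_apply, ← map_mul, mul_inv_cancel, map_one]
      exact congrArg (f' + ·) (hI.contragredient_eq_self s hb)

lemma exists_contragredient_eq_add [Finite F] [Finite V]
    (hf : f ∉ W.dualAnnihilator) (hb : b ∈ W.dualAnnihilator) :
    ∃ g, θ g = 1 ∧ contragredient F V (ι g) f = f + b := by
  let A : Submodule F (Dual F V) :=
    { carrier := {b | ∃ g, θ g = 1 ∧ contragredient F V (ι g) f = f + b}
      zero_mem' := ⟨1, map_one θ, by simp⟩
      add_mem' := by
        rintro b b' ⟨g, hg, hb⟩ ⟨g', hg', hb'⟩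
        have hb'W : b' ∈ W.dualAnnihilator := by simpa [hb'] using hI.contragredient_sub_mem hg' f
        refine ⟨g * g', by rw [map_mul, hg, hg', one_mul], ?_⟩
        rw [map_mul, map_mul, LinearEquiv.mul_apply, hb', map_add, hb,
          hI.contragredient_eq_self g hb'W, add_assoc]
      smul_mem' := by
        rintro c b ⟨g, hg, hb⟩
        rcases eq_or_ne c 0 with rfl | hc
        · exact ⟨1, map_one θ, by simp⟩
        refine hI.exists_contragredient_eq_add_of_eq_add (f := c • f)
          (fun h => hf ((Submodule.smul_mem_iff _ hc).1 h)) hf ⟨g, hg, ?_⟩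
        rw [map_smul, hb, smul_add] }
  have hA : A.dualCoannihilator ≤ W := by
    intro v hv
    by_contra hvW
    obtain ⟨w, hw, hfw⟩ : ∃ w ∈ W, f w ≠ 0 := by
      simpa [Submodule.mem_dualAnnihilator] using hf
    obtain ⟨g, hg, hgv⟩ := hI.exists_apply_eq_add hvW hw
    have hmem : contragredient F V (ι g⁻¹) f - f ∈ A := ⟨g⁻¹, by simp [hg], by abel⟩
    have := (Submodule.mem_dualCoannihilator v).1 hv _ hmem
    rw [LinearMap.sub_apply, contragredient_apply, map_inv, inv_inv, hgv, map_add,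
      add_sub_cancel_left] at this
    exact hfw this
  have := Submodule.dualAnnihilator_anti hA
  rw [Subspace.dualCoannihilator_dualAnnihilator_eq] at this
  exact this hb

theorem isSemiregularOff [Finite F] [Finite V] :
    IsSemiregularOff W.dualAnnihilator ((contragredient F V).comp ι) θ where
  apply_eq_self g _ := hI.contragredient_eq_self g
  apply_sub_mem hg := hI.contragredient_sub_mem hg
  eq_one_of_sub_mem hf := hI.eq_one_of_contragredient_sub_mem hf
  exists_apply_eq hf hf' := by
    obtain ⟨s, hs⟩ := hI.exists_contragredient_sub_mem hf hf'
    obtain ⟨g, -, hg⟩ := hI.exists_contragredient_eq_add (hI.contragredient_notMem s hf)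
      (neg_sub (contragredient F V (ι s) _) _ ▸ Submodule.neg_mem _ hs)
    exact ⟨g * s, by simpa using hg⟩

end IsInertial

end Inertia

/-! ### Subgroups containing a Singer cycle -/

section Singer

variable {F E : Type*} [Field F] [Field E] [Algebra F E]

lemma mul_surjective_dual [FiniteDimensional F E] {f : Dual F E} (hf : f ≠ 0) :
    Function.Surjective ((LinearMap.mul F E).compr₂ f) := by
  refine (LinearMap.injective_iff_surjective_of_finrank_eq_finrank
    Subspace.dual_finrank_eq.symm).1 ((injective_iff_map_eq_zero _).2 fun y hy => ?_)
  by_contra hy0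
  refine hf (LinearMap.ext fun v => ?_)
  have := LinearMap.congr_fun hy (y⁻¹ * v)
  rwa [LinearMap.compr₂_apply, LinearMap.mul_apply', mul_inv_cancel_left₀ hy0] at this

/-- The multipliers `y` with `y * C ⊆ C`, where `C = {c | f (c * W) = 0}`, form a subalgebra; as the
degree is prime and `C` is proper and nonzero, they are the scalars. -/
lemma mem_span_singleton_of_forall_mul [FiniteDimensional F E] (hp : (finrank F E).Prime)
    {W : Submodule F E} (hWbot : W ≠ ⊥) (hWtop : W ≠ ⊤) {f f' : Dual F E} (hf : f ≠ 0)
    (h : ∀ c ≠ 0, (∀ w ∈ W, f (c * w) = 0) → ∀ w ∈ W, f' (c * w) = 0) : f' ∈ F ∙ f := by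
  obtain ⟨y, rfl⟩ := mul_surjective_dual hf f'
  let C : Submodule F E := W.dualAnnihilator.comap ((LinearMap.mul F E).compr₂ f)
  have mem_C {c : E} : c ∈ C ↔ ∀ w ∈ W, f (c * w) = 0 := Submodule.mem_dualAnnihilator _
  let S : Subalgebra F E := (C / C).toSubalgebra (Submodule.one_mem_div.2 le_rfl)
    fun a b ha hb => Submodule.mem_div_iff_forall_mul_mem.2 fun c hc => by
      rw [mul_assoc]
      exact Submodule.mem_div_iff_forall_mul_mem.1 ha _
        (Submodule.mem_div_iff_forall_mul_mem.1 hb c hc)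
  have hyS : y ∈ S := Submodule.mem_div_iff_forall_mul_mem.2 fun c hc => mem_C.2 fun w hw => by
    rcases eq_or_ne c 0 with rfl | hc0
    · simp
    · rw [mul_assoc]
      exact h c hc0 (mem_C.1 hc) w hw
  have := Subalgebra.isSimpleOrder_of_finrank_prime F E hp
  rcases eq_bot_or_eq_top S with hS | hS
  · obtain ⟨r, rfl⟩ := Algebra.mem_bot.1 (hS ▸ hyS)
    refine Submodule.mem_span_singleton.2 ⟨r, LinearMap.ext fun v => ?_⟩
    simp [← Algebra.smul_def]
  · exfalso
    obtain ⟨x, hx⟩ := exists_notMem_of_ne_top hWtop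
    obtain ⟨φ, hφx, hφW⟩ := exists_dual_eq_one hx
    obtain ⟨c, rfl⟩ := mul_surjective_dual hf φ
    have hc0 : c ≠ 0 := by rintro rfl; simp at hφx
    obtain ⟨w, hw, hw0⟩ := W.ne_bot_iff.1 hWbot
    refine hf (LinearMap.ext fun v => ?_)
    have hmem : v * w⁻¹ * c⁻¹ ∈ S := hS ▸ Algebra.mem_top
    have := mem_C.1 (Submodule.mem_div_iff_forall_mul_mem.1 hmem c hφW) w hw
    rwa [inv_mul_cancel_right₀ hc0, inv_mul_cancel_right₀ hw0] at this

/-- The vectors `m ∈ ker f` for which the transvection `v ↦ v + f v • m` lies in `H`. -/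
def transvectionDirections {V : Type*} [AddCommGroup V] [Module F V] (H : Subgroup (V ≃ₗ[F] V))
    (f : Dual F V) : AddSubgroup V where
  carrier := {m | f m = 0 ∧ ∃ h ∈ H, ∀ v, h v = v + f v • m}
  zero_mem' := ⟨map_zero f, 1, H.one_mem, by simp⟩
  add_mem' := by
    rintro m m' ⟨hm, h, hh, hv⟩ ⟨hm', h', hh', hv'⟩
    refine ⟨by simp [hm, hm'], h * h', H.mul_mem hh hh', fun v => ?_⟩
    simp only [LinearEquiv.mul_apply, hv, hv', map_add, map_smul, hm', smul_zero, add_zero,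
      smul_add]
    abel
  neg_mem' := by
    rintro m ⟨hm, h, hh, hv⟩
    exact ⟨by simp [hm], h⁻¹, H.inv_mem hh, fun v => h.symm_apply_eq.2 (by simp [hv, hm])⟩

lemma apply_mem_transvectionDirections {V : Type*} [AddCommGroup V] [Module F V]
    {H : Subgroup (V ≃ₗ[F] V)} {f : Dual F V} {m : V} (hm : m ∈ transvectionDirections H f)
    {g : V ≃ₗ[F] V} (hg : g ∈ H) (hfg : ∀ v, f (g v) = f v) :
    g m ∈ transvectionDirections H f := by
  obtain ⟨hm, h, hh, hv⟩ := hm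
  refine ⟨(hfg m).trans hm, g * h * g⁻¹, H.mul_mem (H.mul_mem hg hh) (H.inv_mem hg), fun v => ?_⟩
  change g (h (g.symm v)) = _
  rw [hv, map_add, map_smul, ← hfg (g.symm v), g.apply_symm_apply]

lemma IsInertial.isUnipotentRich {V I k : Type*} [AddCommGroup V] [Module F V] [Finite F]
    [Finite V] [Group I] [Field k] {W : Submodule F V} {ι : I →* (V ≃ₗ[F] V)} {θ : I →* kˣ}
    {H : Subgroup (V ≃ₗ[F] V)} (hI : IsInertial W ι θ) (hι : ∀ g, ι g ∈ H) :
    IsUnipotentRich H W := by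
  have sub_id_mem {g : I} (hg : θ g = 1) : (ι g : V →ₗ[F] V) - LinearMap.id ∈ unipotentLog H W :=
    ⟨⟨ι g, hι g, fun v => by simp⟩, fun v hv => sub_eq_zero.2 (hI.apply_eq_self hg hv),
      hI.apply_sub_mem g⟩
  refine ⟨fun hx hw => ?_, fun {f b} hf hb => ?_⟩
  · obtain ⟨g, hg, hgx⟩ := hI.exists_apply_eq_add hx hw
    exact ⟨_, sub_id_mem hg, by simp [hgx]⟩
  · obtain ⟨g, hg, hgf⟩ := hI.exists_contragredient_eq_add hf hb
    refine ⟨_, sub_id_mem (g := g⁻¹) (by rw [map_inv, hg, inv_one]), ?_⟩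
    rw [LinearMap.comp_sub, LinearMap.comp_id, sub_eq_iff_eq_add', ← hgf, map_inv]
    rfl

variable {H : Subgroup (E ≃ₗ[F] E)} (hS : ∀ c : Eˣ, DistribMulAction.toLinearEquiv F E c ∈ H)
include hS

lemma exists_mem_det_eq [Finite F] [Finite E] (c : Fˣ) : ∃ h ∈ H, LinearEquiv.det h = c := by
  have : FiniteDimensional F E := Module.Finite.of_finite
  obtain ⟨x, hx⟩ := FiniteField.unitsMap_norm_surjective F E c
  refine ⟨_, hS x, Units.ext ?_⟩
  rw [← hx, LinearEquiv.coe_det, Units.coe_map, Algebra.norm_apply]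
  rfl

/-- The Jordan subspaces `(c * W)^⊥` containing `f` intersect in the line of `f`. -/
lemma isJordan_span_singleton_dual [FiniteDimensional F E] [Finite (Dual F E)]
    (hp : (finrank F E).Prime) {W : Submodule F E} (hWbot : W ≠ ⊥) (hWtop : W ≠ ⊤)
    (hW : IsJordan (H.map (contragredient F E)) W.dualAnnihilator) {f : Dual F E} (hf : f ≠ 0) :
    IsJordan (H.map (contragredient F E)) (F ∙ f) := by
  suffices F ∙ f = jordanClosure (H.map (contragredient F E)) (F ∙ f) from
    this ▸ isJordan_jordanClosure
  refine le_antisymm le_jordanClosure fun f' hf' =>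
    mem_span_singleton_of_forall_mul hp hWbot hWtop hf fun c hc hcf => ?_
  let h := DistribMulAction.toLinearEquiv F E (Units.mk0 c hc)
  have hJ : IsJordan (H.map (contragredient F E)) (W.map (h : E →ₗ[F] E)).dualAnnihilator :=
    map_contragredient_dualAnnihilator h W ▸ hW.map ⟨h, hS _, rfl⟩
  have hle : F ∙ f ≤ (W.map (h : E →ₗ[F] E)).dualAnnihilator := by
    rw [Submodule.span_singleton_le_iff_mem, Submodule.mem_dualAnnihilator]
    rintro _ ⟨w, hw, rfl⟩
    exact hcf w hw
  exact fun w hw =>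
    (Submodule.mem_dualAnnihilator f').1 (jordanClosure_le hJ hle hf') _ ⟨w, hw, rfl⟩

variable {W : Submodule F E} {I k : Type*} [Group I] [Field k] {ι : I →* (E ≃ₗ[F] E)}
  {θ : I →* kˣ}

/-- Conjugating by `c` shows that the inertia group of `c * W` moves `m₀` inside the directions. -/
lemma IsInertial.mul_mem_transvectionDirections (hI : IsInertial W ι θ) (hι : ∀ g, ι g ∈ H)
    {f : Dual F E} {m₀ : E} (hm₀ : m₀ ≠ 0) (hm₀T : m₀ ∈ transvectionDirections H f) {c : Eˣ}
    (hcf : ∀ w ∈ W, f (c * w) = 0) {w : E} (hw : w ∈ W) :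
    c * w ∈ transvectionDirections H f := by
  let s := DistribMulAction.toLinearEquiv F E c
  have conj_mem (g : I) : c * ι g (c⁻¹ * m₀) ∈ transvectionDirections H f := by
    have hmem : s * ι g * s⁻¹ ∈ H := H.mul_mem (H.mul_mem (hS c) (hι g)) (H.inv_mem (hS c))
    refine apply_mem_transvectionDirections hm₀T hmem fun v => ?_
    have := hcf _ (hI.apply_sub_mem g (c⁻¹ * v))
    rwa [mul_sub, c.mul_inv_cancel_left, map_sub, sub_eq_zero] at this
  by_cases hmW : c⁻¹ * m₀ ∈ W
  · rcases eq_or_ne w 0 with rfl | hw0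
    · rw [mul_zero]
      exact zero_mem _
    · obtain ⟨g, rfl⟩ := hI.exists_apply_eq hmW (mul_ne_zero c⁻¹.ne_zero hm₀) hw hw0
      exact conj_mem g
  · obtain ⟨g, -, hg⟩ := hI.exists_apply_eq_add hmW hw
    have := sub_mem (conj_mem g) hm₀T
    rwa [hg, mul_add, c.mul_inv_cancel_left, add_sub_cancel_left] at this

variable [Finite F] [Finite E] (hp : (finrank F E).Prime)
include hp

lemma exists_map_eq_of_isInertial (hWbot : W ≠ ⊥) (hWtop : W ≠ ⊤) (hI : IsInertial W ι θ)
    (hι : ∀ g, ι g ∈ H) {W' : Submodule F E} (hW' : finrank F W' = finrank F W) :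
    ∃ h ∈ H, W.map (h : E →ₗ[F] E) = W' := by
  have : FiniteDimensional F E := Module.Finite.of_finite
  have : Finite (Dual F E) := Module.finite_of_finite F
  have hιd (g : I) : (contragredient F E).comp ι g ∈ H.map (contragredient F E) :=
    ⟨_, hι g, rfl⟩
  have hann : W.dualAnnihilator ≠ ⊤ := fun h =>
    hWbot (Subspace.dualAnnihilator_inj.1 (h.trans Submodule.dualAnnihilator_bot.symm))
  have hline (f : Dual F E) (hf : f ≠ 0) := isJordan_span_singleton_dual hS hp hWbot hWtop
    (hI.isSemiregularOff.isJordan hιd) hf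
  have hbot : IsJordan (H.map (contragredient F E)) ⊥ :=
    isJordan_bot (by rw [Subspace.dual_finrank_eq]; exact hp.one_lt) hline
  have hfin := Subspace.finrank_add_finrank_dualAnnihilator_eq W
  have hfin' := Subspace.finrank_add_finrank_dualAnnihilator_eq W'
  obtain ⟨_, ⟨h, hh, rfl⟩, hmap⟩ := hI.isSemiregularOff.exists_map_eq_of_finrank_eq hιd hann hbot
    hline rfl (Y' := W'.dualAnnihilator) (by omega)
  rw [map_contragredient_dualAnnihilator] at hmap
  exact ⟨h, hh, Subspace.dualAnnihilator_inj.1 hmap⟩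

lemma hasTransvection_of_isInertial (hWbot : W ≠ ⊥) (hWtop : W ≠ ⊤) (hI : IsInertial W ι θ)
    (hι : ∀ g, ι g ∈ H) : HasTransvection H := by
  have : FiniteDimensional F E := Module.Finite.of_finite
  refine hasTransvection_of_isUnipotentRich (hI.isUnipotentRich hι) hWbot hWtop
    (fun hW1 hW2 => ?_) fun W' => exists_map_eq_of_isInertial hS hp hWbot hWtop hI hι
  have hdvd : finrank F W ∣ finrank F E := ⟨2, by omega⟩
  have := hp.pos
  rcases (Nat.dvd_prime hp).1 hdvd with h | h <;> omega

omit [Finite F] in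
lemma mem_transvectionDirections_of_apply_eq_zero (hWbot : W ≠ ⊥) (hWtop : W ≠ ⊤)
    (hI : IsInertial W ι θ) (hι : ∀ g, ι g ∈ H) {f : Dual F E} (hf : f ≠ 0) {m₀ m : E}
    (hm₀ : m₀ ≠ 0) (hm₀T : m₀ ∈ transvectionDirections H f) (hm : f m = 0) :
    m ∈ transvectionDirections H f := by
  have : FiniteDimensional F E := Module.Finite.of_finite
  let S : Submodule F E := Submodule.span F {x | ∃ c : Eˣ, (∀ w ∈ W, f (c * w) = 0) ∧
    ∃ w ∈ W, c * w = x}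
  have hST (m : E) (hmS : m ∈ S) : m ∈ transvectionDirections H f := by
    induction hmS using Submodule.closure_induction with
    | zero => exact zero_mem _
    | add x y _ _ hx hy => exact add_mem hx hy
    | smul_mem r x hx =>
      obtain ⟨c, hcf, w, hw, rfl⟩ := hx
      rw [← mul_smul_comm]
      exact hI.mul_mem_transvectionDirections hS hι hm₀ hm₀T hcf (W.smul_mem r hw)
  refine hST m (by_contra fun hmS => ?_)
  obtain ⟨f', hf'm, hf'S⟩ := exists_dual_eq_one hmS
  obtain ⟨r, rfl⟩ := Submodule.mem_span_singleton.1 <|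
    mem_span_singleton_of_forall_mul hp hWbot hWtop hf fun c hc hcf w hw =>
      (Submodule.mem_dualAnnihilator f').1 hf'S _
        (Submodule.subset_span ⟨Units.mk0 c hc, hcf, w, hw, rfl⟩)
  simp [hm] at hf'm

theorem eq_top_of_isInertial (hWbot : W ≠ ⊥) (hWtop : W ≠ ⊤) (hI : IsInertial W ι θ)
    (hι : ∀ g, ι g ∈ H) : H = ⊤ := by
  have : FiniteDimensional F E := Module.Finite.of_finite
  refine eq_top_of_transvections_subset ?_ (exists_mem_det_eq hS)
  rintro _ ⟨f, m, hfm, rfl⟩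
  obtain ⟨f₀, m₀, hf₀, hm₀, hfm₀, hT⟩ := hasTransvection_of_isInertial hS hp hWbot hWtop hI hι
  obtain ⟨c, rfl⟩ := mul_surjective_dual hf₀ f
  rcases eq_or_ne c 0 with rfl | hc
  · have : LinearEquiv.transvection hfm = 1 := by
      ext v
      simp
    exact this ▸ H.one_mem
  obtain ⟨-, h, hh, hhv⟩ := mem_transvectionDirections_of_apply_eq_zero hS hp hWbot hWtop hI hι hf₀
    hm₀ ⟨hfm₀, hT⟩ (m := c * m) hfm
  let s := DistribMulAction.toLinearEquiv F E (Units.mk0 c hc)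
  have hs : s ∈ H := hS _
  have hconj : LinearEquiv.transvection hfm = s⁻¹ * h * s := by
    ext v
    refine (s.symm_apply_eq.2 ?_).symm
    change h (c * v) = c * (v + f₀ (c * v) • m)
    rw [hhv, mul_add, mul_smul_comm]
  exact hconj ▸ H.mul_mem (H.mul_mem (H.inv_mem hs) hh) hs

end Singer

/-! ### Linearized polynomials -/

/-- The `q`-linearized polynomial `c₀ x + c₁ x^q + ⋯ + cₙ x^(qⁿ)`. -/
noncomputable def linearized {A : Type*} [CommRing A] (q n : ℕ) (c : ℕ → A) : A[X] :=
  ∑ i ∈ Finset.range (n + 1), C (c i) * X ^ q ^ i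

section Linearized

variable {A B : Type*} [CommRing A] [CommRing B] {q n : ℕ} {c : ℕ → A}

lemma eval_linearized (x : A) :
    (linearized q n c).eval x = ∑ i ∈ Finset.range (n + 1), c i * x ^ q ^ i := by
  simp [linearized, eval_finsetSum]

lemma map_linearized (φ : A →+* B) : (linearized q n c).map φ = linearized q n (φ ∘ c) := by
  simp [linearized, Polynomial.map_sum]

lemma derivative_linearized (hq : (q : A) = 0) : derivative (linearized q n c) = C (c 0) := by
  rw [linearized, derivative_sum, Finset.sum_range_succ', Finset.sum_eq_zero fun i _ => ?_]
  · simp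
  · simp [derivative_X_pow, hq]

lemma separable_linearized (hq : (q : A) = 0) (hc : IsUnit (c 0)) :
    (linearized q n c).Separable := by
  rw [separable_def, derivative_linearized hq]
  exact isCoprime_one_right.of_isCoprime_of_dvd_right (isUnit_C.2 hc).dvd

lemma degree_sum_range_linearized_lt (hq : 1 < q) (n : ℕ) :
    (∑ i ∈ Finset.range n, C (c i) * X ^ q ^ i).degree < ↑(q ^ n) := by
  refine (degree_sum_le _ _).trans_lt ((Finset.sup_lt_iff (WithBot.bot_lt_coe _)).2 fun i hi => ?_)
  exact (degree_C_mul_X_pow_le _ _).trans_lt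
    (WithBot.coe_lt_coe.2 (Nat.pow_lt_pow_right hq (Finset.mem_range.1 hi)))

lemma monic_linearized (hq : 1 < q) (hc : c n = 1) : (linearized q n c).Monic := by
  rw [linearized, Finset.sum_range_succ, add_comm, hc, C_1, one_mul]
  exact monic_X_pow_add (degree_sum_range_linearized_lt hq n)

lemma natDegree_linearized (hq : 1 < q) (hc : c n ≠ 0) :
    (linearized q n c).natDegree = q ^ n := by
  refine natDegree_eq_of_degree_eq_some ?_
  rw [linearized, Finset.sum_range_succ, degree_add_eq_right_of_degree_lt] <;>
    rw [degree_C_mul_X_pow _ hc]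
  exact degree_sum_range_linearized_lt hq n

end Linearized

section LinearizedMap

variable (F : Type*) [Field F] [Fintype F] {A : Type*} [CommRing A] [Algebra F A]

local notation "q" => Fintype.card F

lemma card_cast_eq_zero (A : Type*) [CommRing A] [Algebra F A] : ((q : ℕ) : A) = 0 := by
  rw [← map_natCast (algebraMap F A), FiniteField.cast_card_eq_zero, map_zero]

/-- Evaluation of a linearized polynomial, as an `F`-linear map where `q = |F|`. -/
noncomputable def linearizedMap (n : ℕ) (c : ℕ → A) : A →ₗ[F] A :=
  ∑ i ∈ Finset.range (n + 1),
    LinearMap.mulLeft F (c i) ∘ₗ (FiniteField.frobeniusAlgHom F A ^ i).toLinearMap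

lemma linearizedMap_apply (n : ℕ) (c : ℕ → A) (x : A) :
    linearizedMap F n c x = (linearized q n c).eval x := by
  simp [linearizedMap, eval_linearized, AlgHom.coe_pow, FiniteField.coe_frobeniusAlgHom,
    pow_iterate, -FiniteField.frobeniusAlgHom_apply]

lemma linearized_comp_X_add_C (n : ℕ) (c : ℕ → A) (w : A) :
    (linearized q n c).comp (X + C w) = linearized q n c + C ((linearized q n c).eval w) := by
  have eval_eq (p : A[X]) : linearizedMap F n (C ∘ c) p = (linearized q n c).comp p := by
    rw [linearizedMap_apply, ← map_linearized, eval_map]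
    rfl
  rw [← eval_eq, map_add, eval_eq, eval_eq, comp_X, comp_C]

end LinearizedMap

section Pencil

variable {F A B : Type*} [Field F] [CommRing A] [Algebra F A]

/-- The coefficients of `a₁ x^q + ⋯ + aₙ x^(qⁿ) + T x`. -/
def pencilCoeff (a : ℕ → F) (T : A) : ℕ → A :=
  Function.update (algebraMap F A ∘ a) 0 T

@[simp]
lemma pencilCoeff_zero (a : ℕ → F) (T : A) : pencilCoeff a T 0 = T :=
  Function.update_self ..

lemma pencilCoeff_of_ne_zero (a : ℕ → F) (T : A) {i : ℕ} (hi : i ≠ 0) :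
    pencilCoeff a T i = algebraMap F A (a i) :=
  Function.update_of_ne hi ..

lemma pencilCoeff_eq_one {n : ℕ} {a : ℕ → F} (hn : n ≠ 0) (ha : a n = 1) (T : A) :
    pencilCoeff a T n = 1 := by
  rw [pencilCoeff_of_ne_zero a T hn, ha, map_one]

variable [Fintype F] [CommRing B] [Algebra F B]

local notation "q" => Fintype.card F

/-- The polynomial `a₁ x^q + ⋯ + aₙ x^(qⁿ) + T x`, where `q = |F|`; the value `a 0` is ignored. -/
noncomputable def pencil (n : ℕ) (a : ℕ → F) (T : A) : A[X] :=
  linearized q n (pencilCoeff a T)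

lemma map_pencil (n : ℕ) (a : ℕ → F) (T : A) (φ : A →ₐ[F] B) :
    (pencil n a T).map (φ : A →+* B) = pencil n a (φ T) := by
  rw [pencil, map_linearized, pencilCoeff, Function.comp_update, ← Function.comp_assoc]
  simp [pencil, pencilCoeff, Function.comp_def]

lemma map_algebraMap_pencil [Algebra A B] [IsScalarTower F A B] (n : ℕ) (a : ℕ → F) (T : A) :
    (pencil n a T).map (algebraMap A B) = pencil n a (algebraMap A B T) :=
  map_pencil n a T (IsScalarTower.toAlgHom F A B)

lemma map_eval_pencil (n : ℕ) (a : ℕ → F) (T : A) (φ : A →ₐ[F] B) (x : A) :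
    φ ((pencil n a T).eval x) = (pencil n a (φ T)).eval (φ x) := by
  rw [← map_pencil, eval_map, ← RingHom.coe_coe φ, eval₂_hom]

lemma derivative_pencil (n : ℕ) (a : ℕ → F) (T : A) : derivative (pencil n a T) = C T := by
  rw [pencil, derivative_linearized (card_cast_eq_zero F A), pencilCoeff_zero]

variable {n : ℕ} {a : ℕ → F}

lemma monic_pencil (hn : n ≠ 0) (ha : a n = 1) (T : A) : (pencil n a T).Monic :=
  monic_linearized Fintype.one_lt_card (pencilCoeff_eq_one hn ha T)

lemma natDegree_pencil [Nontrivial A] (hn : n ≠ 0) (ha : a n = 1) (T : A) :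
    (pencil n a T).natDegree = q ^ n :=
  natDegree_linearized Fintype.one_lt_card (by rw [pencilCoeff_eq_one hn ha T]; exact one_ne_zero)

lemma separable_pencil (n : ℕ) (a : ℕ → F) {T : A} (hT : IsUnit T) : (pencil n a T).Separable :=
  separable_linearized (card_cast_eq_zero F A) (by rwa [pencilCoeff_zero])

variable (n a) in
/-- The roots of `a₁ x^q + ⋯ + aₙ x^(qⁿ) + T x` in `A`. -/
noncomputable def rootSpace (T : A) : Submodule F A :=
  LinearMap.ker (linearizedMap F n (pencilCoeff a T))

lemma mem_rootSpace {T x : A} : x ∈ rootSpace n a T ↔ (pencil n a T).eval x = 0 := by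
  rw [rootSpace, LinearMap.mem_ker, linearizedMap_apply, pencil]

lemma map_mem_rootSpace {T : A} {φ : A →ₐ[F] B} (hφ : Function.Injective φ) {x : A} :
    φ x ∈ rootSpace n a (φ T) ↔ x ∈ rootSpace n a T := by
  rw [mem_rootSpace, mem_rootSpace, ← map_eval_pencil, map_eq_zero_iff φ hφ]

end Pencil

/-! ### Hensel's lemma over power series -/

section Hensel

lemma exists_homogenization {R : Type*} [CommRing R] (S : R[X]) (m : R) :
    ∃ S' : R[X], S'.natDegree ≤ S.natDegree ∧
      ∀ u v : R, u * v = 1 → S'.eval u = u ^ S.natDegree * S.eval (m * v) := by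
  refine ⟨∑ j ∈ Finset.range (S.natDegree + 1), C (S.coeff j * m ^ j) * X ^ (S.natDegree - j),
    natDegree_sum_le_of_forall_le _ _ fun j _ =>
      (natDegree_C_mul_X_pow_le _ _).trans (Nat.sub_le _ _), fun u v huv => ?_⟩
  rw [eval_finsetSum, eval_eq_sum_range (p := S), Finset.mul_sum]
  refine Finset.sum_congr rfl fun j hj => ?_
  have hu : u ^ S.natDegree * v ^ j = u ^ (S.natDegree - j) := by
    rw [← Nat.sub_add_cancel (Finset.mem_range_succ_iff.1 hj), pow_add, mul_assoc, ← mul_pow, huv,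
      one_pow, mul_one, Nat.add_sub_cancel]
  rw [eval_mul, eval_C, eval_pow, eval_X, ← hu]
  ring

lemma exists_unit_isRoot_of_henselianRing {R : Type*} [CommRing R] [Nontrivial R] {I : Ideal R}
    [HenselianRing R I] {m b : R} (hm : m ∈ I) (hb : IsUnit b) {N : ℕ} {S : R[X]}
    (hS : S.natDegree ≤ N) :
    ∃ u : Rˣ, (u : R) ^ (N + 1) * (u + b) + m * S.eval ↑u = 0 := by
  let Q : R[X] := X ^ (N + 2) + (C b * X ^ (N + 1) + C m * S)
  have hdeg : (C b * X ^ (N + 1) + C m * S).natDegree < N + 2 :=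
    Nat.lt_succ_of_le (natDegree_add_le_of_degree_le (natDegree_C_mul_X_pow_le _ _)
      ((natDegree_C_mul_le _ _).trans (by omega)))
  have hQ : Q.Monic :=
    monic_X_pow_add (degree_le_natDegree.trans_lt (WithBot.coe_lt_coe.2 hdeg))
  have eval_Q (x : R) : Q.eval x = x ^ (N + 1) * (x + b) + m * S.eval x := by
    simp only [Q, eval_add, eval_mul, eval_pow, eval_X, eval_C]
    ring
  have eval_Q' : (derivative Q).eval (-b) = (-b) ^ (N + 1) + m * (derivative S).eval (-b) := by
    simp only [Q, derivative_add, derivative_mul, derivative_X_pow, derivative_C, eval_add,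
      eval_mul, eval_pow, eval_X, eval_C, zero_mul, zero_add, Nat.add_sub_cancel]
    push_cast
    ring
  have hQI : Q.eval (-b) ∈ I := by
    simpa [eval_Q] using I.mul_mem_right _ hm
  have hQ'I : IsUnit (Ideal.Quotient.mk I ((derivative Q).eval (-b))) := by
    rw [eval_Q', map_add, Ideal.Quotient.eq_zero_iff_mem.2 (I.mul_mem_right _ hm), add_zero]
    exact (hb.neg.pow _).map _
  obtain ⟨u, hu, hub⟩ := HenselianRing.is_henselian Q hQ _ hQI hQ'I
  have := isLocalHom_of_le_jacobson_bot I HenselianRing.jac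
  have huI : IsUnit (Ideal.Quotient.mk I u) := Ideal.Quotient.eq.2 hub ▸ hb.neg.map _
  obtain ⟨u, rfl⟩ := huI.of_map
  exact ⟨u, (eval_Q _).symm.trans hu⟩

/-- Writing `P = m + bX + X² S`, the substitution `X = m / U` turns the equation `P = 0` into a
monic one whose reduction has the simple root `-b`. -/
lemma exists_isRoot_mem_of_henselianRing {R : Type*} [CommRing R] [Nontrivial R] {I : Ideal R}
    [HenselianRing R I] {P : R[X]} (h0 : P.coeff 0 ∈ I) (h1 : IsUnit (P.coeff 1)) :
    ∃ y ∈ I, P.IsRoot y := by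
  set m := P.coeff 0
  set b := P.coeff 1
  let S := P.divX.divX
  have eval_P (x : R) : P.eval x = m + x * (b + x * S.eval x) := by
    conv_lhs => rw [← P.divX_mul_X_add, ← P.divX.divX_mul_X_add]
    simp only [eval_add, eval_mul, eval_X, eval_C, coeff_divX]
    ring
  obtain ⟨S', hS', eval_S'⟩ := exists_homogenization S m
  set N := S.natDegree
  obtain ⟨u, hu⟩ := exists_unit_isRoot_of_henselianRing h0 h1 hS'
  refine ⟨m * ↑u⁻¹, I.mul_mem_right _ h0, (u.isUnit.pow (N + 2)).mul_right_eq_zero.1 ?_⟩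
  rw [eval_S' u _ u.mul_inv] at hu
  rw [eval_P]
  linear_combination m * hu + (m * b * (u : R) ^ (N + 1) + m ^ 2 * u ^ N * S.eval (m * ↑u⁻¹) *
    (u * ↑u⁻¹ + 1)) * u.mul_inv

variable {k : Type*} [Field k]

lemma constantCoeff_eval (g : k⟦X⟧[X]) (y : k⟦X⟧) :
    PowerSeries.constantCoeff (g.eval y) =
      (g.map PowerSeries.constantCoeff).eval (PowerSeries.constantCoeff y) := by
  rw [eval_map, eval₂_hom]

lemma isUnit_of_constantCoeff_ne_zero {y : k⟦X⟧} (h : PowerSeries.constantCoeff y ≠ 0) :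
    IsUnit y :=
  PowerSeries.isUnit_iff_constantCoeff.2 h.isUnit

lemma exists_eval_eq_zero_of_constantCoeff {g : k⟦X⟧[X]} {c : k}
    (h0 : (g.map PowerSeries.constantCoeff).eval c = 0)
    (h1 : (derivative (g.map PowerSeries.constantCoeff)).eval c ≠ 0) :
    ∃ y : k⟦X⟧, g.eval y = 0 ∧ PowerSeries.constantCoeff y = c := by
  obtain ⟨y, hyX, hy⟩ := exists_isRoot_mem_of_henselianRing (I := Ideal.span {PowerSeries.X})
    (P := taylor (PowerSeries.C c) g)
    (by rw [taylor_coeff_zero, Ideal.mem_span_singleton, PowerSeries.X_dvd_iff, constantCoeff_eval,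
      PowerSeries.constantCoeff_C, h0])
    (by
      rw [taylor_coeff_one]
      refine isUnit_of_constantCoeff_ne_zero ?_
      rwa [constantCoeff_eval, PowerSeries.constantCoeff_C, ← derivative_map])
  rw [Ideal.mem_span_singleton, PowerSeries.X_dvd_iff] at hyX
  exact ⟨y + PowerSeries.C c, by rwa [← taylor_eval], by simp [hyX]⟩

lemma exists_isUnit_eval_sub_eval {g : k⟦X⟧[X]} {y y' : k⟦X⟧}
    (h : PowerSeries.constantCoeff y = PowerSeries.constantCoeff y')
    (h1 : (derivative (g.map PowerSeries.constantCoeff)).eval (PowerSeries.constantCoeff y) ≠ 0) :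
    ∃ v : k⟦X⟧, IsUnit v ∧ g.eval y' - g.eval y = (y' - y) * v := by
  obtain ⟨κ, hκ⟩ := g.binomExpansion y (y' - y)
  refine ⟨(derivative g).eval y + κ * (y' - y), isUnit_of_constantCoeff_ne_zero ?_, ?_⟩
  · rw [map_add, constantCoeff_eval, map_mul, map_sub, h, sub_self, mul_zero, add_zero, ← h,
      ← derivative_map]
    exact h1
  · rw [add_sub_cancel] at hκ
    linear_combination hκ

lemma eq_of_eval_eq_zero_of_constantCoeff_eq {g : k⟦X⟧[X]} {y y' : k⟦X⟧}
    (h : PowerSeries.constantCoeff y = PowerSeries.constantCoeff y')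
    (h1 : (derivative (g.map PowerSeries.constantCoeff)).eval (PowerSeries.constantCoeff y) ≠ 0)
    (hy : g.eval y = 0) (hy' : g.eval y' = 0) : y' = y := by
  obtain ⟨v, hv, hsub⟩ := exists_isUnit_eval_sub_eval h h1
  rw [hy, hy', sub_zero, eq_comm, hv.mul_left_eq_zero] at hsub
  exact sub_eq_zero.1 hsub

/-- By Hensel, `g` already has as many roots in `k⟦X⟧` as its degree. -/
lemma exists_algebraMap_eq_of_aeval_eq_zero [IsAlgClosed k] {Ω : Type*} [Field Ω]
    [Algebra k⟦X⟧ Ω] [FaithfulSMul k⟦X⟧ Ω] {g : k⟦X⟧[X]} (hg : g.Monic)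
    (hsep : (g.map PowerSeries.constantCoeff).Separable) {x : Ω} (hx : aeval x g = 0) :
    ∃ y, algebraMap k⟦X⟧ Ω y = x ∧ g.eval y = 0 := by
  classical
  set φ := algebraMap k⟦X⟧ Ω
  set gb := g.map PowerSeries.constantCoeff
  have hroot {c : k} (hc : c ∈ gb.roots.toFinset) : gb.eval c = 0 :=
    (mem_roots'.1 (Multiset.mem_toFinset.1 hc)).2
  choose! r hr0 hrc using fun c (hc : c ∈ gb.roots.toFinset) =>
    exists_eval_eq_zero_of_constantCoeff (hroot hc)
      (hsep.eval₂_derivative_ne_zero (RingHom.id k) (hroot hc))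
  have hinj : Set.InjOn (φ ∘ r) gb.roots.toFinset := fun c hc c' hc' h => by
    rw [← hrc c hc, ← hrc c' hc', FaithfulSMul.algebraMap_injective k⟦X⟧ Ω h]
  have hne : g.map φ ≠ 0 := (hg.map φ).ne_zero
  have heq : gb.roots.toFinset.image (φ ∘ r) = (g.map φ).roots.toFinset := by
    refine Finset.eq_of_subset_of_card_le (fun z hz => ?_) ?_
    · obtain ⟨c, hc, rfl⟩ := Finset.mem_image.1 hz
      simp [hne, φ, hr0 c hc]
    · rw [Finset.card_image_of_injOn hinj, Multiset.toFinset_card_of_nodup (nodup_roots hsep),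
        IsAlgClosed.card_roots_eq_natDegree, hg.natDegree_map]
      exact (Multiset.toFinset_card_le _).trans ((card_roots' _).trans natDegree_map_le)
  have hx : x ∈ (g.map φ).roots.toFinset := by simpa [hne, φ] using hx
  obtain ⟨c, hc, rfl⟩ := Finset.mem_image.1 (heq ▸ hx)
  exact ⟨_, rfl, hr0 c hc⟩

end Hensel

/-! ### Polynomials vanishing on a finite additive subgroup -/

section SubgroupPoly

variable {A B : Type*} [CommRing A] [CommRing B]

/-- The monic polynomial whose roots are the elements of the finite additive subgroup `S`, each
with multiplicity one. -/
noncomputable def subgroupPoly (S : AddSubgroup A) [Finite S] : A[X] :=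
  ∏ w ∈ (S : Set A).toFinite.toFinset, (X - C w)

variable (S : AddSubgroup A) [Finite S]

lemma monic_subgroupPoly : (subgroupPoly S).Monic :=
  monic_prod_X_sub_C _ _

lemma natDegree_subgroupPoly [Nontrivial A] : (subgroupPoly S).natDegree = Nat.card S := by
  rw [subgroupPoly, natDegree_finsetProd_X_sub_C_eq_card, ← Nat.card_eq_card_finite_toFinset]
  rfl

variable {S} in
lemma subgroupPoly_comp_X_add_C {w : A} (hw : w ∈ S) :
    (subgroupPoly S).comp (X + C w) = subgroupPoly S := by
  rw [subgroupPoly, prod_comp]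
  refine Finset.prod_equiv (Equiv.subRight w) (fun v => ?_) fun v _ => ?_
  · simp [sub_eq_add_neg, S.add_mem_cancel_right (S.neg_mem hw)]
  · rw [sub_comp, X_comp, C_comp, Equiv.subRight_apply, C_sub]
    ring

lemma map_subgroupPoly (φ : A →+* B) (hφ : Function.Injective φ)
    [Finite (S.map (φ : A →+ B))] :
    (subgroupPoly S).map φ = subgroupPoly (S.map (φ : A →+ B)) := by
  rw [subgroupPoly, Polynomial.map_prod, subgroupPoly]
  refine Finset.prod_bij (fun w _ => φ w) (fun w hw => ?_) (fun v _ w _ h => hφ h)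
    (fun w hw => ?_) fun w _ => by simp
  · simpa [hφ.eq_iff] using hw
  · simpa using hw

variable {Ω : Type*} [CommRing Ω] [IsDomain Ω] [Algebra A Ω]

lemma aeval_subgroupPoly_eq_zero {x : Ω} :
    aeval x (subgroupPoly S) = 0 ↔ ∃ w ∈ S, algebraMap A Ω w = x := by
  simp [subgroupPoly, Finset.prod_eq_zero_iff, sub_eq_zero, eq_comm (a := x)]

variable [IsDomain A]

lemma eval_subgroupPoly_eq_zero {x : A} : (subgroupPoly S).eval x = 0 ↔ x ∈ S := by
  simp [subgroupPoly, eval_prod, Finset.prod_eq_zero_iff, sub_eq_zero]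

lemma subgroupPoly_dvd {P : A[X]} (hP : ∀ w ∈ S, P.eval w = 0) : subgroupPoly S ∣ P := by
  rcases eq_or_ne P 0 with rfl | hP0
  · exact dvd_zero _
  · refine (Multiset.prod_X_sub_C_dvd_iff_le_roots hP0 _).2 ((Multiset.le_iff_subset
      (Finset.nodup _)).2 fun w hw => (mem_roots hP0).2 (hP w ?_))
    simpa using hw

lemma exists_comp_subgroupPoly {P : A[X]} (hP : ∀ w ∈ S, P.comp (X + C w) = P) :
    ∃ Q : A[X], P = Q.comp (subgroupPoly S) := by
  induction hn : P.natDegree using Nat.strong_induction_on generalizing P with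
  | _ n ih =>
  obtain ⟨R, hR⟩ : subgroupPoly S ∣ P - C (P.eval 0) := subgroupPoly_dvd S fun w hw => by
    have := congrArg (eval 0) (hP w hw)
    rwa [eval_comp, eval_add, eval_X, eval_C, zero_add, ← sub_eq_zero, ← eval_C (a := P.eval 0),
      ← eval_sub] at this
  rcases eq_or_ne R 0 with rfl | hR0
  · exact ⟨C (P.eval 0), by rw [C_comp, ← sub_eq_zero, hR, mul_zero]⟩
  have hRinv (w : A) (hw : w ∈ S) : R.comp (X + C w) = R := by
    have := congrArg (comp · (X + C w)) hR
    rw [sub_comp, C_comp, mul_comp, hP w hw, subgroupPoly_comp_X_add_C hw, hR] at this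
    exact (mul_left_cancel₀ (monic_subgroupPoly S).ne_zero this).symm
  have hdeg : R.natDegree < n := by
    have := congrArg natDegree hR
    rw [natDegree_sub_C, (monic_subgroupPoly S).natDegree_mul' hR0, natDegree_subgroupPoly] at this
    have := Nat.card_pos (α := S)
    omega
  obtain ⟨Q, hQ⟩ := ih _ hdeg hRinv rfl
  refine ⟨C (P.eval 0) + X * Q, ?_⟩
  rw [add_comp, C_comp, mul_comp, X_comp, ← hQ, ← hR, add_sub_cancel]

lemma monic_of_comp_subgroupPoly_monic {Q : A[X]} (hQ : (Q.comp (subgroupPoly S)).Monic) :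
    Q.Monic := by
  rwa [Monic, leadingCoeff_comp (by rw [natDegree_subgroupPoly]; exact Nat.card_pos.ne'),
    (monic_subgroupPoly S).leadingCoeff, one_pow, mul_one] at hQ

lemma subgroupPoly_comp_X_sub_C (a : A) :
    (subgroupPoly S).comp (X - C a) = subgroupPoly S - C ((subgroupPoly S).eval a) := by
  set h := subgroupPoly S
  have hm : (h.comp (X - C a)).Monic := (monic_subgroupPoly S).comp_X_sub_C a
  obtain ⟨Q, hQ⟩ := exists_comp_subgroupPoly S (P := h.comp (X - C a)) fun w hw => by
    rw [comp_assoc, sub_comp, X_comp, C_comp, add_sub_right_comm, ← X_comp (p := X - C a),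
      ← C_comp (p := X - C a) (a := w), ← add_comp, ← comp_assoc, subgroupPoly_comp_X_add_C hw,
      X_comp]
  have hQ1 : Q.natDegree = 1 := by
    have := congrArg natDegree hQ
    rw [natDegree_comp, natDegree_comp, natDegree_X_sub_C, natDegree_subgroupPoly, mul_one] at this
    exact (Nat.eq_of_mul_eq_mul_right Nat.card_pos ((one_mul _).trans this)).symm
  have hQm : Q.Monic := monic_of_comp_subgroupPoly_monic S (hQ ▸ hm)
  have hQeq : Q = X + C (Q.coeff 0) := hQm.eq_X_add_C hQ1
  have hQ0 : Q.coeff 0 = -h.eval a := by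
    have := congrArg (eval a) hQ
    rw [hQeq] at this
    have h0 := (eval_subgroupPoly_eq_zero S).2 S.zero_mem
    simp only [eval_comp, eval_sub, eval_X, eval_C, sub_self, add_comp, X_comp, C_comp,
      eval_add] at this
    linear_combination h0 - this
  rw [hQ, hQeq, add_comp, X_comp, C_comp, hQ0, C_neg, sub_eq_add_neg]

lemma eval_sub_subgroupPoly (x a : A) :
    (subgroupPoly S).eval (x - a) = (subgroupPoly S).eval x - (subgroupPoly S).eval a := by
  have := congrArg (eval x) (subgroupPoly_comp_X_sub_C S a)
  simpa using this

omit [IsDomain A] in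
lemma aeval_sub_subgroupPoly [FaithfulSMul A Ω] (x y : Ω) :
    aeval (x - y) (subgroupPoly S) = aeval x (subgroupPoly S) - aeval y (subgroupPoly S) := by
  have : Finite (S.map (algebraMap A Ω : A →+ Ω)) := (S : Set A).toFinite.image _
  simp only [← eval_map_algebraMap,
    map_subgroupPoly S (algebraMap A Ω) (FaithfulSMul.algebraMap_injective A Ω),
    eval_sub_subgroupPoly]

end SubgroupPoly

section Eisenstein

variable {R : Type*} [CommRing R] {π u : R} {Z : Finset R}

/-- The polynomial `X^|Z| - π u ∏ (1 - z X)`, which is Eisenstein at the prime `π` if `u` is a unit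
and `0 ∈ Z`. It is satisfied by `π / y` if `∏ (y - π z) = π^(|Z| - 1) u⁻¹`. -/
noncomputable def eisensteinPoly (π u : R) (Z : Finset R) : R[X] :=
  X ^ Z.card - C (π * u) * ∏ z ∈ Z, (1 - C z * X)

lemma degree_C_mul_prod_one_sub_lt (h0 : 0 ∈ Z) :
    (C (π * u) * ∏ z ∈ Z, (1 - C z * X)).degree < Z.card := by
  classical
  have hZ : 0 < Z.card := Finset.card_pos.2 ⟨0, h0⟩
  rw [← Finset.mul_prod_erase Z _ h0, C_0, zero_mul, sub_zero, one_mul]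
  refine degree_le_natDegree.trans_lt (WithBot.coe_lt_coe.2 ?_)
  calc (C (π * u) * ∏ z ∈ Z.erase 0, (1 - C z * X)).natDegree
      ≤ ∑ z ∈ Z.erase 0, (1 - C z * X).natDegree :=
        (natDegree_C_mul_le _ _).trans (natDegree_prod_le _ _)
    _ ≤ ∑ _z ∈ Z.erase 0, 1 := by
        refine Finset.sum_le_sum fun z _ => (natDegree_sub_le _ _).trans (max_le ?_ ?_)
        · simp
        · exact (natDegree_C_mul_le _ _).trans natDegree_X_le
    _ < Z.card := by simp [Finset.card_erase_of_mem h0, hZ]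

lemma monic_eisensteinPoly (h0 : 0 ∈ Z) : (eisensteinPoly π u Z).Monic :=
  monic_X_pow_sub (degree_C_mul_prod_one_sub_lt h0)

lemma irreducible_eisensteinPoly [IsDomain R] (hπ : Prime π) (hu : IsUnit u) (h0 : 0 ∈ Z) :
    Irreducible (eisensteinPoly π u Z) := by
  have hZ : 0 < Z.card := Finset.card_pos.2 ⟨0, h0⟩
  have hdeg : (eisensteinPoly π u Z).degree = Z.card := by
    rw [eisensteinPoly, degree_sub_eq_left_of_degree_lt, degree_X_pow]
    rw [degree_X_pow]
    exact degree_C_mul_prod_one_sub_lt h0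
  have hprime : (Ideal.span {π}).IsPrime := (Ideal.span_singleton_prime hπ.ne_zero).2 hπ
  refine irreducible_of_eisenstein_criterion hprime ?_ (fun i hi => ?_) ?_ ?_
    (monic_eisensteinPoly h0).isPrimitive
  · rw [(monic_eisensteinPoly h0).leadingCoeff]
    exact hprime.one_notMem
  · rw [hdeg, Nat.cast_lt] at hi
    rw [eisensteinPoly, coeff_sub, coeff_X_pow, if_neg hi.ne, zero_sub, coeff_C_mul, mul_assoc,
      Ideal.mem_span_singleton, dvd_neg]
    exact dvd_mul_right _ _
  · rwa [hdeg, Nat.cast_pos]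
  · rw [coeff_zero_eq_eval_zero, eisensteinPoly, Ideal.span_singleton_pow,
      Ideal.mem_span_singleton]
    simp only [eval_sub, eval_pow, eval_X, zero_pow hZ.ne', eval_mul, eval_C, eval_prod, eval_one,
      mul_zero, sub_zero, Finset.prod_const_one, mul_one, zero_sub, dvd_neg, pow_two]
    rw [mul_dvd_mul_iff_left hπ.ne_zero]
    exact fun h => hπ.not_isUnit (isUnit_of_dvd_unit h hu)

variable {K Ω : Type*} [Field K] [Field Ω] [Algebra R Ω] {y y' : Ω} {v : Rˣ} {m : ℕ}

local notation "φ" => algebraMap R Ω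

lemma aeval_eisensteinPoly_div (hZ : Z.card = m + 1) (hy0 : y ≠ 0)
    (hy : ∏ z ∈ Z, (y - φ (π * z)) = φ (π ^ m * v)) :
    aeval (φ π / y) (eisensteinPoly π ↑v⁻¹ Z) = 0 := by
  have hv : φ ↑v⁻¹ * φ v = 1 := by rw [← map_mul, v.inv_mul, map_one]
  have hprod : ∏ z ∈ Z, (1 - φ z * (φ π / y)) = φ (π ^ m * v) / y ^ Z.card := by
    rw [← hy, ← Finset.prod_const, ← Finset.prod_div_distrib]
    refine Finset.prod_congr rfl fun z _ => ?_
    rw [map_mul]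
    field_simp
  simp only [eisensteinPoly, map_sub, map_mul, map_prod, map_one, aeval_C, aeval_X,
    hprod, hZ, map_pow]
  linear_combination -(φ π / y) ^ (m + 1) * hv

variable [IsDomain R] [IsIntegrallyClosed R] [Algebra R K] [IsFractionRing R K] [Algebra K Ω]
  [IsScalarTower R K Ω]

lemma minpoly_div_eq_map_eisensteinPoly (hπ : Prime π) (h0 : 0 ∈ Z) (hZ : Z.card = m + 1)
    (hy0 : y ≠ 0) (hy : ∏ z ∈ Z, (y - φ (π * z)) = φ (π ^ m * v)) :
    minpoly K (φ π / y) = (eisensteinPoly π ↑v⁻¹ Z).map (algebraMap R K) := by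
  have hmonic := monic_eisensteinPoly (π := π) (u := ↑v⁻¹) h0
  refine (minpoly.eq_of_irreducible_of_monic (hmonic.irreducible_iff_irreducible_map_fraction_map.1
    (irreducible_eisensteinPoly hπ v⁻¹.isUnit h0)) ?_ (hmonic.map _)).symm
  rw [aeval_map_algebraMap, aeval_eisensteinPoly_div hZ hy0 hy]

variable (K) in
lemma exists_algEquiv_of_prod_eq [Normal K Ω] (hπ : Prime π) (h0 : 0 ∈ Z)
    (hZ : Z.card = m + 1) (hy : ∏ z ∈ Z, (y - φ (π * z)) = φ (π ^ m * v))
    (hy' : ∏ z ∈ Z, (y' - φ (π * z)) = φ (π ^ m * v)) : ∃ τ : Ω ≃ₐ[K] Ω, τ y = y' := by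
  have hφ : Function.Injective φ := by
    rw [IsScalarTower.algebraMap_eq R K Ω]
    exact (algebraMap K Ω).injective.comp (IsFractionRing.injective R K)
  have hφπ : φ π ≠ 0 := (map_ne_zero_iff _ hφ).2 hπ.ne_zero
  have hne {x : Ω} (hx : ∏ z ∈ Z, (x - φ (π * z)) = φ (π ^ m * v)) : x ≠ 0 := by
    rintro rfl
    rw [Finset.prod_eq_zero h0 (by simp), eq_comm, map_eq_zero_iff _ hφ] at hx
    exact mul_ne_zero (pow_ne_zero m hπ.ne_zero) v.ne_zero hx
  have hconj : IsConjRoot K (φ π / y') (φ π / y) := by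
    rw [IsConjRoot, minpoly_div_eq_map_eisensteinPoly hπ h0 hZ (hne hy) hy,
      minpoly_div_eq_map_eisensteinPoly hπ h0 hZ (hne hy') hy']
  obtain ⟨τ, hτ⟩ := isConjRoot_iff_exists_algEquiv.1 hconj
  have hτπ : τ (φ π) = φ π := by rw [IsScalarTower.algebraMap_apply R K Ω, τ.commutes]
  rw [map_div₀, hτπ] at hτ
  exact ⟨τ, by simpa [div_eq_mul_inv, hφπ] using hτ⟩

variable (K) in
lemma exists_algEquiv_of_aeval_subgroupPoly_eq [Normal K Ω] {S : AddSubgroup R} [Finite S]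
    (hπ : Prime π) (hS : ∀ w ∈ S, π ∣ w) (hcard : Nat.card S = m + 1)
    (hy : aeval y (subgroupPoly S) = φ (π ^ m * v))
    (hy' : aeval y' (subgroupPoly S) = φ (π ^ m * v)) : ∃ τ : Ω ≃ₐ[K] Ω, τ y = y' := by
  classical
  have hinj : Function.Injective (π * · : R → R) := mul_right_injective₀ hπ.ne_zero
  let Sf := (S : Set R).toFinite.toFinset
  obtain ⟨Z, hZS⟩ : ∃ Z : Finset R, Z.image (π * ·) = Sf :=
    ⟨Sf.preimage _ hinj.injOn, by
      rw [Finset.image_preimage, Finset.filter_eq_self]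
      exact fun w hw => (hS w (by simpa [Sf] using hw)).imp fun z hz => hz.symm⟩
  have h0 : 0 ∈ Z := by
    rw [← hinj.mem_finset_image, hZS, mul_zero]
    simp [Sf]
  have hZ : Z.card = m + 1 := by
    rw [← Finset.card_image_of_injective Z hinj, hZS, ← hcard, ← Nat.card_eq_card_finite_toFinset]
    rfl
  have hprod (x : Ω) : aeval x (subgroupPoly S) = ∏ z ∈ Z, (x - φ (π * z)) := by
    simp only [subgroupPoly, map_prod, map_sub, aeval_X, aeval_C]
    rw [← Finset.prod_image (f := fun w => x - φ w) hinj.injOn, hZS]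
  rw [hprod] at hy hy'
  exact exists_algEquiv_of_prod_eq K hπ h0 hZ hy hy'

end Eisenstein

/-! ### The local picture at `t = 0` -/

section Rescale

variable {k : Type*} [Field k]

/-- The substitution `X ↦ ζ X`, as an action of `kˣ` on `k⟦X⟧`. -/
noncomputable def rescaleEquiv : kˣ →* (k⟦X⟧ ≃ₐ[k] k⟦X⟧) where
  toFun ζ :=
    { PowerSeries.rescale (ζ : k) with
      invFun := PowerSeries.rescale ((ζ⁻¹ : kˣ) : k)
      left_inv := fun y => by simp [PowerSeries.rescale_rescale, PowerSeries.rescale_one]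
      right_inv := fun y => by simp [PowerSeries.rescale_rescale, PowerSeries.rescale_one]
      commutes' := fun c => by
        ext i
        by_cases hi : i = 0 <;> simp [PowerSeries.coeff_C, hi] }
  map_one' := by
    ext y : 1
    exact RingHom.congr_fun PowerSeries.rescale_one y
  map_mul' ζ ξ := by
    ext y : 1
    change PowerSeries.rescale ((ζ * ξ : kˣ) : k) y =
      PowerSeries.rescale (ζ : k) (PowerSeries.rescale (ξ : k) y)
    rw [PowerSeries.rescale_rescale, mul_comm, Units.val_mul]

lemma rescaleEquiv_apply (ζ : kˣ) (y : k⟦X⟧) :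
    rescaleEquiv ζ y = PowerSeries.rescale (ζ : k) y :=
  rfl

lemma rescaleEquiv_X (ζ : kˣ) :
    rescaleEquiv ζ PowerSeries.X = PowerSeries.C (ζ : k) * PowerSeries.X :=
  PowerSeries.rescale_X _

lemma rescaleEquiv_C (ζ : kˣ) (c : k) : rescaleEquiv ζ (PowerSeries.C c) = PowerSeries.C c :=
  (rescaleEquiv ζ).commutes c

lemma rescaleEquiv_X_pow {ζ : kˣ} {m : ℕ} (hζ : ζ ^ m = 1) :
    rescaleEquiv ζ (PowerSeries.X ^ m) = PowerSeries.X ^ m := by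
  rw [map_pow, rescaleEquiv_X, mul_pow, ← map_pow, ← Units.val_pow_eq_pow_val, hζ]
  simp

lemma constantCoeff_rescaleEquiv (ζ : kˣ) (y : k⟦X⟧) :
    PowerSeries.constantCoeff (rescaleEquiv ζ y) = PowerSeries.constantCoeff y := by
  rw [rescaleEquiv_apply, ← PowerSeries.coeff_zero_eq_constantCoeff_apply,
    PowerSeries.coeff_rescale, pow_zero, one_mul, PowerSeries.coeff_zero_eq_constantCoeff_apply]

end Rescale

/-- `aₙ = 1` and the least `d ≥ 1` with `a_d ≠ 0` is smaller than `n`. -/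
structure IsLowestIndex {F : Type*} [Field F] (a : ℕ → F) (d n : ℕ) : Prop where
  pos : 0 < d
  lt : d < n
  apply_top : a n = 1
  apply_ne_zero : a d ≠ 0
  apply_eq_zero : ∀ i, 0 < i → i < d → a i = 0

section SmallRoots

variable {F : Type*} [Field F] [Fintype F] {k : Type*} [Field k] [Algebra F k]
  {a : ℕ → F} {d n : ℕ}

local notation "q" => Fintype.card F

lemma eval_pencil_of_isLowestIndex {A : Type*} [CommRing A] [Algebra F A]
    (h : IsLowestIndex a d n) (T x : A) :
    (pencil d a T).eval x = T * x + algebraMap F A (a d) * x ^ q ^ d := by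
  rw [pencil, eval_linearized, Finset.sum_range_succ, pencilCoeff_of_ne_zero a T h.pos.ne',
    Finset.sum_eq_single_of_mem 0 (Finset.mem_range.2 h.pos) fun i hi hi0 => ?_]
  · simp
  · rw [pencilCoeff_of_ne_zero a T hi0,
      h.apply_eq_zero i (Nat.pos_of_ne_zero hi0) (Finset.mem_range.1 hi), map_zero, zero_mul]

variable (k a d n) in
/-- The polynomial `scaledPencil k a d n z = X^(-q^d) · P(X z)`, where `P` is the pencil with
parameter `T = X^(q^d - 1)`. -/
noncomputable def scaledPencil : k⟦X⟧[X] :=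
  linearized q n (Function.update
    (fun i => algebraMap F k⟦X⟧ (a i) * PowerSeries.X ^ (q ^ i - q ^ d)) 0 1)

lemma eval_pencil_X_mul (h : IsLowestIndex a d n) (z : k⟦X⟧) :
    (pencil n a (PowerSeries.X ^ (q ^ d - 1))).eval (PowerSeries.X * z) =
      PowerSeries.X ^ q ^ d * (scaledPencil k a d n).eval z := by
  rw [pencil, scaledPencil, eval_linearized, eval_linearized, Finset.mul_sum]
  refine Finset.sum_congr rfl fun i _ => ?_
  rcases Nat.eq_zero_or_pos i with rfl | hi
  · have hpow : (PowerSeries.X : k⟦X⟧) ^ q ^ d = PowerSeries.X ^ (q ^ d - 1) * PowerSeries.X := by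
      rw [← pow_succ, Nat.sub_add_cancel (Nat.one_le_pow _ _ Fintype.card_pos)]
    rw [pencilCoeff_zero, Function.update_self, hpow, pow_zero, pow_one, pow_one]
    ring
  rw [pencilCoeff_of_ne_zero _ _ hi.ne', Function.update_of_ne hi.ne']
  rcases lt_or_ge i d with hid | hid
  · simp [h.apply_eq_zero i hi hid]
  · have hpow : (PowerSeries.X : k⟦X⟧) ^ q ^ i =
        PowerSeries.X ^ (q ^ i - q ^ d) * PowerSeries.X ^ q ^ d := by
      rw [← pow_add, Nat.sub_add_cancel (Nat.pow_le_pow_right Fintype.card_pos hid)]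
    rw [mul_pow, hpow]
    ring

lemma map_scaledPencil (h : IsLowestIndex a d n) :
    (scaledPencil k a d n).map PowerSeries.constantCoeff = pencil d a 1 := by
  rw [scaledPencil, map_linearized, pencil, linearized, linearized]
  refine (Finset.sum_subset_zero_on_sdiff (Finset.range_subset_range.2 (by linarith [h.lt]))
    (fun i hi => ?_) fun i hi => ?_).symm
  · have hid := (Finset.mem_sdiff.1 hi).2
    rw [Finset.mem_range, not_lt] at hid
    have := Nat.pow_lt_pow_right Fintype.one_lt_card hid (a := q)
    have : q ^ i - q ^ d ≠ 0 := by omega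
    simp [Function.update_of_ne (by omega : i ≠ 0), this]
  · rcases eq_or_ne i 0 with rfl | hi0
    · simp
    rw [pencilCoeff_of_ne_zero _ _ hi0, Function.comp_apply, Function.update_of_ne hi0]
    rcases (Finset.mem_range_succ_iff.1 hi).eq_or_lt with rfl | hid
    · simp [PowerSeries.algebraMap_apply]
    · simp [h.apply_eq_zero i (Nat.pos_of_ne_zero hi0) hid]

variable (k a d n) in
/-- The roots of positive valuation of the pencil with parameter `T = X^(q^d - 1)`. -/
noncomputable def smallRoots : Submodule F k⟦X⟧ :=
  rootSpace n a (PowerSeries.X ^ (q ^ d - 1)) ⊓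
    (Ideal.span {PowerSeries.X}).restrictScalars F

lemma mem_smallRoots {w : k⟦X⟧} :
    w ∈ smallRoots k a d n ↔
      w ∈ rootSpace n a (PowerSeries.X ^ (q ^ d - 1)) ∧ PowerSeries.X ∣ w := by
  rw [smallRoots, Submodule.mem_inf, Submodule.restrictScalars_mem, Ideal.mem_span_singleton]

lemma X_mul_mem_smallRoots (h : IsLowestIndex a d n) {z : k⟦X⟧} :
    PowerSeries.X * z ∈ smallRoots k a d n ↔ (scaledPencil k a d n).eval z = 0 := by
  simp [mem_smallRoots, mem_rootSpace, eval_pencil_X_mul h, PowerSeries.X_ne_zero]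

lemma coeff_one_X_mul (z : k⟦X⟧) :
    PowerSeries.coeff 1 (PowerSeries.X * z) = PowerSeries.constantCoeff z := by
  rw [← zero_add 1, PowerSeries.coeff_succ_X_mul, PowerSeries.coeff_zero_eq_constantCoeff_apply]

lemma coeff_one_injOn_smallRoots (h : IsLowestIndex a d n) :
    Set.InjOn (PowerSeries.coeff 1) (smallRoots k a d n : Set k⟦X⟧) := by
  intro w hw w' hw' hcoeff
  obtain ⟨z, rfl⟩ := (mem_smallRoots.1 hw).2
  obtain ⟨z', rfl⟩ := (mem_smallRoots.1 hw').2
  rw [coeff_one_X_mul, coeff_one_X_mul] at hcoeff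
  rw [SetLike.mem_coe, X_mul_mem_smallRoots h] at hw hw'
  rw [eq_of_eval_eq_zero_of_constantCoeff_eq hcoeff _ hw hw']
  simp [map_scaledPencil h, derivative_pencil]

lemma exists_mem_smallRoots_coeff_one_eq (h : IsLowestIndex a d n) {c : k} :
    (∃ w ∈ smallRoots k a d n, PowerSeries.coeff 1 w = c) ↔ (pencil d a 1).eval c = 0 := by
  rw [← map_scaledPencil h]
  constructor
  · rintro ⟨w, hw, rfl⟩
    obtain ⟨z, rfl⟩ := (mem_smallRoots.1 hw).2
    rw [coeff_one_X_mul, ← constantCoeff_eval, (X_mul_mem_smallRoots h).1 hw, map_zero]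
  · intro hc
    obtain ⟨z, hz, rfl⟩ := exists_eval_eq_zero_of_constantCoeff hc
      (by simp [map_scaledPencil h, derivative_pencil])
    exact ⟨PowerSeries.X * z, (X_mul_mem_smallRoots h).2 hz, coeff_one_X_mul z⟩

lemma card_smallRoots [IsAlgClosed k] (h : IsLowestIndex a d n) :
    Nat.card (smallRoots k a d n) = q ^ d := by
  have himage : PowerSeries.coeff 1 '' (smallRoots k a d n : Set k⟦X⟧) =
      (pencil d a (1 : k)).rootSet k := by
    ext c
    rw [mem_rootSet_of_ne (separable_pencil d a isUnit_one).ne_zero, coe_aeval_eq_eval,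
      ← exists_mem_smallRoots_coeff_one_eq h]
    rfl
  have hdeg : (pencil d a (1 : k)).natDegree = q ^ d :=
    natDegree_linearized Fintype.one_lt_card (by
      rw [pencilCoeff_of_ne_zero a _ h.pos.ne']
      exact (_root_.map_ne_zero _).2 h.apply_ne_zero)
  rw [← hdeg, ← card_rootSet_eq_natDegree (K := k) (separable_pencil d a isUnit_one)
    (IsAlgClosed.splits _), ← Nat.card_eq_fintype_card, ← himage]
  exact (Nat.card_image_of_injOn (coeff_one_injOn_smallRoots h)).symm

end SmallRoots

section SmallRootsQuotient

variable {F : Type*} [Field F] [Fintype F] {k : Type*} [Field k] [Algebra F k]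
  {a : ℕ → F} {d n : ℕ}

local notation "q" => Fintype.card F
local notation "𝒫" => pencil n a (PowerSeries.X ^ (Fintype.card F ^ d - 1) : k⟦X⟧)
local notation "𝒮" => Submodule.toAddSubgroup (smallRoots k a d n)

lemma one_lt_card_pow (h : IsLowestIndex a d n) : 1 < q ^ d :=
  Nat.one_lt_pow h.pos.ne' Fintype.one_lt_card

lemma finite_smallRoots [IsAlgClosed k] (h : IsLowestIndex a d n) :
    Finite (smallRoots k a d n) :=
  Nat.finite_of_card_ne_zero (by rw [card_smallRoots h]; exact (one_lt_card_pow h).ne_bot)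

lemma map_constantCoeff_pencil (h : IsLowestIndex a d n) :
    (𝒫).map PowerSeries.constantCoeff =
      expand k (q ^ d) (linearized q (n - d) fun i => algebraMap F k (a (d + i))) := by
  rw [pencil, map_linearized, linearized, linearized,
    show n + 1 = d + (n - d + 1) by have := h.lt; omega, Finset.sum_range_add,
    Finset.sum_eq_zero fun i hi => ?_, zero_add, map_sum]
  · refine Finset.sum_congr rfl fun i _ => ?_
    rw [Function.comp_apply, pencilCoeff_of_ne_zero _ _ (by have := h.pos; omega),
      PowerSeries.algebraMap_apply, PowerSeries.constantCoeff_C, map_mul, expand_C, map_pow,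
      expand_X, ← pow_mul, pow_add]
  · rcases Nat.eq_zero_or_pos i with rfl | hi0
    · simp [(Nat.sub_pos_of_lt (one_lt_card_pow h)).ne']
    · simp [pencilCoeff_of_ne_zero _ _ hi0.ne', h.apply_eq_zero i hi0 (Finset.mem_range.1 hi)]

lemma eval_C_pencil (r : k) :
    ∃ β : k, Polynomial.eval (PowerSeries.C r) 𝒫 =
      PowerSeries.X ^ (q ^ d - 1) * PowerSeries.C r + PowerSeries.C β := by
  refine ⟨∑ i ∈ Finset.range n, algebraMap F k (a (i + 1)) * r ^ q ^ (i + 1), ?_⟩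
  rw [pencil, eval_linearized, Finset.sum_range_succ', add_comm, pencilCoeff_zero, pow_zero,
    pow_one, map_sum]
  simp [pencilCoeff_of_ne_zero, PowerSeries.algebraMap_apply]

lemma rescaleEquiv_mem_smallRoots {ζ : kˣ} (hζ : ζ ^ (q ^ d - 1) = 1) {w : k⟦X⟧}
    (hw : w ∈ smallRoots k a d n) : rescaleEquiv ζ w ∈ smallRoots k a d n := by
  obtain ⟨hroot, z, rfl⟩ := mem_smallRoots.1 hw
  refine mem_smallRoots.2 ⟨?_, ?_⟩
  · rw [← rescaleEquiv_X_pow hζ]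
    exact (map_mem_rootSpace (φ := ((rescaleEquiv ζ).restrictScalars F).toAlgHom)
      (rescaleEquiv ζ).injective).2 hroot
  · rw [map_mul, rescaleEquiv_X, mul_right_comm]
    exact dvd_mul_left _ _

variable [Finite (smallRoots k a d n)]

lemma map_rescaleEquiv_subgroupPoly {ζ : kˣ} (hζ : ζ ^ (q ^ d - 1) = 1) :
    (subgroupPoly 𝒮).map (rescaleEquiv ζ : k⟦X⟧ →+* k⟦X⟧) = subgroupPoly 𝒮 := by
  rw [subgroupPoly, Polynomial.map_prod]
  refine Finset.prod_equiv (rescaleEquiv ζ).toEquiv (fun w => ?_) fun w _ => by simp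
  simp only [Set.Finite.mem_toFinset, SetLike.mem_coe, Submodule.mem_toAddSubgroup]
  refine ⟨rescaleEquiv_mem_smallRoots hζ, fun hw => ?_⟩
  have hζ' : ζ⁻¹ ^ (q ^ d - 1) = 1 := by rw [inv_pow, hζ, inv_one]
  have := rescaleEquiv_mem_smallRoots hζ' hw
  rwa [AlgEquiv.toEquiv_eq_coe, AlgEquiv.coe_toEquiv, ← AlgEquiv.mul_apply, ← map_mul,
    inv_mul_cancel, map_one, AlgEquiv.one_apply] at this

variable [IsAlgClosed k]

lemma map_constantCoeff_subgroupPoly_smallRoots (h : IsLowestIndex a d n) :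
    (subgroupPoly 𝒮).map PowerSeries.constantCoeff = X ^ q ^ d := by
  have hfactor : ∀ w ∈ (𝒮 : Set k⟦X⟧).toFinite.toFinset,
      (X - C w : k⟦X⟧[X]).map PowerSeries.constantCoeff = X := fun w hw => by
    have hw : w ∈ smallRoots k a d n := by simpa using hw
    simp [PowerSeries.X_dvd_iff.1 (mem_smallRoots.1 hw).2]
  rw [subgroupPoly, Polynomial.map_prod, Finset.prod_congr rfl hfactor, Finset.prod_const,
    ← Nat.card_eq_card_finite_toFinset, ← card_smallRoots (k := k) h]
  rfl

/- The pencil is unramified after dividing out the small roots: the quotient polynomial `G` has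
unit derivative modulo `X`. -/
lemma exists_pencil_eq_comp (h : IsLowestIndex a d n) :
    ∃ G : k⟦X⟧[X], 𝒫 = G.comp (subgroupPoly 𝒮) ∧ G.Monic ∧
      derivative (G.map PowerSeries.constantCoeff) = C (algebraMap F k (a d)) := by
  obtain ⟨G, hG⟩ : ∃ G : k⟦X⟧[X], 𝒫 = G.comp (subgroupPoly 𝒮) :=
    exists_comp_subgroupPoly 𝒮 fun w hw => by
      have hw : Polynomial.eval w 𝒫 = 0 := mem_rootSpace.1 (mem_smallRoots.1 hw).1
      rw [pencil, linearized_comp_X_add_C, ← pencil, hw, C_0, add_zero]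
  refine ⟨G, hG, monic_of_comp_subgroupPoly_monic 𝒮 ?_, ?_⟩
  · rw [← hG]
    exact monic_pencil (h.pos.trans h.lt).ne' h.apply_top _
  · have := congrArg (Polynomial.map PowerSeries.constantCoeff) hG
    rw [map_constantCoeff_pencil h, Polynomial.map_comp,
      map_constantCoeff_subgroupPoly_smallRoots h, ← expand_eq_comp_X_pow] at this
    rw [← expand_injective (one_lt_card_pow h).le this,
      derivative_linearized (card_cast_eq_zero F k), add_zero]

variable {Ω : Type*} [Field Ω] [Algebra k⟦X⟧ Ω] [FaithfulSMul k⟦X⟧ Ω] {G : k⟦X⟧[X]} {x : Ω}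

lemma exists_algebraMap_eq_aeval_subgroupPoly (h : IsLowestIndex a d n)
    (hG : 𝒫 = G.comp (subgroupPoly 𝒮)) (hmonic : G.Monic)
    (hder : derivative (G.map PowerSeries.constantCoeff) = C (algebraMap F k (a d)))
    (hx : aeval x 𝒫 = 0) :
    ∃ ρ : k⟦X⟧, algebraMap k⟦X⟧ Ω ρ = aeval x (subgroupPoly 𝒮) ∧ G.eval ρ = 0 := by
  refine exists_algebraMap_eq_of_aeval_eq_zero hmonic ?_ ?_
  · rw [separable_def, hder]
    have had : algebraMap F k (a d) ≠ 0 := (_root_.map_ne_zero _).2 h.apply_ne_zero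
    exact isCoprime_one_right.of_isCoprime_of_dvd_right (isUnit_C.2 had.isUnit).dvd
  · rw [← aeval_comp, ← hG, hx]

lemma map_aeval_of_semilinear {A B : Type*} [CommRing A] [CommRing B] [Algebra A B] {σ : A →+* A}
    {τ : B →+* B} (hτ : ∀ y, τ (algebraMap A B y) = algebraMap A B (σ y)) (p : A[X]) (x : B) :
    τ (aeval x p) = aeval (τ x) (p.map σ) := by
  rw [aeval_def, hom_eval₂, aeval_def, eval₂_map]
  congr 1
  exact RingHom.ext hτ

/- Dividing out the small roots kills `τ x - x`, by uniqueness in Hensel's lemma. -/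
lemma exists_mem_smallRoots_eq_sub (h : IsLowestIndex a d n) {ζ : kˣ}
    (hζ : ζ ^ (q ^ d - 1) = 1) {τ : Ω →+* Ω}
    (hτ : ∀ y, τ (algebraMap k⟦X⟧ Ω y) = algebraMap k⟦X⟧ Ω (rescaleEquiv ζ y))
    (hx : aeval x 𝒫 = 0) (hτx : aeval (τ x) 𝒫 = 0) :
    ∃ w ∈ smallRoots k a d n, algebraMap k⟦X⟧ Ω w = τ x - x := by
  obtain ⟨G, hG, hmonic, hder⟩ := exists_pencil_eq_comp (k := k) h
  obtain ⟨ρ, hρ, hGρ⟩ := exists_algebraMap_eq_aeval_subgroupPoly h hG hmonic hder hx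
  obtain ⟨ρ', hρ', hGρ'⟩ := exists_algebraMap_eq_aeval_subgroupPoly h hG hmonic hder hτx
  have hconj : ρ' = rescaleEquiv ζ ρ := FaithfulSMul.algebraMap_injective k⟦X⟧ Ω <| by
    rw [hρ', ← hτ, hρ, map_aeval_of_semilinear (σ := (rescaleEquiv ζ : k⟦X⟧ →+* k⟦X⟧)) hτ,
      map_rescaleEquiv_subgroupPoly hζ]
  have hfix : ρ' = ρ := eq_of_eval_eq_zero_of_constantCoeff_eq
    (by rw [hconj, constantCoeff_rescaleEquiv])
    (by simpa [hder] using h.apply_ne_zero) hGρ hGρ'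
  refine (aeval_subgroupPoly_eq_zero 𝒮).1 ?_
  rw [aeval_sub_subgroupPoly, ← hρ, ← hρ', hfix, sub_self]

/- With `r ^ q ^ d` the constant term of `ρ`, both `ρ` and `h(r)` reduce to the same simple root. -/
lemma exists_sub_eval_subgroupPoly_eq (h : IsLowestIndex a d n)
    (hG : 𝒫 = G.comp (subgroupPoly 𝒮))
    (hder : derivative (G.map PowerSeries.constantCoeff) = C (algebraMap F k (a d)))
    {ρ : k⟦X⟧} (hGρ : G.eval ρ = 0) (hρ0 : PowerSeries.constantCoeff ρ ≠ 0) :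
    ∃ (r : k) (v : k⟦X⟧ˣ), ρ - (subgroupPoly 𝒮).eval (PowerSeries.C r) =
      PowerSeries.X ^ (q ^ d - 1) * (v : k⟦X⟧) := by
  obtain ⟨r, hr⟩ := IsAlgClosed.exists_pow_nat_eq (PowerSeries.constantCoeff ρ)
    (one_lt_card_pow h).bot_lt
  have hr0 : r ≠ 0 := by
    rintro rfl
    exact hρ0 (by rw [← hr, zero_pow (one_lt_card_pow h).ne_bot])
  set y := (subgroupPoly 𝒮).eval (PowerSeries.C r) with hy
  have hcc : PowerSeries.constantCoeff y = PowerSeries.constantCoeff ρ := by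
    rw [hy, constantCoeff_eval, map_constantCoeff_subgroupPoly_smallRoots h]
    simp [hr]
  have hGy : G.eval y = PowerSeries.X ^ (q ^ d - 1) * PowerSeries.C r := by
    obtain ⟨β, hβ⟩ := eval_C_pencil (F := F) (a := a) (d := d) (n := n) r
    rw [hG, eval_comp, ← hy] at hβ
    have hcoeff : PowerSeries.constantCoeff (G.eval y) = 0 := by
      rw [constantCoeff_eval, hcc, ← constantCoeff_eval, hGρ, map_zero]
    have hβ0 : β = 0 := by
      simpa [hβ, (Nat.sub_pos_of_lt (one_lt_card_pow h)).ne'] using hcoeff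
    rw [hβ, hβ0, map_zero, add_zero]
  obtain ⟨v, hv, hsub⟩ := exists_isUnit_eval_sub_eval hcc
    (by simpa [hder] using h.apply_ne_zero) (g := G)
  obtain ⟨v, rfl⟩ := hv
  obtain ⟨u, hu⟩ := isUnit_of_constantCoeff_ne_zero (y := PowerSeries.C r) (by simpa using hr0)
  rw [hGρ, hGy, zero_sub] at hsub
  refine ⟨r, -(u * v⁻¹), ?_⟩
  rw [← Units.mul_left_inj v, ← hsub, ← hu]
  simp [mul_assoc]

lemma exists_algEquiv_apply_eq_add (K : Type*) [Field K] [Algebra k⟦X⟧ K]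
    [IsFractionRing k⟦X⟧ K] [Algebra K Ω] [IsScalarTower k⟦X⟧ K Ω] [Normal K Ω]
    (h : IsLowestIndex a d n) (hx : aeval x 𝒫 = 0)
    (hxS : ∀ w ∈ smallRoots k a d n, algebraMap k⟦X⟧ Ω w ≠ x)
    {w : k⟦X⟧} (hw : w ∈ smallRoots k a d n) :
    ∃ τ : Ω ≃ₐ[K] Ω, τ x = x + algebraMap k⟦X⟧ Ω w := by
  obtain ⟨G, hG, hmonic, hder⟩ := exists_pencil_eq_comp (k := k) h
  obtain ⟨ρ, hρ, hGρ⟩ := exists_algebraMap_eq_aeval_subgroupPoly h hG hmonic hder hx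
  have hS0 : (subgroupPoly 𝒮).eval 0 = 0 := (eval_subgroupPoly_eq_zero 𝒮).2 (zero_mem _)
  have hG0 : G.eval 0 = 0 := by
    have : (G.comp (subgroupPoly 𝒮)).eval 0 = G.eval 0 := by rw [eval_comp, hS0]
    rw [← this, ← hG]
    exact mem_rootSpace.1 (zero_mem (rootSpace n a (PowerSeries.X ^ (q ^ d - 1) : k⟦X⟧)))
  have hρ0 : PowerSeries.constantCoeff ρ ≠ 0 := fun h0 => by
    have : ρ = 0 := eq_of_eval_eq_zero_of_constantCoeff_eq (by rw [h0, map_zero])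
      (by simpa [hder] using h.apply_ne_zero) hG0 hGρ
    obtain ⟨w, hw, hwx⟩ := (aeval_subgroupPoly_eq_zero 𝒮 (x := x)).1 (by rw [← hρ, this, map_zero])
    exact hxS w hw hwx
  obtain ⟨r, v, hr⟩ := exists_sub_eval_subgroupPoly_eq h hG hder hGρ hρ0
  have haeval : ∀ y : k⟦X⟧, (subgroupPoly 𝒮).eval y = 0 →
      aeval (x - algebraMap k⟦X⟧ Ω (PowerSeries.C r - y)) (subgroupPoly 𝒮) =
        algebraMap k⟦X⟧ Ω (PowerSeries.X ^ (q ^ d - 1) * (v : k⟦X⟧)) := fun y hy => by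
    rw [aeval_sub_subgroupPoly, ← hρ, aeval_algebraMap_apply, coe_aeval_eq_eval,
      eval_sub_subgroupPoly, hy, sub_zero, ← map_sub, hr]
  obtain ⟨τ, hτ⟩ := exists_algEquiv_of_aeval_subgroupPoly_eq K (S := 𝒮) PowerSeries.X_prime
    (fun w hw => (mem_smallRoots.1 hw).2)
    ((card_smallRoots h).trans (Nat.sub_add_cancel (one_lt_card_pow h).le).symm)
    (haeval 0 hS0) (haeval w ((eval_subgroupPoly_eq_zero 𝒮).2 hw))
  refine ⟨τ, ?_⟩
  rw [map_sub, sub_zero, IsScalarTower.algebraMap_apply k⟦X⟧ K Ω, AlgEquiv.commutes, map_sub,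
    ← IsScalarTower.algebraMap_apply] at hτ
  linear_combination hτ

end SmallRootsQuotient

/-! ### The Galois representation on the roots -/

section Representation

variable {F K : Type*} (L : Type*) [Field F] [Fintype F] [Field K] [Field L] [Algebra F K]
  [Algebra F L] [Algebra K L] [IsScalarTower F K L] (n : ℕ) (a : ℕ → F) (t : K)

local notation "q" => Fintype.card F

variable {L n a t} in
lemma apply_mem_rootSpace (g : Gal(L/K)) {x : L} (hx : x ∈ rootSpace n a (algebraMap K L t)) :
    g x ∈ rootSpace n a (algebraMap K L t) := by
  have := (map_mem_rootSpace (φ := (g.restrictScalars F).toAlgHom) g.injective).2 hx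
  exact (g.commutes t) ▸ this

/-- The action of the Galois group on the roots of `a₁ x^q + ⋯ + aₙ x^(qⁿ) + t x`. -/
noncomputable def galRep :
    Gal(L/K) →* (rootSpace n a (algebraMap K L t) ≃ₗ[F] rootSpace n a (algebraMap K L t)) where
  toFun g := LinearEquiv.ofLinearMap
    ((g.restrictScalars F).toLinearMap.restrict fun _ => apply_mem_rootSpace g)
    ((g.symm.restrictScalars F).toLinearMap.restrict fun _ => apply_mem_rootSpace g.symm)
    (LinearMap.ext fun x => Subtype.ext (g.apply_symm_apply x.1))
    (LinearMap.ext fun x => Subtype.ext (g.symm_apply_apply x.1))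
  map_one' := rfl
  map_mul' _ _ := rfl

lemma coe_galRep_apply (g : Gal(L/K)) (v : rootSpace n a (algebraMap K L t)) :
    (galRep L n a t g v : L) = g v :=
  rfl

variable {n a t}

lemma coe_rootSpace_eq_rootSet (ht : t ≠ 0) :
    (rootSpace n a (algebraMap K L t) : Set L) = (pencil n a t).rootSet L := by
  ext x
  rw [mem_rootSet_of_ne (separable_pencil n a ht.isUnit).ne_zero, SetLike.mem_coe, mem_rootSpace,
    aeval_def, ← eval_map, map_algebraMap_pencil]

lemma galRep_injective [IsSplittingField K L (pencil n a t)] (ht : t ≠ 0) :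
    Function.Injective (galRep L n a t) := by
  intro g h hgh
  refine AlgEquiv.coe_toAlgHom_injective <|
    AlgHom.ext_of_adjoin_eq_top (IsSplittingField.adjoin_rootSet L (pencil n a t)) fun x hx => ?_
  rw [← coe_rootSpace_eq_rootSet L ht] at hx
  exact congrArg Subtype.val (LinearEquiv.congr_fun hgh ⟨x, hx⟩)

lemma card_rootSpace [IsSplittingField K L (pencil n a t)] (hn : n ≠ 0) (ha : a n = 1)
    (ht : t ≠ 0) : Nat.card (rootSpace n a (algebraMap K L t)) = q ^ n := by
  rw [← natDegree_pencil hn ha t, ← card_rootSet_eq_natDegree (K := L)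
    (separable_pencil n a ht.isUnit) (IsSplittingField.splits L _), ← Nat.card_eq_fintype_card,
    ← coe_rootSpace_eq_rootSet L ht]
  rfl

variable {Ω : Type*} [Field Ω] [Algebra F Ω] [Algebra K Ω] [Algebra L Ω] [IsScalarTower K L Ω]
  [IsScalarTower F L Ω]

omit [Algebra F K] [IsScalarTower F K L] in
lemma algebraMap_mem_rootSpace {x : L} :
    algebraMap L Ω x ∈ rootSpace n a (algebraMap K Ω t) ↔
      x ∈ rootSpace n a (algebraMap K L t) := by
  rw [IsScalarTower.algebraMap_apply K L Ω]
  exact map_mem_rootSpace (φ := IsScalarTower.toAlgHom F L Ω) (algebraMap L Ω).injective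

lemma exists_rootSpace_algebraMap_eq [IsSplittingField K L (pencil n a t)] (ht : t ≠ 0) {x : Ω}
    (hx : x ∈ rootSpace n a (algebraMap K Ω t)) :
    ∃ v : rootSpace n a (algebraMap K L t), algebraMap L Ω v = x := by
  have hroot : (((pencil n a t).map (algebraMap K L)).map (algebraMap L Ω)).IsRoot x := by
    rw [map_algebraMap_pencil, map_algebraMap_pencil, ← IsScalarTower.algebraMap_apply]
    exact mem_rootSpace.1 hx
  obtain ⟨v, rfl⟩ := (IsSplittingField.splits L (pencil n a t)).mem_range_of_isRoot
    ((Polynomial.map_ne_zero_iff (algebraMap K L).injective).2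
      (separable_pencil n a ht.isUnit).ne_zero) hroot
  exact ⟨⟨v, (algebraMap_mem_rootSpace L).1 hx⟩, rfl⟩

end Representation

/-! ### Lifting automorphisms of `k⟦X⟧` to Galois automorphisms -/

section Lifting

variable {F K k : Type*} (M : Type*) {Ω : Type*} [Field F] [Field K] [Field k] [Field M] [Field Ω]
  [Algebra F K] [Algebra F k] [Algebra F Ω] [Algebra K Ω] [Algebra k⟦X⟧ Ω]
  [IsScalarTower F K Ω] [IsScalarTower F k⟦X⟧ Ω]

lemma exists_algEquiv_coe_eq {s : K} (hs : IntermediateField.adjoin F {s} = ⊤) (τ : Ω ≃ₐ[F] Ω)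
    (hτ : τ (algebraMap K Ω s) = algebraMap K Ω s) : ∃ τ' : Ω ≃ₐ[K] Ω, ⇑τ' = τ := by
  let ι := IsScalarTower.toAlgHom F K Ω
  let fixed : IntermediateField F K :=
    (AlgHom.equalizer ((τ : Ω →ₐ[F] Ω).comp ι) ι).toIntermediateField fun x hx => by
      rw [AlgHom.mem_equalizer] at hx ⊢
      rw [map_inv₀, map_inv₀, hx]
  have hfixed : fixed = ⊤ := by
    rw [eq_top_iff, ← hs, IntermediateField.adjoin_simple_le_iff]
    exact hτ
  have hcomm : ∀ c : K, τ (algebraMap K Ω c) = algebraMap K Ω c := fun c =>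
    (hfixed ▸ IntermediateField.mem_top : c ∈ fixed)
  exact ⟨AlgEquiv.ofRingEquiv (f := τ.toRingEquiv) hcomm, rfl⟩

variable [Algebra k⟦X⟧ M] [IsFractionRing k⟦X⟧ M] [Algebra M Ω] [IsScalarTower k⟦X⟧ M Ω]
  [IsAlgClosure M Ω]

include M in
lemma exists_algEquiv_rescaleEquiv {s : K} (hs : IntermediateField.adjoin F {s} = ⊤) {m : ℕ}
    (hsX : algebraMap K Ω s = algebraMap k⟦X⟧ Ω (PowerSeries.X ^ m)) {ζ : kˣ} (hζ : ζ ^ m = 1) :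
    ∃ τ : Ω ≃ₐ[K] Ω, ∀ y, τ (algebraMap k⟦X⟧ Ω y) = algebraMap k⟦X⟧ Ω (rescaleEquiv ζ y) := by
  let τ : Ω ≃+* Ω := IsAlgClosure.equivOfEquiv Ω Ω
    (IsFractionRing.ringEquivOfRingEquiv (K := M) (L := M) (rescaleEquiv ζ).toRingEquiv)
  have hτ : ∀ y, τ (algebraMap k⟦X⟧ Ω y) = algebraMap k⟦X⟧ Ω (rescaleEquiv ζ y) := fun y => by
    rw [IsScalarTower.algebraMap_apply k⟦X⟧ M Ω, IsAlgClosure.equivOfEquiv_algebraMap,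
      IsFractionRing.ringEquivOfRingEquiv_algebraMap, IsScalarTower.algebraMap_apply k⟦X⟧ M Ω]
    rfl
  have hτF : ∀ c, τ (algebraMap F Ω c) = algebraMap F Ω c := fun c => by
    rw [IsScalarTower.algebraMap_apply F k⟦X⟧ Ω, hτ, PowerSeries.algebraMap_apply, rescaleEquiv_C]
  obtain ⟨τ', hτ'⟩ := exists_algEquiv_coe_eq hs (AlgEquiv.ofRingEquiv (f := τ) hτF)
    (by rw [hsX]; exact (hτ _).trans (by rw [rescaleEquiv_X_pow hζ]))
  exact ⟨τ', fun y => by rw [hτ']; exact hτ y⟩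

end Lifting

section TameAction

variable {F : Type*} [Field F] [Fintype F] {k : Type*} [Field k] [Algebra F k]
  {a : ℕ → F} {d n : ℕ}

local notation "q" => Fintype.card F

lemma coeff_one_rescaleEquiv (ζ : kˣ) (y : k⟦X⟧) :
    PowerSeries.coeff 1 (rescaleEquiv ζ y) = ζ * PowerSeries.coeff 1 y := by
  rw [rescaleEquiv_apply, PowerSeries.coeff_rescale, pow_one]

lemma coeff_one_ne_zero (h : IsLowestIndex a d n) {w : k⟦X⟧} (hw : w ∈ smallRoots k a d n)
    (hw0 : w ≠ 0) : PowerSeries.coeff 1 w ≠ 0 := fun h0 =>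
  hw0 (coeff_one_injOn_smallRoots h hw (zero_mem _) (by rw [h0, map_zero]))

lemma mul_coeff_one_pow (h : IsLowestIndex a d n) {w : k⟦X⟧} (hw : w ∈ smallRoots k a d n)
    (hw0 : w ≠ 0) : algebraMap F k (a d) * PowerSeries.coeff 1 w ^ (q ^ d - 1) = -1 := by
  have hroot := (exists_mem_smallRoots_coeff_one_eq h).1 ⟨w, hw, rfl⟩
  rw [eval_pencil_of_isLowestIndex h, one_mul,
    ← Nat.sub_add_cancel (one_lt_card_pow h).le, pow_succ] at hroot
  refine mul_right_cancel₀ (coeff_one_ne_zero h hw hw0) ?_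
  linear_combination hroot

lemma exists_rescaleEquiv_eq (h : IsLowestIndex a d n) {w w' : k⟦X⟧}
    (hw : w ∈ smallRoots k a d n) (hw0 : w ≠ 0) (hw' : w' ∈ smallRoots k a d n) (hw'0 : w' ≠ 0) :
    ∃ ζ : kˣ, ζ ^ (q ^ d - 1) = 1 ∧ rescaleEquiv ζ w = w' := by
  set c := Units.mk0 _ (coeff_one_ne_zero h hw hw0)
  set c' := Units.mk0 _ (coeff_one_ne_zero h hw' hw'0)
  have hζ : (c' / c) ^ (q ^ d - 1) = 1 := by
    have had : algebraMap F k (a d) ≠ 0 := (_root_.map_ne_zero _).2 h.apply_ne_zero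
    rw [div_pow, div_eq_one, Units.ext_iff, Units.val_pow_eq_pow_val, Units.val_pow_eq_pow_val]
    exact mul_left_cancel₀ had
      ((mul_coeff_one_pow h hw' hw'0).trans (mul_coeff_one_pow h hw hw0).symm)
  refine ⟨c' / c, hζ, coeff_one_injOn_smallRoots h (rescaleEquiv_mem_smallRoots hζ hw) hw' ?_⟩
  rw [coeff_one_rescaleEquiv]
  exact congrArg Units.val (div_mul_cancel c' c)

end TameAction

section InertiaAtZero

variable (K k Ω : Type*) [Field K] [Field k] [Field Ω] [Algebra K Ω] [Algebra k⟦X⟧ Ω]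

/-- The automorphisms of `Ω` over `K` that restrict to some `X ↦ ζ X` on `k⟦X⟧`, recorded together
with `ζ`. -/
def rescalingGroup : Subgroup (Gal(Ω/K) × kˣ) where
  carrier := {p | ∀ y, p.1 (algebraMap k⟦X⟧ Ω y) = algebraMap k⟦X⟧ Ω (rescaleEquiv p.2 y)}
  one_mem' y := by simp
  mul_mem' {p p'} hp hp' y := by simp [hp' y, hp (rescaleEquiv p'.2 y)]
  inv_mem' {p} hp y := by
    refine p.1.injective ?_
    rw [hp, ← AlgEquiv.mul_apply, ← AlgEquiv.mul_apply, ← map_mul]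
    simp

variable {K k Ω} {F : Type*} [Field F] [Fintype F] [Algebra F k]
  {a : ℕ → F} {d n : ℕ} {t : K}

local notation "q" => Fintype.card F
local notation "m" => Fintype.card F ^ d - 1

lemma snd_pow_eq_one_of_mem_rescalingGroup [FaithfulSMul k⟦X⟧ Ω] {N : ℕ}
    (ht : algebraMap K Ω t = algebraMap k⟦X⟧ Ω (PowerSeries.X ^ N)) {p : Gal(Ω/K) × kˣ}
    (hp : p ∈ rescalingGroup K k Ω) : p.2 ^ N = 1 := by
  have hX := hp (PowerSeries.X ^ N)
  rw [← ht, AlgEquiv.commutes, ht, map_pow (rescaleEquiv _), rescaleEquiv_X, mul_pow,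
    ← map_pow] at hX
  have := congrArg (PowerSeries.coeff N) (FaithfulSMul.algebraMap_injective k⟦X⟧ Ω hX)
  rw [PowerSeries.coeff_C_mul, PowerSeries.coeff_X_pow_self, mul_one] at this
  exact Units.ext (by simpa using this.symm)

variable (L : Type*) [Field L] [Algebra F K] [Algebra F L] [Algebra K L] [IsScalarTower F K L]
  [Algebra L Ω] [IsScalarTower K L Ω]

variable (k Ω a n t) in
/-- The action of `rescalingGroup` on the roots in `L`. -/
noncomputable def rescalingRep [Normal K L] : rescalingGroup K k Ω →*
    (rootSpace n a (algebraMap K L t) ≃ₗ[F] rootSpace n a (algebraMap K L t)) :=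
  (galRep L n a t).comp <|
    ((AlgEquiv.restrictNormalHom L).comp (MonoidHom.fst _ _)).comp (rescalingGroup K k Ω).subtype

omit [Algebra F k] in
lemma algebraMap_rescalingRep [Normal K L] (p : rescalingGroup K k Ω)
    (v : rootSpace n a (algebraMap K L t)) :
    algebraMap L Ω (rescalingRep k Ω a n t L p v) = p.1.1 (algebraMap L Ω v) :=
  AlgEquiv.restrictNormal_commutes ..

variable [Algebra F Ω] [IsScalarTower F k⟦X⟧ Ω] [IsScalarTower F L Ω]

variable (k Ω a d n t) in
/-- The roots in `L` that come from `smallRoots`. -/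
noncomputable def smallRootSpace : Submodule F (rootSpace n a (algebraMap K L t)) :=
  ((smallRoots k a d n).map (IsScalarTower.toAlgHom F k⟦X⟧ Ω).toLinearMap).comap
    ((IsScalarTower.toAlgHom F L Ω).toLinearMap ∘ₗ Submodule.subtype _)

omit [Algebra F K] [IsScalarTower F K L] [Algebra K Ω] [IsScalarTower K L Ω] in
lemma mem_smallRootSpace {v : rootSpace n a (algebraMap K L t)} :
    v ∈ smallRootSpace k Ω a d n t L ↔
      ∃ w ∈ smallRoots k a d n, algebraMap k⟦X⟧ Ω w = algebraMap L Ω v :=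
  Iff.rfl

omit [Algebra F K] [IsScalarTower F K L] in
lemma aeval_algebraMap_eq_zero (ht : algebraMap K Ω t = algebraMap k⟦X⟧ Ω (PowerSeries.X ^ m))
    (v : rootSpace n a (algebraMap K L t)) :
    aeval (algebraMap L Ω v) (pencil n a (PowerSeries.X ^ m : k⟦X⟧)) = 0 := by
  have := (algebraMap_mem_rootSpace (Ω := Ω) L).2 v.2
  rwa [ht, mem_rootSpace, ← map_algebraMap_pencil, eval_map_algebraMap] at this

variable [FaithfulSMul k⟦X⟧ Ω]

omit [Algebra F K] in
lemma algebraMap_powerSeries_mem_rootSpace {T y : k⟦X⟧}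
    (ht : algebraMap K Ω t = algebraMap k⟦X⟧ Ω T) :
    algebraMap k⟦X⟧ Ω y ∈ rootSpace n a (algebraMap K Ω t) ↔ y ∈ rootSpace n a T := by
  rw [ht]
  exact map_mem_rootSpace (φ := IsScalarTower.toAlgHom F k⟦X⟧ Ω)
    (FaithfulSMul.algebraMap_injective k⟦X⟧ Ω)

lemma ne_zero_of_algebraMap_eq_X_pow {N : ℕ}
    (ht : algebraMap K Ω t = algebraMap k⟦X⟧ Ω (PowerSeries.X ^ N)) : t ≠ 0 := by
  rintro rfl
  rw [map_zero, eq_comm, map_eq_zero_iff _ (FaithfulSMul.algebraMap_injective k⟦X⟧ Ω)] at ht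
  exact pow_ne_zero _ PowerSeries.X_ne_zero ht

lemma exists_algebraMap_eq_of_mem_smallRoots [IsSplittingField K L (pencil n a t)]
    (ht : algebraMap K Ω t = algebraMap k⟦X⟧ Ω (PowerSeries.X ^ m)) {w : k⟦X⟧}
    (hw : w ∈ smallRoots k a d n) :
    ∃ v : rootSpace n a (algebraMap K L t), algebraMap L Ω v = algebraMap k⟦X⟧ Ω w :=
  exists_rootSpace_algebraMap_eq L (ne_zero_of_algebraMap_eq_X_pow ht)
    ((algebraMap_powerSeries_mem_rootSpace ht).2 (mem_smallRoots.1 hw).1)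

lemma smallRootSpace_ne_bot [IsSplittingField K L (pencil n a t)] [IsAlgClosed k]
    (h : IsLowestIndex a d n)
    (ht : algebraMap K Ω t = algebraMap k⟦X⟧ Ω (PowerSeries.X ^ m)) :
    smallRootSpace k Ω a d n t L ≠ ⊥ := by
  have := finite_smallRoots (k := k) h
  have : Nontrivial (smallRoots k a d n) :=
    Finite.one_lt_card_iff_nontrivial.1 (by rw [card_smallRoots h]; exact one_lt_card_pow h)
  obtain ⟨w, hw0⟩ := exists_ne (0 : smallRoots k a d n)
  obtain ⟨v, hv⟩ := exists_algebraMap_eq_of_mem_smallRoots L ht w.2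
  intro hbot
  have hv0 : v ∈ smallRootSpace k Ω a d n t L := (mem_smallRootSpace L).2 ⟨w, w.2, hv.symm⟩
  rw [hbot, Submodule.mem_bot] at hv0
  rw [hv0, Submodule.coe_zero, map_zero, eq_comm,
    map_eq_zero_iff _ (FaithfulSMul.algebraMap_injective k⟦X⟧ Ω)] at hv
  exact hw0 (Subtype.ext hv)

omit [IsScalarTower K L Ω] in
lemma smallRootSpace_ne_top [IsSplittingField K L (pencil n a t)] [IsAlgClosed k]
    (h : IsLowestIndex a d n)
    (ht : algebraMap K Ω t = algebraMap k⟦X⟧ Ω (PowerSeries.X ^ m)) :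
    smallRootSpace k Ω a d n t L ≠ ⊤ := by
  intro htop
  have := finite_smallRoots (k := k) h
  have hex (v : rootSpace n a (algebraMap K L t)) :
      ∃ w : smallRoots k a d n, algebraMap k⟦X⟧ Ω w = algebraMap L Ω v := by
    obtain ⟨w, hw, hwv⟩ := (mem_smallRootSpace L (Ω := Ω)).1 (htop ▸ Submodule.mem_top : v ∈ _)
    exact ⟨⟨w, hw⟩, hwv⟩
  choose w hw using hex
  have hinj : Function.Injective w := fun v v' hvv' =>
    Subtype.ext ((algebraMap L Ω).injective (by rw [← hw, ← hw, hvv']))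
  have hcard := Nat.card_le_card_of_injective w hinj
  rw [card_smallRoots h, card_rootSpace L (h.pos.trans h.lt).ne' h.apply_top
    (ne_zero_of_algebraMap_eq_X_pow ht)] at hcard
  exact hcard.not_gt (Nat.pow_lt_pow_right Fintype.one_lt_card h.lt)

variable (M : Type*) [Field M] [Algebra k⟦X⟧ M] [IsFractionRing k⟦X⟧ M] [Algebra M Ω]
  [IsScalarTower k⟦X⟧ M Ω] [IsAlgClosure M Ω] [IsScalarTower F K Ω]

omit [FaithfulSMul k⟦X⟧ Ω] in
include M in
lemma exists_rescalingRep_eq [Normal K L] (h : IsLowestIndex a d n)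
    (hgen : IntermediateField.adjoin F {t} = ⊤)
    (ht : algebraMap K Ω t = algebraMap k⟦X⟧ Ω (PowerSeries.X ^ m))
    {v v' : rootSpace n a (algebraMap K L t)} (hv : v ∈ smallRootSpace k Ω a d n t L) (hv0 : v ≠ 0)
    (hv' : v' ∈ smallRootSpace k Ω a d n t L) (hv'0 : v' ≠ 0) :
    ∃ p, rescalingRep k Ω a n t L p v = v' := by
  obtain ⟨w, hw, hwv⟩ := (mem_smallRootSpace L).1 hv
  obtain ⟨w', hw', hwv'⟩ := (mem_smallRootSpace L).1 hv'
  have hne : ∀ {w v}, algebraMap k⟦X⟧ Ω w = algebraMap L Ω v → v ≠ 0 → w ≠ 0 := by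
    rintro _ v hv hv0 rfl
    rw [map_zero, eq_comm, map_eq_zero] at hv
    exact hv0 hv
  obtain ⟨ζ, hζ, hζw⟩ := exists_rescaleEquiv_eq h hw (hne hwv (by simpa using hv0)) hw'
    (hne hwv' (by simpa using hv'0))
  obtain ⟨τ, hτ⟩ := exists_algEquiv_rescaleEquiv M hgen ht hζ
  refine ⟨⟨(τ, ζ), hτ⟩, Subtype.ext ((algebraMap L Ω).injective ?_)⟩
  rw [algebraMap_rescalingRep, ← hwv, ← hwv', hτ, hζw]

include M in
lemma exists_rescalingRep_eq_add [Normal K L] [IsAlgClosed k] (h : IsLowestIndex a d n)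
    (hgen : IntermediateField.adjoin F {t} = ⊤)
    (ht : algebraMap K Ω t = algebraMap k⟦X⟧ Ω (PowerSeries.X ^ m))
    {x v : rootSpace n a (algebraMap K L t)} (hx : x ∉ smallRootSpace k Ω a d n t L)
    (hv : v ∈ smallRootSpace k Ω a d n t L) :
    ∃ p : rescalingGroup K k Ω, p.1.2 = 1 ∧ rescalingRep k Ω a n t L p x = x + v := by
  have := finite_smallRoots (k := k) h
  obtain ⟨w, hw, hwv⟩ := (mem_smallRootSpace L).1 hv
  obtain ⟨τ, hτ⟩ := exists_algEquiv_apply_eq_add M h (aeval_algebraMap_eq_zero L ht x)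
    (fun w hw hwx => hx ((mem_smallRootSpace L).2 ⟨w, hw, hwx⟩)) hw
  have hτM (y : k⟦X⟧) : τ (algebraMap k⟦X⟧ Ω y) = algebraMap k⟦X⟧ Ω y := by
    rw [IsScalarTower.algebraMap_apply k⟦X⟧ M Ω, AlgEquiv.commutes]
  obtain ⟨τ', hτ'⟩ := exists_algEquiv_coe_eq hgen (AlgEquiv.ofRingEquiv (f := τ.toRingEquiv)
    fun c => by rw [IsScalarTower.algebraMap_apply F k⟦X⟧ Ω]; exact hτM _) (by rw [ht]; exact hτM _)
  have hτ'τ (y : Ω) : τ' y = τ y := congrFun hτ' y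
  refine ⟨⟨(τ', 1), fun y => ?_⟩, rfl, Subtype.ext ((algebraMap L Ω).injective ?_)⟩
  · simpa using (hτ'τ _).trans (hτM y)
  · rw [algebraMap_rescalingRep, Submodule.coe_add, map_add, ← hwv]
    exact (hτ'τ _).trans hτ

include M in
theorem isInertial_smallRootSpace [Normal K L] [IsAlgClosed k] (h : IsLowestIndex a d n)
    (hgen : IntermediateField.adjoin F {t} = ⊤)
    (ht : algebraMap K Ω t = algebraMap k⟦X⟧ Ω (PowerSeries.X ^ m)) :
    IsInertial (smallRootSpace k Ω a d n t L) (rescalingRep k Ω a n t L)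
      ((MonoidHom.snd _ _).comp (rescalingGroup K k Ω).subtype) where
  apply_sub_mem p v := by
    have := finite_smallRoots (k := k) h
    have hroot := aeval_algebraMap_eq_zero (k := k) (Ω := Ω) (n := n) (a := a) L ht
    obtain ⟨w, hw, hwv⟩ := exists_mem_smallRoots_eq_sub h
      (snd_pow_eq_one_of_mem_rescalingGroup ht p.2) (τ := (p.1.1 : Ω →+* Ω)) p.2 (hroot v)
      (by rw [RingHom.coe_coe, ← algebraMap_rescalingRep]; exact hroot _)
    refine (mem_smallRootSpace L).2 ⟨w, hw, ?_⟩
    rw [hwv, Submodule.coe_sub, map_sub, algebraMap_rescalingRep]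
    rfl
  apply_eq_self := by
    intro p hp v hv
    obtain ⟨w, -, hwv⟩ := (mem_smallRootSpace L).1 hv
    have hp : p.1.2 = 1 := hp
    refine Subtype.ext ((algebraMap L Ω).injective ?_)
    rw [algebraMap_rescalingRep, ← hwv, p.2, hp, map_one, AlgEquiv.one_apply]
  eq_one_of_apply_eq {p v} hv hv0 hpv := by
    obtain ⟨w, hw, hwv⟩ := (mem_smallRootSpace L).1 hv
    have hfix : rescaleEquiv p.1.2 w = w := FaithfulSMul.algebraMap_injective k⟦X⟧ Ω <| by
      rw [← p.2, hwv, ← algebraMap_rescalingRep, hpv]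
    have hw0 : w ≠ 0 := by
      rintro rfl
      rw [map_zero, eq_comm, map_eq_zero, Submodule.coe_eq_zero] at hwv
      exact hv0 hwv
    have hcoeff := congrArg (PowerSeries.coeff 1) hfix
    rw [coeff_one_rescaleEquiv, mul_eq_right₀ (coeff_one_ne_zero h hw hw0)] at hcoeff
    exact Units.ext hcoeff
  exists_apply_eq := exists_rescalingRep_eq L M h hgen ht
  exists_apply_eq_add := exists_rescalingRep_eq_add L M h hgen ht

end InertiaAtZero

/-! ### The local picture at `t = ∞` -/

lemma exists_apply_eq_of_pow_card_eq {E B : Type*} [Field E] [Fintype E] [CommRing B] [IsDomain B]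
    (φ : E →+* B) {y : B} (hy : y ^ Fintype.card E = y) : ∃ c, φ c = y := by
  have hsplits := (FiniteField.isSplittingField_sub E E).splits
  rw [Algebra.algebraMap_self, Polynomial.map_id] at hsplits
  exact hsplits.mem_range_of_isRoot (FiniteField.X_pow_card_sub_X_ne_zero E Fintype.one_lt_card)
    (by simp [hy])

section Infinity

variable {F : Type*} [Field F] [Fintype F] {k Ω : Type*} [Field k] [Algebra F k] [Field Ω]
  [Algebra F Ω] [Algebra k⟦X⟧ Ω] [IsScalarTower F k⟦X⟧ Ω] {a : ℕ → F} {n : ℕ}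

local notation "q" => Fintype.card F

variable (k a n) in
/-- The polynomial `z ↦ X^(qⁿ) · P(z / X)`, where `P` is the pencil with parameter
`T = -X^(1 - qⁿ)`. -/
noncomputable def pencilAtInfinity : k⟦X⟧[X] :=
  linearized q n (Function.update
    (fun i => algebraMap F k⟦X⟧ (a i) * PowerSeries.X ^ (q ^ n - q ^ i)) 0 (-1))

lemma aeval_pencilAtInfinity {T : Ω}
    (hT : T * algebraMap k⟦X⟧ Ω PowerSeries.X ^ (q ^ n - 1) = -1) (x : Ω) :
    aeval (algebraMap k⟦X⟧ Ω PowerSeries.X * x) (pencilAtInfinity k a n) =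
      algebraMap k⟦X⟧ Ω PowerSeries.X ^ q ^ n * (pencil n a T).eval x := by
  set ξ := algebraMap k⟦X⟧ Ω PowerSeries.X with hξ
  rw [← eval_map_algebraMap, pencilAtInfinity, map_linearized, pencil, eval_linearized,
    eval_linearized, Finset.mul_sum]
  refine Finset.sum_congr rfl fun i hi => ?_
  rcases eq_or_ne i 0 with rfl | hi0
  · have hpow : ξ ^ q ^ n = ξ ^ (q ^ n - 1) * ξ := by
      rw [← pow_succ, Nat.sub_add_cancel (Nat.one_le_pow _ _ Fintype.card_pos)]
    rw [Function.comp_apply, Function.update_self, pencilCoeff_zero, map_neg, map_one, hpow,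
      pow_zero, pow_one, pow_one]
    linear_combination -(ξ * x) * hT
  · have hpow : ξ ^ q ^ n = ξ ^ (q ^ n - q ^ i) * ξ ^ q ^ i := by
      rw [← pow_add, Nat.sub_add_cancel
        (Nat.pow_le_pow_right Fintype.card_pos (Finset.mem_range_succ_iff.1 hi))]
    rw [Function.comp_apply, Function.update_of_ne hi0, pencilCoeff_of_ne_zero _ _ hi0, map_mul,
      ← IsScalarTower.algebraMap_apply, map_pow, ← hξ, hpow]
    ring

lemma map_constantCoeff_pencilAtInfinity (hn : n ≠ 0) (ha : a n = 1) :
    (pencilAtInfinity k a n).map PowerSeries.constantCoeff = X ^ q ^ n - X := by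
  rw [pencilAtInfinity, map_linearized, linearized, Finset.sum_range_succ,
    Finset.sum_eq_single_of_mem 0 (Finset.mem_range.2 (Nat.pos_of_ne_zero hn)) fun i hi hi0 => ?_]
  · simp [hn, ha, neg_add_eq_sub]
  · have := Nat.pow_lt_pow_right Fintype.one_lt_card (Finset.mem_range.1 hi) (a := q)
    have : q ^ n - q ^ i ≠ 0 := by omega
    simp [hi0, this]

lemma derivative_map_constantCoeff_pencilAtInfinity :
    derivative ((pencilAtInfinity k a n).map PowerSeries.constantCoeff) = -1 := by
  rw [pencilAtInfinity, map_linearized, derivative_linearized (card_cast_eq_zero F k)]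
  simp

lemma exists_algebraMap_eq_X_mul [IsAlgClosed k] [FaithfulSMul k⟦X⟧ Ω] (hn : n ≠ 0) (ha : a n = 1)
    {T : Ω} (hT : T * algebraMap k⟦X⟧ Ω PowerSeries.X ^ (q ^ n - 1) = -1) {x : Ω}
    (hx : x ∈ rootSpace n a T) :
    ∃ y, algebraMap k⟦X⟧ Ω y = algebraMap k⟦X⟧ Ω PowerSeries.X * x ∧
      (pencilAtInfinity k a n).eval y = 0 := by
  refine exists_algebraMap_eq_of_aeval_eq_zero
    (monic_linearized Fintype.one_lt_card (by simp [hn, ha])) ?_ ?_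
  · rw [separable_def, derivative_map_constantCoeff_pencilAtInfinity]
    exact isCoprime_one_right.neg_right
  · rw [aeval_pencilAtInfinity hT, mem_rootSpace.1 hx, mul_zero]

lemma constantCoeff_pow_eq_self (hn : n ≠ 0) (ha : a n = 1) {y : k⟦X⟧}
    (hy : (pencilAtInfinity k a n).eval y = 0) :
    PowerSeries.constantCoeff y ^ q ^ n = PowerSeries.constantCoeff y := by
  have := constantCoeff_eval (pencilAtInfinity k a n) y
  rw [hy, map_constantCoeff_pencilAtInfinity hn ha, map_zero] at this
  simpa [sub_eq_zero] using this.symm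

variable {K L E : Type*} [Field K] [Field L] [Field E] [Fintype E] [Algebra F L] [Algebra K L]
  [Algebra F E] [Algebra E k] [IsScalarTower F E k] [Algebra K Ω] [Algebra L Ω]
  [IsScalarTower K L Ω] [IsScalarTower F L Ω] [FaithfulSMul k⟦X⟧ Ω] [IsAlgClosed k] {t : K}

lemma exists_expansion (hn : n ≠ 0) (ha : a n = 1)
    (ht : algebraMap K Ω t * algebraMap k⟦X⟧ Ω PowerSeries.X ^ (q ^ n - 1) = -1) :
    ∃ z : rootSpace n a (algebraMap K L t) →ₗ[F] k⟦X⟧, ∀ v,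
      algebraMap k⟦X⟧ Ω (z v) = algebraMap k⟦X⟧ Ω PowerSeries.X * algebraMap L Ω v ∧
        (pencilAtInfinity k a n).eval (z v) = 0 := by
  have hroot (v : rootSpace n a (algebraMap K L t)) :=
    exists_algebraMap_eq_X_mul hn ha ht ((algebraMap_mem_rootSpace L).2 v.2)
  have hinj := FaithfulSMul.algebraMap_injective k⟦X⟧ Ω
  let f := LinearMap.mulLeft F (algebraMap k⟦X⟧ Ω PowerSeries.X) ∘ₗ
    (IsScalarTower.toAlgHom F L Ω).toLinearMap ∘ₗ (rootSpace n a (algebraMap K L t)).subtype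
  let i := (IsScalarTower.toAlgHom F k⟦X⟧ Ω).toLinearMap
  let z := f.codRestrictOfInjective i hinj fun v => (hroot v).imp fun _ hy => hy.1
  have hz (v) : algebraMap k⟦X⟧ Ω (z v) = algebraMap k⟦X⟧ Ω PowerSeries.X * algebraMap L Ω v :=
    f.codRestrictOfInjective_comp_apply i hinj _ v
  refine ⟨z, fun v => ⟨hz v, ?_⟩⟩
  obtain ⟨y, hy, hyroot⟩ := hroot v
  rwa [hinj ((hz v).trans hy.symm)]

lemma exists_residue [Algebra F K] [IsScalarTower F K L] [IsSplittingField K L (pencil n a t)]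
    (hE : Fintype.card E = q ^ n) (hn : n ≠ 0) (ha : a n = 1)
    (ht : algebraMap K Ω t * algebraMap k⟦X⟧ Ω PowerSeries.X ^ (q ^ n - 1) = -1) :
    ∃ e : rootSpace n a (algebraMap K L t) ≃ₗ[F] E,
      ∀ v : rootSpace n a (algebraMap K L t), ∃ y,
      algebraMap k⟦X⟧ Ω y = algebraMap k⟦X⟧ Ω PowerSeries.X * algebraMap L Ω v ∧
        algebraMap E k (e v) = PowerSeries.constantCoeff y := by
  have ht0 : t ≠ 0 := by
    rintro rfl
    simp at ht
  have hX0 : algebraMap k⟦X⟧ Ω PowerSeries.X ≠ 0 := by simp [PowerSeries.X_ne_zero]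
  obtain ⟨z, hz⟩ := exists_expansion (L := L) hn ha ht
  have hinj : Function.Injective fun v => PowerSeries.constantCoeff (z v) := fun v v' hvv' => by
    have hzz : z v' = z v := eq_of_eval_eq_zero_of_constantCoeff_eq hvv'
      (by rw [derivative_map_constantCoeff_pencilAtInfinity]; simp) (hz v).2 (hz v').2
    refine Subtype.ext ((algebraMap L Ω).injective (mul_left_cancel₀ hX0 ?_))
    rw [← (hz v).1, ← (hz v').1, hzz]
  let i := (IsScalarTower.toAlgHom F E k).toLinearMap
  let residue := (PowerSeries.coeff (R := k) 0).restrictScalars F ∘ₗ z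
  have hresidue (v) : residue v = PowerSeries.constantCoeff (z v) :=
    PowerSeries.coeff_zero_eq_constantCoeff_apply _
  have hi : Function.Injective i := (algebraMap E k).injective
  let e := residue.codRestrictOfInjective i hi fun v =>
    exists_apply_eq_of_pow_card_eq (algebraMap E k)
      (by rw [hresidue, hE, constantCoeff_pow_eq_self hn ha (hz v).2])
  have he (v) : algebraMap E k (e v) = PowerSeries.constantCoeff (z v) :=
    (residue.codRestrictOfInjective_comp_apply i hi _ v).trans (hresidue v)
  have hbij : Function.Bijective e := by
    refine Function.Injective.bijective_of_nat_card_le (fun v v' hvv' => hinj ?_) ?_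
    · simp only [← he, hvv']
    · rw [Nat.card_eq_fintype_card, hE, card_rootSpace L hn ha ht0]
  exact ⟨LinearEquiv.ofBijective e hbij, fun v => ⟨z v, (hz v).1, he v⟩⟩

variable (M : Type*) [Field M] [Algebra k⟦X⟧ M] [IsFractionRing k⟦X⟧ M] [Algebra M Ω]
  [IsScalarTower k⟦X⟧ M Ω] [IsAlgClosure M Ω]

include M in
omit [Algebra F E] [IsScalarTower F E k] [FaithfulSMul k⟦X⟧ Ω] [IsAlgClosed k] in
lemma exists_algEquiv_rescaleEquiv_of_infinity [Algebra F K] [IsScalarTower F K Ω]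
    (hgen : IntermediateField.adjoin F {t} = ⊤) (hE : Fintype.card E = q ^ n)
    (ht : algebraMap K Ω t * algebraMap k⟦X⟧ Ω PowerSeries.X ^ (q ^ n - 1) = -1) (c : Eˣ) :
    ∃ τ : Ω ≃ₐ[K] Ω, ∀ y, τ (algebraMap k⟦X⟧ Ω y) =
      algebraMap k⟦X⟧ Ω (rescaleEquiv (Units.map (algebraMap E k : E →* k) c)⁻¹ y) := by
  have hgen' : IntermediateField.adjoin F {-t⁻¹} = ⊤ := by
    rw [eq_top_iff, ← hgen, IntermediateField.adjoin_simple_le_iff]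
    have := inv_mem (neg_mem (IntermediateField.mem_adjoin_simple_self F (-t⁻¹)))
    rwa [neg_neg, inv_inv] at this
  refine exists_algEquiv_rescaleEquiv M hgen' (m := q ^ n - 1) ?_ ?_
  · rw [map_neg, map_inv₀, map_pow, neg_eq_iff_eq_neg]
    exact inv_eq_of_mul_eq_one_right (by linear_combination -ht)
  · have hc : c ^ (q ^ n - 1) = 1 := by
      classical rw [← hE, ← Fintype.card_units, pow_card_eq_one]
    rw [inv_pow, ← map_pow, hc, map_one, inv_one]

include M in
theorem exists_singer [Algebra F K] [IsScalarTower F K L] [IsScalarTower F K Ω]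
    [IsSplittingField K L (pencil n a t)] [Normal K L]
    (hgen : IntermediateField.adjoin F {t} = ⊤)
    (hE : Fintype.card E = q ^ n) (hn : n ≠ 0) (ha : a n = 1)
    (ht : algebraMap K Ω t * algebraMap k⟦X⟧ Ω PowerSeries.X ^ (q ^ n - 1) = -1) :
    ∃ e : rootSpace n a (algebraMap K L t) ≃ₗ[F] E, ∀ c : Eˣ, ∃ g : Gal(L/K),
      (∀ v, e (galRep L n a t g v) = c * e v) ∧ ∀ y : L, y ^ q ^ n = y → g y = y := by
  obtain ⟨e, he⟩ := exists_residue (L := L) hE hn ha ht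
  refine ⟨e, fun c => ?_⟩
  set ζ : kˣ := (Units.map (algebraMap E k) c)⁻¹ with hζ
  obtain ⟨τ, hτ⟩ := exists_algEquiv_rescaleEquiv_of_infinity M hgen hE ht c
  have hτL (y : L) : algebraMap L Ω (τ.restrictNormal L y) = τ (algebraMap L Ω y) :=
    AlgEquiv.restrictNormal_commutes ..
  refine ⟨τ.restrictNormal L, fun v => (algebraMap E k).injective ?_, fun y hy =>
    (algebraMap L Ω).injective ?_⟩
  · obtain ⟨z, hz, hzv⟩ := he v
    obtain ⟨z', hz', hzv'⟩ := he (galRep L n a t (τ.restrictNormal L) v)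
    have hzz' : rescaleEquiv ζ z = PowerSeries.C (ζ : k) * z' :=
      FaithfulSMul.algebraMap_injective k⟦X⟧ Ω <| by
        rw [← hτ, hz, map_mul, hτ, rescaleEquiv_X, map_mul, map_mul, hz', coe_galRep_apply, hτL,
          mul_assoc]
    have hcoeff := congrArg PowerSeries.constantCoeff hzz'
    rw [constantCoeff_rescaleEquiv, map_mul, PowerSeries.constantCoeff_C, ← hzv, ← hzv'] at hcoeff
    rw [map_mul, hcoeff]
    simp [hζ]
  · obtain ⟨b, hb⟩ := exists_apply_eq_of_pow_card_eq
      ((algebraMap k⟦X⟧ Ω).comp ((PowerSeries.C).comp (algebraMap E k)))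
      (y := algebraMap L Ω y) (by rw [hE, ← map_pow, hy])
    rw [hτL, ← hb, RingHom.comp_apply, RingHom.comp_apply, hτ, rescaleEquiv_C]

end Infinity

/-! ### The Galois group over the rational function field -/

section Embedding

variable {F k : Type*} [Field F] [Field k] [Algebra F k]

lemma transcendental_powerSeries_X : Transcendental F (PowerSeries.X : k⟦X⟧) := by
  refine transcendental_iff.2 fun p hp => ?_
  have haeval : aeval PowerSeries.X p = Polynomial.coeToPowerSeries.algHom k p :=
    AlgHom.congr_fun (Polynomial.algHom_ext (by simp)) p
  rw [haeval, coeToPowerSeries.algHom_apply, ← polynomial_map_coe, Polynomial.coe_eq_zero_iff] at hp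
  exact (Polynomial.map_eq_zero (algebraMap F k)).1 hp

variable {Ω : Type*} [Field Ω] [Algebra F Ω]

lemma transcendental_neg_inv {x : Ω} (hx : Transcendental F x) : Transcendental F (-x⁻¹) :=
  fun h => hx (by simpa using h.neg.inv)

lemma transcendental_algebraMap_X_pow [Algebra k⟦X⟧ Ω] [IsScalarTower F k⟦X⟧ Ω]
    [FaithfulSMul k⟦X⟧ Ω] {m : ℕ} (hm : 0 < m) :
    Transcendental F (algebraMap k⟦X⟧ Ω (PowerSeries.X ^ m)) :=
  (transcendental_algebraMap_iff (FaithfulSMul.algebraMap_injective k⟦X⟧ Ω)).2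
    (transcendental_powerSeries_X.pow hm)

lemma exists_algebra_algebraMap_ratFunc_X_eq (L : Type*) [Field L] [Algebra F L]
    [Algebra (RatFunc F) L] [IsScalarTower F (RatFunc F) L] [Algebra.IsAlgebraic (RatFunc F) L]
    [IsAlgClosed Ω] {T : Ω} (hT : Transcendental F T) :
    ∃ (_ : Algebra (RatFunc F) Ω) (_ : Algebra L Ω), IsScalarTower F (RatFunc F) Ω ∧
      IsScalarTower F L Ω ∧ IsScalarTower (RatFunc F) L Ω ∧
        algebraMap (RatFunc F) Ω RatFunc.X = T := by
  let φ : RatFunc F →ₐ[F] Ω := (IntermediateField.val _).comp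
    (RatFunc.algEquivOfTranscendental T hT).toAlgHom
  let : Algebra (RatFunc F) Ω := φ.toRingHom.toAlgebra
  have htower : IsScalarTower F (RatFunc F) Ω := .of_algebraMap_eq' φ.comp_algebraMap.symm
  let ψ : L →ₐ[RatFunc F] Ω := IsAlgClosed.lift
  let : Algebra L Ω := ψ.toRingHom.toAlgebra
  exact ⟨inferInstance, inferInstance, htower,
    .of_algebraMap_eq' (ψ.restrictScalars F).comp_algebraMap.symm,
    .of_algebraMap_eq' ψ.comp_algebraMap.symm, RatFunc.algEquivOfTranscendental_X T hT⟩

end Embedding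

lemma isGalois_of_isSplittingField_pencil {F K : Type*} (L : Type*) [Field F] [Fintype F] [Field K]
    [Field L] [Algebra F K] [Algebra K L] (n : ℕ) (a : ℕ → F) {t : K} (ht : t ≠ 0)
    [IsSplittingField K L (pencil n a t)] : IsGalois K L :=
  IsGalois.of_separable_splitting_field (separable_pencil n a ht.isUnit)

section RationalFunctionField

variable {F : Type*} [Field F] [Fintype F] {n : ℕ} {a : ℕ → F} (L : Type*) [Field L] [Algebra F L]
  [Algebra (RatFunc F) L] [IsScalarTower F (RatFunc F) L]
  [IsSplittingField (RatFunc F) L (pencil n a (RatFunc.X : RatFunc F))]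

local notation "q" => Fintype.card F

theorem exists_singer_ratFunc {E : Type*} [Field E] [Fintype E] [Algebra F E]
    (hE : Fintype.card E = q ^ n) (hn : n ≠ 0) (ha : a n = 1) :
    ∃ e : rootSpace n a (algebraMap (RatFunc F) L RatFunc.X) ≃ₗ[F] E, ∀ c : Eˣ,
      ∃ g : Gal(L/RatFunc F), (∀ v, e (galRep L n a RatFunc.X g v) = c * e v) ∧
        ∀ y : L, y ^ q ^ n = y → g y = y := by
  have := isGalois_of_isSplittingField_pencil L n a (RatFunc.X_ne_zero (K := F))
  let k := AlgebraicClosure E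
  let M := FractionRing k⟦X⟧
  let Ω := AlgebraicClosure M
  have : FaithfulSMul k⟦X⟧ Ω := .trans k⟦X⟧ M Ω
  set ξ : Ω := algebraMap k⟦X⟧ Ω (PowerSeries.X ^ (q ^ n - 1)) with hξ
  have htrans : Transcendental F ξ := transcendental_algebraMap_X_pow
    (Nat.sub_pos_of_lt (Nat.one_lt_pow hn Fintype.one_lt_card))
  have hξ0 : ξ ≠ 0 := fun h0 => htrans (h0 ▸ isAlgebraic_zero)
  obtain ⟨_, _, _, _, _, ht⟩ := exists_algebra_algebraMap_ratFunc_X_eq L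
    (transcendental_neg_inv htrans)
  refine exists_singer M RatFunc.adjoin_X hE hn ha (Ω := Ω) (k := k) ?_
  rw [ht, ← map_pow, ← hξ, neg_mul, inv_mul_cancel₀ hξ0]

universe u in
theorem exists_isInertial_ratFunc {F : Type u} [Field F] [Fintype F] {n d : ℕ} {a : ℕ → F}
    (L : Type*) [Field L] [Algebra F L] [Algebra (RatFunc F) L] [IsScalarTower F (RatFunc F) L]
    [IsSplittingField (RatFunc F) L (pencil n a (RatFunc.X : RatFunc F))]
    (h : IsLowestIndex a d n) :
    ∃ (I k : Type u) (_ : Group I) (_ : Field k) (ι : I →* Gal(L/RatFunc F)) (θ : I →* kˣ)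
      (W : Submodule F (rootSpace n a (algebraMap (RatFunc F) L RatFunc.X))),
      W ≠ ⊥ ∧ W ≠ ⊤ ∧ IsInertial W ((galRep L n a RatFunc.X).comp ι) θ := by
  have := isGalois_of_isSplittingField_pencil L n a (RatFunc.X_ne_zero (K := F))
  let k := AlgebraicClosure F
  let M := FractionRing k⟦X⟧
  let Ω := AlgebraicClosure M
  have : FaithfulSMul k⟦X⟧ Ω := .trans k⟦X⟧ M Ω
  have htrans : Transcendental F (algebraMap k⟦X⟧ Ω (PowerSeries.X ^ (Fintype.card F ^ d - 1))) :=
    transcendental_algebraMap_X_pow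
      (Nat.sub_pos_of_lt (Nat.one_lt_pow h.pos.ne' Fintype.one_lt_card))
  obtain ⟨_, _, _, _, _, ht⟩ := exists_algebra_algebraMap_ratFunc_X_eq L htrans
  exact ⟨rescalingGroup (RatFunc F) k Ω, k, inferInstance, inferInstance, _, _, _,
    smallRootSpace_ne_bot L h ht, smallRootSpace_ne_top L h ht,
    isInertial_smallRootSpace L M h RatFunc.adjoin_X ht⟩

theorem galRep_surjective {d : ℕ} (hn : n.Prime) (h : IsLowestIndex a d n) :
    Function.Surjective (galRep L n a (RatFunc.X : RatFunc F)) := by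
  have : NeZero n := ⟨hn.ne_zero⟩
  have : CharP F (ringChar F) := ringChar.charP F
  have : Fact (ringChar F).Prime := ⟨CharP.char_is_prime F (ringChar F)⟩
  let E := FiniteField.Extension F (ringChar F) n
  have : Finite E := Module.finite_of_finite F
  have : Fintype E := Fintype.ofFinite E
  have hE : Fintype.card E = q ^ n := by
    rw [← Nat.card_eq_fintype_card, ← Nat.card_eq_fintype_card, FiniteField.natCard_extension]
  obtain ⟨e, he⟩ := exists_singer_ratFunc L hE hn.ne_zero h.apply_top
  obtain ⟨I, k, _, _, ι, θ, W, hWbot, hWtop, hI⟩ := exists_isInertial_ratFunc L h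
  let ρ : Gal(L/RatFunc F) →* (E ≃ₗ[F] E) := (conjAut e).toMonoidHom.comp (galRep L n a RatFunc.X)
  have hSinger (c : Eˣ) : DistribMulAction.toLinearEquiv F E c ∈ ρ.range := by
    obtain ⟨g, hg, -⟩ := he c
    exact ⟨g, LinearEquiv.ext fun v => (hg (e.symm v)).trans (by simp [Units.smul_def])⟩
  have hrange : ρ.range = ⊤ := eq_top_of_isInertial hSinger
    (by rwa [FiniteField.finrank_extension]) (by simpa using hWbot) (by simpa using hWtop)
    (hI.map e) fun g => ⟨ι g, rfl⟩
  exact (Function.Surjective.of_comp_iff' (conjAut e).bijective _).1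
    (MonoidHom.range_eq_top.1 hrange)

theorem nonempty_gal_mulEquiv_generalLinearGroup {d : ℕ} (hn : n.Prime) (h : IsLowestIndex a d n) :
    Nonempty (Gal(L/RatFunc F) ≃* Matrix.GeneralLinearGroup (Fin n) F) := by
  have hinj := galRep_injective L (n := n) (a := a) (t := RatFunc.X (K := F)) RatFunc.X_ne_zero
  have hcard := card_rootSpace L (t := RatFunc.X (K := F)) hn.ne_zero h.apply_top RatFunc.X_ne_zero
  let V := rootSpace n a (algebraMap (RatFunc F) L RatFunc.X)
  have : Finite V := Nat.finite_of_card_ne_zero (hcard ▸ pow_ne_zero n Fintype.card_ne_zero)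
  have hfinrank : finrank F V = n := by
    rw [Module.natCard_eq_pow_finrank (K := F), Nat.card_eq_fintype_card] at hcard
    exact Nat.pow_right_injective Fintype.one_lt_card hcard
  exact ⟨(MulEquiv.ofBijective _ ⟨hinj, galRep_surjective L hn h⟩).trans <|
    (LinearMap.GeneralLinearGroup.generalLinearEquiv F V).symm.trans
      (Matrix.GeneralLinearGroup.toLin' (finBasisOfFinrankEq F V hfinrank)).symm⟩

end RationalFunctionField

/-! ### The case `L = X^(qⁿ)` -/

section SemilinearAction

variable {F K L E : Type*} [Field F] [Field K] [Field L] [Field E] [Algebra F K] [Algebra F L]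
  [Algebra F E] [Algebra K L] [Algebra E L] [IsScalarTower F K L] [IsScalarTower F E L]

variable (F K L E) in
/-- Restriction of `K`-automorphisms of `L` to the field of constants `E`. -/
noncomputable def restrictConstants [Normal F E] : Gal(L/K) →* Gal(E/F) :=
  (AlgEquiv.restrictNormalHom E).comp (AlgEquiv.restrictScalarsHom F)

lemma algebraMap_restrictConstants [Normal F E] (g : Gal(L/K)) (x : E) :
    algebraMap E L (restrictConstants F K L E g x) = g (algebraMap E L x) :=
  AlgEquiv.restrictNormal_commutes ..

lemma restrictConstants_surjective [FiniteDimensional F E] [IsGalois F E]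
    [FiniteDimensional K L] [IsGalois K L]
    (hconst : ∀ x : E, algebraMap E L x ∈ Set.range (algebraMap K L) →
      x ∈ Set.range (algebraMap F E)) :
    Function.Surjective (restrictConstants F K L E) := by
  suffices hfixed : IntermediateField.fixedField (restrictConstants F K L E).range = ⊥ by
    rw [← MonoidHom.range_eq_top, ← IntermediateField.fixingSubgroup_fixedField
      (restrictConstants F K L E).range, hfixed, IntermediateField.fixingSubgroup_bot]
  refine eq_bot_iff.2 fun x hx => IntermediateField.mem_bot.2 (hconst x ?_)
  refine (IsGalois.mem_range_algebraMap_iff_fixed _).2 fun g => ?_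
  rw [← algebraMap_restrictConstants (F := F),
    (IntermediateField.mem_fixedField_iff _ _).1 hx _ ⟨g, rfl⟩]

lemma restrictConstants_ratFunc_surjective [Algebra (RatFunc F) L]
    [IsScalarTower F (RatFunc F) L] [FiniteDimensional F E] [IsGalois F E]
    [FiniteDimensional (RatFunc F) L] [IsGalois (RatFunc F) L] :
    Function.Surjective (restrictConstants F (RatFunc F) L E) := by
  refine restrictConstants_surjective fun x ⟨z, hz⟩ => ?_
  have hx : IsAlgebraic F (algebraMap E L x) := (Algebra.IsAlgebraic.isAlgebraic x).algebraMap
  have hz_alg : IsAlgebraic F z :=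
    (isAlgebraic_algebraMap_iff (algebraMap (RatFunc F) L).injective).1 (hz ▸ hx)
  obtain ⟨c, rfl⟩ := not_imp_comm.1 (RatFunc.transcendental_of_ne_C z) (not_not_intro hz_alg)
  refine ⟨c, (algebraMap E L).injective ?_⟩
  rw [← hz, ← IsScalarTower.algebraMap_apply, ← RatFunc.algebraMap_eq_C,
    ← IsScalarTower.algebraMap_apply]

lemma exists_gal_hom_semidirectProduct [Normal F E] {y : L} (hy0 : y ≠ 0)
    (hy : ∀ g : Gal(L/K), ∃ u : Eˣ, g y = algebraMap E L u * y) :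
    ∃ Φ : Gal(L/K) →* Eˣ ⋊[galOnUnits F E] Gal(E/F), ∀ g,
      g y = algebraMap E L (Φ g).left * y ∧ (Φ g).right = restrictConstants F K L E g := by
  choose u hu using hy
  have hu_mul (g h : Gal(L/K)) :
      u (g * h) = u g * galOnUnits F E (restrictConstants F K L E g) (u h) := by
    refine Units.ext ((algebraMap E L).injective (mul_right_cancel₀ hy0 ?_))
    calc algebraMap E L (u (g * h)) * y = g (h y) := (hu (g * h)).symm
      _ = algebraMap E L (restrictConstants F K L E g (u h)) * (algebraMap E L (u g) * y) := by
        rw [hu h, map_mul, hu g, algebraMap_restrictConstants]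
      _ = algebraMap E L (u g * restrictConstants F K L E g (u h)) * y := by
        rw [map_mul]
        ring
  exact ⟨MonoidHom.mk' (fun g => ⟨u g, restrictConstants F K L E g⟩) fun g h =>
    SemidirectProduct.ext (hu_mul g h) (map_mul _ g h), fun g => ⟨hu g, rfl⟩⟩

theorem nonempty_gal_mulEquiv_of_exists_gal [Normal F E] {y : L} (hy0 : y ≠ 0)
    (hy : ∀ g : Gal(L/K), ∃ u : Eˣ, g y = algebraMap E L u * y)
    (hinj : ∀ g h : Gal(L/K), g y = h y →
      restrictConstants F K L E g = restrictConstants F K L E h → g = h)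
    (hrestrict : Function.Surjective (restrictConstants F K L E))
    (hkummer : ∀ u : Eˣ, ∃ g : Gal(L/K), g y = algebraMap E L u * y ∧
      restrictConstants F K L E g = 1) :
    Nonempty (Gal(L/K) ≃* Eˣ ⋊[galOnUnits F E] Gal(E/F)) := by
  obtain ⟨Φ, hΦ⟩ := exists_gal_hom_semidirectProduct (F := F) hy0 hy
  refine ⟨.ofBijective Φ ⟨fun g h hgh => hinj g h ?_ ?_, fun p => ?_⟩⟩
  · rw [(hΦ g).1, (hΦ h).1, hgh]
  · rw [← (hΦ g).2, ← (hΦ h).2, hgh]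
  · obtain ⟨g, hg⟩ := hrestrict p.right
    obtain ⟨h, hhy, hh⟩ := hkummer (p.left * (Φ g).left⁻¹)
    have hΦh : (Φ h).left = p.left * (Φ g).left⁻¹ :=
      Units.ext ((algebraMap E L).injective (mul_right_cancel₀ hy0 ((hΦ h).1.symm.trans hhy)))
    refine ⟨h * g, SemidirectProduct.ext ?_ ?_⟩
    · rw [map_mul, SemidirectProduct.mul_left, (hΦ h).2, hh, map_one, hΦh, MulAut.one_apply,
        inv_mul_cancel_right]
    · rw [(hΦ _).2, map_mul, hh, hg, one_mul]

end SemilinearAction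

section Monomial

variable {F : Type*} [Field F] [Fintype F] {n : ℕ} {a : ℕ → F}

local notation "q" => Fintype.card F

lemma pencil_eq_X_pow_add {A : Type*} [CommRing A] [Algebra F A] (hn : n ≠ 0) (ha : a n = 1)
    (hzero : ∀ i, 0 < i → i < n → a i = 0) (T : A) : pencil n a T = X ^ q ^ n + C T * X := by
  rw [pencil, linearized, Finset.sum_range_succ, Finset.sum_eq_single_of_mem 0
    (Finset.mem_range.2 (Nat.pos_of_ne_zero hn)) fun i hi hi0 => ?_, pencilCoeff_eq_one hn ha]
  · simp [add_comm]
  · rw [pencilCoeff_of_ne_zero a T hi0,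
      hzero i (Nat.pos_of_ne_zero hi0) (Finset.mem_range.1 hi), map_zero, C_0, zero_mul]

lemma mem_rootSpace_iff_pow {A : Type*} [CommRing A] [Algebra F A] (hn : n ≠ 0) (ha : a n = 1)
    (hzero : ∀ i, 0 < i → i < n → a i = 0) {T x : A} :
    x ∈ rootSpace n a T ↔ x ^ q ^ n = -T * x := by
  simp [mem_rootSpace, pencil_eq_X_pow_add hn ha hzero, add_eq_zero_iff_eq_neg]

variable {L : Type*} [Field L] [Algebra F L] {T y : L}

lemma mul_mem_rootSpace_iff (hn : n ≠ 0) (ha : a n = 1)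
    (hzero : ∀ i, 0 < i → i < n → a i = 0) (hT : T ≠ 0) (hy : y ∈ rootSpace n a T) (hy0 : y ≠ 0)
    {r : L} : r * y ∈ rootSpace n a T ↔ r ^ q ^ n = r := by
  rw [mem_rootSpace_iff_pow hn ha hzero] at hy ⊢
  rw [mul_pow, hy, mul_left_comm, mul_right_inj' (neg_ne_zero.2 hT), mul_left_inj' hy0]

lemma splits_X_pow_sub_X (hn : n ≠ 0) (ha : a n = 1)
    (hzero : ∀ i, 0 < i → i < n → a i = 0) (hT : T ≠ 0) (hy : y ∈ rootSpace n a T) (hy0 : y ≠ 0)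
    (hsplits : (pencil n a T).Splits) : (X ^ q ^ n - X : L[X]).Splits := by
  rw [mem_rootSpace_iff_pow hn ha hzero] at hy
  have hcomp : (pencil n a T).comp (C y * X) = C (-T * y) * (X ^ q ^ n - X) := by
    rw [pencil_eq_X_pow_add hn ha hzero, add_comp, X_pow_comp, C_mul_comp, X_comp, mul_pow, ← C_pow,
      hy, ← mul_assoc, ← C_mul, mul_sub, neg_mul, C_neg]
    ring
  have heq : X ^ q ^ n - X = C (-T * y)⁻¹ * (pencil n a T).comp (C y * X) := by
    rw [hcomp, ← mul_assoc, ← C_mul, inv_mul_cancel₀ (mul_ne_zero (neg_ne_zero.2 hT) hy0), C_1,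
      one_mul]
  have hdeg : (C y * X).natDegree ≤ 1 := (natDegree_C_mul_le y X).trans natDegree_X_le
  exact heq ▸ (hsplits.comp_of_natDegree_le_one hdeg).C_mul _

lemma exists_algebraMap_mul_eq {E : Type*} [Field E] [Fintype E] [Algebra E L]
    (hE : Fintype.card E = q ^ n) (hn : n ≠ 0) (ha : a n = 1)
    (hzero : ∀ i, 0 < i → i < n → a i = 0) (hT : T ≠ 0) (hy : y ∈ rootSpace n a T) (hy0 : y ≠ 0)
    {v : L} (hv : v ∈ rootSpace n a T) : ∃ c : E, algebraMap E L c * y = v := by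
  have hdiv : v / y * y = v := div_mul_cancel₀ v hy0
  obtain ⟨c, hc⟩ := exists_apply_eq_of_pow_card_eq (algebraMap E L) (y := v / y) <| by
    rwa [hE, ← mul_mem_rootSpace_iff hn ha hzero hT hy hy0, hdiv]
  exact ⟨c, by rw [hc, hdiv]⟩

end Monomial

section MonomialRatFunc

variable {F : Type*} [Field F] [Fintype F] {n : ℕ} {a : ℕ → F} (L : Type*) [Field L] [Algebra F L]
  [Algebra (RatFunc F) L] [IsScalarTower F (RatFunc F) L]
  [IsSplittingField (RatFunc F) L (pencil n a (RatFunc.X : RatFunc F))]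

local notation "q" => Fintype.card F

local notation "t" => algebraMap (RatFunc F) L RatFunc.X

lemma exists_algebra_isScalarTower {E : Type*} [Field E] [Fintype E] [Algebra F E]
    (hE : Fintype.card E = q ^ n) (hn : n ≠ 0) (ha : a n = 1)
    (hzero : ∀ i, 0 < i → i < n → a i = 0) {y : L} (hy : y ∈ rootSpace n a t) (hy0 : y ≠ 0) :
    ∃ _ : Algebra E L, IsScalarTower F E L := by
  have := FiniteField.isSplittingField_sub E F
  have hsplits : (pencil n a t).Splits := by
    rw [← map_algebraMap_pencil]
    exact IsSplittingField.splits L _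
  let φ : E →ₐ[F] L := IsSplittingField.lift E (X ^ Fintype.card E - X) <| by
    simpa [hE] using splits_X_pow_sub_X hn ha hzero (by simp [RatFunc.X_ne_zero]) hy hy0 hsplits
  let : Algebra E L := φ.toRingHom.toAlgebra
  exact ⟨inferInstance, .of_algebraMap_eq' φ.comp_algebraMap.symm⟩

lemma exists_rootSpace_ne_zero (hn : n ≠ 0) (ha : a n = 1) :
    ∃ y : rootSpace n a t, (y : L) ≠ 0 := by
  have hcard := card_rootSpace L hn ha (RatFunc.X_ne_zero (K := F))
  have : Finite (rootSpace n a t) :=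
    Nat.finite_of_card_ne_zero (hcard ▸ pow_ne_zero n Fintype.card_ne_zero)
  have : Nontrivial (rootSpace n a t) :=
    Finite.one_lt_card_iff_nontrivial.1 (hcard ▸ Nat.one_lt_pow hn Fintype.one_lt_card)
  simpa using exists_ne (0 : rootSpace n a t)

theorem exists_gal_apply_eq {E : Type*} [Field E] [Fintype E] [Algebra F E]
    (hE : Fintype.card E = q ^ n) (hn : n ≠ 0) (ha : a n = 1) {v w : rootSpace n a t}
    (hv : v ≠ 0) (hw : w ≠ 0) :
    ∃ g : Gal(L/RatFunc F), g v = w ∧ ∀ y : L, y ^ q ^ n = y → g y = y := by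
  obtain ⟨e, he⟩ := exists_singer_ratFunc L hE hn ha
  have he0 {x} (hx : x ≠ 0) : e x ≠ 0 := (map_ne_zero_iff e e.injective).2 hx
  obtain ⟨g, hg, hgE⟩ := he (.mk0 (e w / e v) (div_ne_zero (he0 hw) (he0 hv)))
  have hgv : galRep L n a RatFunc.X g v = w := e.injective <| by
    rw [hg, Units.val_mk0, div_mul_cancel₀ _ (he0 hv)]
  exact ⟨g, congrArg Subtype.val hgv, hgE⟩

theorem nonempty_gal_mulEquiv_semidirectProduct {E : Type*} [Field E] [Fintype E] [Algebra F E]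
    (hE : Fintype.card E = q ^ n) (hn : n ≠ 0) (ha : a n = 1)
    (hzero : ∀ i, 0 < i → i < n → a i = 0) :
    Nonempty (Gal(L/RatFunc F) ≃* Eˣ ⋊[galOnUnits F E] Gal(E/F)) := by
  have := isGalois_of_isSplittingField_pencil L n a (RatFunc.X_ne_zero (K := F))
  have := IsSplittingField.finiteDimensional L (pencil n a (RatFunc.X : RatFunc F))
  have : FiniteDimensional F E := Module.Finite.of_finite
  have ht : t ≠ 0 := by simp [RatFunc.X_ne_zero]
  obtain ⟨y, hy0⟩ := exists_rootSpace_ne_zero L hn ha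
  obtain ⟨_, _⟩ := exists_algebra_isScalarTower L hE hn ha hzero y.2 hy0
  have hpow (c : E) : algebraMap E L c ^ q ^ n = algebraMap E L c := by
    rw [← map_pow, ← hE, FiniteField.pow_card]
  have hconst {v : L} (hv : v ∈ rootSpace n a t) : ∃ c : E, algebraMap E L c * y = v :=
    exists_algebraMap_mul_eq hE hn ha hzero ht y.2 hy0 hv
  refine nonempty_gal_mulEquiv_of_exists_gal (y := (y : L)) hy0 (fun g => ?_)
    (fun g h hgy hgE => ?_) restrictConstants_ratFunc_surjective fun u => ?_
  · obtain ⟨c, hc⟩ := hconst (apply_mem_rootSpace g y.2)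
    have hc0 : algebraMap E L c ≠ 0 :=
      left_ne_zero_of_mul (hc ▸ (map_ne_zero_iff g g.injective).2 hy0)
    exact ⟨.mk0 c (ne_zero_of_map hc0), hc.symm⟩
  · refine galRep_injective L (RatFunc.X_ne_zero (K := F)) (n := n) (a := a) <|
      LinearEquiv.ext fun v => Subtype.ext ?_
    obtain ⟨c, hc⟩ := hconst v.2
    rw [coe_galRep_apply, coe_galRep_apply, ← hc, map_mul, map_mul, hgy,
      ← algebraMap_restrictConstants (F := F), ← algebraMap_restrictConstants (F := F), hgE]
  · let uy : rootSpace n a t :=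
      ⟨algebraMap E L u * y, (mul_mem_rootSpace_iff hn ha hzero ht y.2 hy0).2 (hpow u)⟩
    obtain ⟨g, hg, hgE⟩ := exists_gal_apply_eq L hE hn ha (v := y) (w := uy) (by simpa using hy0)
      (by simpa [uy] using hy0)
    refine ⟨g, hg, AlgEquiv.ext fun x => (algebraMap E L).injective ?_⟩
    rw [algebraMap_restrictConstants, hgE _ (hpow x), AlgEquiv.one_apply]

end MonomialRatFunc

section Coefficients

variable {n : ℕ}

lemma map_sum_add_eq_pencil {F A : Type*} [Field F] [Fintype F] [CommRing A] [Algebra F A]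
    (a : ℕ → F) (T : A) :
    (∑ i ∈ Finset.Icc 1 n, C (a i) * X ^ Fintype.card F ^ i).map (algebraMap F A) + C T * X =
      pencil n a T := by
  rw [pencil, linearized, Finset.sum_range_eq_add_Ico _ n.succ_pos, add_comm, Polynomial.map_sum]
  congr 1
  · simp [pencilCoeff]
  · refine Finset.sum_congr rfl fun i hi => ?_
    rw [pencilCoeff_of_ne_zero a T (Nat.one_le_iff_ne_zero.1 (Finset.mem_Ico.1 hi).1)]
    simp

variable {R : Type*} [Semiring R]

lemma coeff_sum_Icc (a : ℕ → R) {m : ℕ} (hm : 1 < m) {i : ℕ} (hi : i ∈ Finset.Icc 1 n) :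
    (∑ j ∈ Finset.Icc 1 n, C (a j) * X ^ m ^ j).coeff (m ^ i) = a i := by
  rw [finsetSum_coeff, Finset.sum_eq_single_of_mem i hi fun j _ hji => ?_]
  · simp
  · rw [coeff_C_mul, coeff_X_pow, if_neg fun h => hji (Nat.pow_right_injective hm h).symm, mul_zero]

lemma sum_Icc_eq_X_pow_iff {a : ℕ → R} {m : ℕ} (hm : 1 < m) (hn : n ≠ 0) (ha : a n = 1) :
    ∑ i ∈ Finset.Icc 1 n, C (a i) * X ^ m ^ i = X ^ m ^ n ↔ ∀ i, 0 < i → i < n → a i = 0 := by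
  refine ⟨fun h i hi0 hin => ?_, fun h => ?_⟩
  · rw [← coeff_sum_Icc a hm (Finset.mem_Icc.2 ⟨hi0, hin.le⟩), h, coeff_X_pow,
      if_neg fun hpow => hin.ne (Nat.pow_right_injective hm hpow)]
  · have hmem : n ∈ Finset.Icc 1 n := Finset.mem_Icc.2 ⟨Nat.pos_of_ne_zero hn, le_rfl⟩
    rw [Finset.sum_eq_single_of_mem n hmem fun i hi hin => ?_, ha, C_1, one_mul]
    obtain ⟨hi0, hile⟩ := Finset.mem_Icc.1 hi
    rw [h i hi0 (lt_of_le_of_ne hile hin), C_0, zero_mul]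

lemma exists_isLowestIndex {F : Type*} [Field F] {a : ℕ → F} (ha : a n = 1)
    (h : ¬∀ i, 0 < i → i < n → a i = 0) : ∃ d, IsLowestIndex a d n := by
  classical
  push Not at h
  obtain ⟨hd0, hdn, hda⟩ := Nat.find_spec h
  exact ⟨Nat.find h, hd0, hdn, ha, hda, fun i hi0 hid => by
    by_contra hai
    exact Nat.find_min h hid ⟨hi0, hid.trans hdn, hai⟩⟩

end Coefficients

end GaloisLinearized

open GaloisLinearized in
theorem galoisGroup_linearized_add_tX_char_two_general
    (q n : ℕ) (Fq : Type*) [Field Fq] [Fintype Fq] (hq : Fintype.card Fq = q) (hn : n.Prime)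
    (a : ℕ → Fq) (L : Polynomial Fq)
    (hL : L = ∑ i ∈ Finset.Icc 1 n, Polynomial.C (a i) * Polynomial.X ^ q ^ i)
    (hmonic : a n = 1)
    (E : Type*) [Field E] [Fintype E] [Algebra Fq E] (hE : Fintype.card E = q ^ n) :
    (L ≠ Polynomial.X ^ q ^ n →
      Nonempty
        ((L.map (algebraMap Fq (RatFunc Fq)) +
            Polynomial.C (RatFunc.X : RatFunc Fq) * Polynomial.X).Gal ≃*
          Matrix.GeneralLinearGroup (Fin n) Fq)) ∧
    (L = Polynomial.X ^ q ^ n →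
      Nonempty
        ((L.map (algebraMap Fq (RatFunc Fq)) +
            Polynomial.C (RatFunc.X : RatFunc Fq) * Polynomial.X).Gal ≃*
          (Eˣ ⋊[galOnUnits Fq E] (E ≃ₐ[Fq] E)))) := by
  subst hq hL
  rw [map_sum_add_eq_pencil, Ne, sum_Icc_eq_X_pow_iff Fintype.one_lt_card hn.ne_zero hmonic]
  refine ⟨fun h => ?_, fun hzero => ?_⟩
  · obtain ⟨d, hd⟩ := exists_isLowestIndex hmonic h
    exact nonempty_gal_mulEquiv_generalLinearGroup _ hn hd
  · exact nonempty_gal_mulEquiv_semidirectProduct _ hE hn.ne_zero hmonic hzero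

/-- Let `q` be a power of `2` and `n` an odd prime. Let
`L(x) = a₁x^q + a₂x^(q²) + ⋯ + a_{n−1}x^(q^{n−1}) + x^(qⁿ) ∈ F_q[x]` be a monic
`q`-linearized polynomial of `q`-degree `n`, and suppose `a₁ + ⋯ + a_{n−1} + 1 ≠ 0`.
Then the Galois group of `L(x) + t·x` over `F_q(t)` is isomorphic to `GL(n, q)`, unless
`L(x) = x^(qⁿ)`, in which case it is isomorphic to `ΓL(1, qⁿ)`. -/
theorem galoisGroup_linearized_add_tX_char_two
    (q n : ℕ) (Fq : Type) [Field Fq] [Fintype Fq] (hq : Fintype.card Fq = q)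
    (h2 : ∃ e : ℕ, 0 < e ∧ q = 2 ^ e)
    (hn : n.Prime) (hnodd : Odd n)
    (a : ℕ → Fq) (L : Polynomial Fq)
    (hL : L = ∑ i ∈ Finset.Icc 1 n, Polynomial.C (a i) * Polynomial.X ^ q ^ i)
    (hmonic : a n = 1)
    (hsum : (∑ i ∈ Finset.Icc 1 (n - 1), a i) + 1 ≠ 0)
    (E : Type) [Field E] [Fintype E] [Algebra Fq E] (hE : Fintype.card E = q ^ n) :
    (L ≠ Polynomial.X ^ q ^ n →
      Nonempty
        ((L.map (algebraMap Fq (RatFunc Fq)) +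
            Polynomial.C (RatFunc.X : RatFunc Fq) * Polynomial.X).Gal ≃*
          Matrix.GeneralLinearGroup (Fin n) Fq)) ∧
    (L = Polynomial.X ^ q ^ n →
      Nonempty
        ((L.map (algebraMap Fq (RatFunc Fq)) +
            Polynomial.C (RatFunc.X : RatFunc Fq) * Polynomial.X).Gal ≃*
          (Eˣ ⋊[galOnUnits Fq E] (E ≃ₐ[Fq] E)))) :=
  galoisGroup_linearized_add_tX_char_two_general q n Fq hq hn a L hL hmonic E hE
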